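/- Let ω be an irrational number of bounded type. For every κ > 0 there exist a 1-periodic C^∞ function v : ℝ → ℝ and a sequence (v_n) of 1-periodic C^∞ functions v_n : ℝ → ℝ such that: (i) L(S_v) ≥ κ; (ii) for every n, L(S_{v_n}) = 0, i.e. the sequence (1/m)∫₀¹ log‖S_{v_n}^m(x)‖ dx tends to 0 as m → ∞; and (iii) for every l ∈ ℕ, ‖v_n − v‖_{C^l} → 0 as n → ∞. -/

import Mathlib

open Real MeasureTheory Filter

/-- Operator norm of a 2×2 real matrix, acting on Euclidean space. -/
noncomputable def opNorm (A : Matrix (Fin 2) (Fin 2) ℝ) : ℝ :=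
  ‖(Matrix.toEuclideanCLM (𝕜 := ℝ) A : EuclideanSpace ℝ (Fin 2) →L[ℝ] EuclideanSpace ℝ (Fin 2))‖

/-- Iterates of the quasi-periodic cocycle: A^n(x) = A(x+(n-1)ω)⋯A(x+ω)A(x). -/
noncomputable def cocycle (ω : ℝ) (A : ℝ → Matrix (Fin 2) (Fin 2) ℝ) :
    ℕ → ℝ → Matrix (Fin 2) (Fin 2) ℝ
  | 0, _ => 1
  | n + 1, x => A (x + n * ω) * cocycle ω A n x

/-- Finite Lyapunov exponents L_n(A) = (1/n) ∫₀¹ log ‖A^n(x)‖ dx. -/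
noncomputable def LEn (ω : ℝ) (A : ℝ → Matrix (Fin 2) (Fin 2) ℝ) (n : ℕ) : ℝ :=
  (1 / n) * ∫ x in (0:ℝ)..1, Real.log (opNorm (cocycle ω A n x))

/-- The Schrödinger cocycle S_v(x) = [[v(x), -1],[1,0]]. -/
def SchrodingerCocycle (v : ℝ → ℝ) (x : ℝ) : Matrix (Fin 2) (Fin 2) ℝ := !![v x, -1; 1, 0]

/-- The denominators of the continued fraction convergents of ω. -/
noncomputable def cfDen (ω : ℝ) (k : ℕ) : ℝ := (GenContFract.of ω).dens k

/-!
If `f` is positive and `1`-periodic, the potential `(f(x + ω) + f(x - ω)) / f(x)` has the bounded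
positive solution `f` along every orbit. All solutions then grow at most linearly, so the Lyapunov
exponent vanishes. Starting from `f_0 = 1` we construct such ground states `f_k`, with potentials
`v_k`, and couplings `E_k` tending to `0`, so that the Lyapunov exponent of `v_k + E_k` stays
bounded below.

Put conductances `f_k(x) f_k(x + ω)` on the edges of the orbits, ground every site `x` with
conductance `E_k f_k(x)²`, and drive the grounds by a voltage `g₀` concentrated near `ℤ`. If `g` is
the resulting voltage, then `f_{k + 1} = f_k g` is the ground state of
`v_{k + 1} = v_k + E_k (1 - P_k)`, where `P_k = g₀ / g`. Hence `v_k + E_k = v_{k + 1} + E_k P_k` and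
`v_{k + 1} + E_{k + 1}` both arise from `v_{k + 1}` by adding a nonnegative function. By positivity
of Wronskians, passing from the former to the latter lowers the logarithm of a Dirichlet
determinant by at most the Birkhoff sum of `θ_k = log⁺ (E_k P_k / E_{k + 1})`. As `θ_k` is supported
near `ℤ`, its integral is at most `2 ^ -(k + 1)`, and the exponent of `v_k + E_k` never falls more
than `1` below `log E_0`, a lower bound for the exponent of the constant potential `2 + E_0`.

Take scales `s_{k + 1} = s_k ^ 16` and couplings `E_{k + 1} = exp (-s_k ^ 8)`. Since `ω` is badly
approximable, every orbit segment of polynomial length in `s_k` meets the support of the source,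
which keeps `P_k` holomorphic and polynomially bounded on a strip of polynomially small width. By
Cauchy's estimates `∑ E_k (1 - P_k)` converges in every `C^l`, so `v_k` and `v_k + E_k` have a
common smooth limit, which inherits the lower bound.
-/

/-! ### Operator norms and cocycles -/

section OpNorm

variable (A B : Matrix (Fin 2) (Fin 2) ℝ)

theorem opNorm_one : opNorm 1 = 1 := by
  rw [opNorm, map_one, norm_one]

theorem opNorm_mul_le : opNorm (A * B) ≤ opNorm A * opNorm B := by
  unfold opNorm
  rw [map_mul]
  exact norm_mul_le _ _

theorem continuous_opNorm : Continuous opNorm :=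
  (LinearMap.continuous_of_finiteDimensional
    (Matrix.toEuclideanCLM (n := Fin 2) (𝕜 := ℝ)).toAlgEquiv.toLinearMap).norm

theorem sq_add_sq_col_le_opNorm_sq (j : Fin 2) : A 0 j ^ 2 + A 1 j ^ 2 ≤ opNorm A ^ 2 := by
  have image_le := (Matrix.toEuclideanCLM (𝕜 := ℝ) A).le_opNorm (EuclideanSpace.single j (1 : ℝ))
  rw [PiLp.norm_single, norm_one, mul_one, EuclideanSpace.norm_eq] at image_le
  have sq_le := (Real.sqrt_le_left (norm_nonneg _)).mp image_le
  simpa [opNorm, Fin.sum_univ_two, Matrix.ofLp_toEuclideanCLM] using sq_le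

theorem abs_apply_le_opNorm (i j : Fin 2) : |A i j| ≤ opNorm A := by
  have col_le := sq_add_sq_col_le_opNorm_sq A j
  refine abs_le_of_sq_le_sq ?_ (norm_nonneg _)
  fin_cases i
  · exact (le_add_of_nonneg_right (sq_nonneg _)).trans col_le
  · exact (le_add_of_nonneg_left (sq_nonneg _)).trans col_le

theorem euclideanSpace_norm_le_abs_add_abs (y : EuclideanSpace ℝ (Fin 2)) :
    ‖y‖ ≤ |y 0| + |y 1| := by
  rw [EuclideanSpace.norm_eq, Fin.sum_univ_two, Real.norm_eq_abs, Real.norm_eq_abs]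
  refine Real.sqrt_le_iff.mpr ⟨by positivity, ?_⟩
  nlinarith [mul_nonneg (abs_nonneg (y 0)) (abs_nonneg (y 1))]

theorem opNorm_le_sum_abs : opNorm A ≤ |A 0 0| + |A 0 1| + |A 1 0| + |A 1 1| := by
  refine ContinuousLinearMap.opNorm_le_bound _ (by positivity) fun x => ?_
  have row_le (i : Fin 2) :
      |Matrix.toEuclideanCLM (𝕜 := ℝ) A x i| ≤ (|A i 0| + |A i 1|) * ‖x‖ := by
    rw [Matrix.ofLp_toEuclideanCLM, Matrix.mulVec, dotProduct, Fin.sum_univ_two]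
    calc |A i 0 * x 0 + A i 1 * x 1| ≤ |A i 0| * |x 0| + |A i 1| * |x 1| := by
          simpa only [abs_mul] using abs_add_le (A i 0 * x 0) (A i 1 * x 1)
      _ ≤ |A i 0| * ‖x‖ + |A i 1| * ‖x‖ := by
          gcongr <;> exact PiLp.norm_apply_le x _
      _ = (|A i 0| + |A i 1|) * ‖x‖ := by ring
  linarith [euclideanSpace_norm_le_abs_add_abs (Matrix.toEuclideanCLM (𝕜 := ℝ) A x),
    row_le 0, row_le 1]

variable {A}

theorem one_le_opNorm_of_det_eq_one (hA : A.det = 1) : 1 ≤ opNorm A := by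
  rw [Matrix.det_fin_two] at hA
  have col₀ := sq_add_sq_col_le_opNorm_sq A 0
  have col₁ := sq_add_sq_col_le_opNorm_sq A 1
  have hadamard : (A 0 0 * A 1 1 - A 0 1 * A 1 0) ^ 2 ≤
      (A 0 0 ^ 2 + A 1 0 ^ 2) * (A 0 1 ^ 2 + A 1 1 ^ 2) := by
    nlinarith [sq_nonneg (A 0 0 * A 0 1 + A 1 0 * A 1 1)]
  have one_le_pow_four : 1 ≤ opNorm A ^ 4 := by
    calc (1 : ℝ) ≤ (A 0 0 ^ 2 + A 1 0 ^ 2) * (A 0 1 ^ 2 + A 1 1 ^ 2) := by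
          simpa only [hA, one_pow] using hadamard
      _ ≤ opNorm A ^ 2 * opNorm A ^ 2 := by gcongr
      _ = opNorm A ^ 4 := by ring
  exact (one_le_pow_iff_of_nonneg (norm_nonneg _) four_ne_zero).mp one_le_pow_four

end OpNorm

section Cocycle

variable {ω : ℝ} {A : ℝ → Matrix (Fin 2) (Fin 2) ℝ}

theorem cocycle_add (ω : ℝ) (A : ℝ → Matrix (Fin 2) (Fin 2) ℝ) (m n : ℕ) (x : ℝ) :
    cocycle ω A (m + n) x = cocycle ω A m (x + n * ω) * cocycle ω A n x := by
  induction m with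
  | zero => simp [cocycle]
  | succ m ih =>
    rw [Nat.add_right_comm, cocycle, ih, cocycle, Matrix.mul_assoc]
    congr 2
    push_cast; ring

theorem det_cocycle (hdet : ∀ x, (A x).det = 1) (n : ℕ) (x : ℝ) : (cocycle ω A n x).det = 1 := by
  induction n with
  | zero => simp [cocycle]
  | succ n ih => rw [cocycle, Matrix.det_mul, ih, hdet, one_mul]

theorem continuous_cocycle (hA : Continuous A) (n : ℕ) : Continuous (cocycle ω A n) := by
  induction n with
  | zero => exact continuous_const
  | succ n ih => exact (hA.comp (by fun_prop : Continuous fun x : ℝ => x + n * ω)).mul ih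

theorem periodic_cocycle (hA : Function.Periodic A 1) (n : ℕ) :
    Function.Periodic (cocycle ω A n) 1 := by
  intro x
  induction n with
  | zero => rfl
  | succ n ih => rw [cocycle, cocycle, ih, add_right_comm, hA]

theorem opNorm_cocycle_le_pow {K : ℝ} (hK : ∀ x, opNorm (A x) ≤ K) (n : ℕ) (x : ℝ) :
    opNorm (cocycle ω A n x) ≤ K ^ n := by
  induction n with
  | zero => rw [cocycle, opNorm_one, pow_zero]
  | succ n ih =>
    rw [pow_succ']
    exact (opNorm_mul_le _ _).trans
      (mul_le_mul (hK _) ih (norm_nonneg _) ((norm_nonneg _).trans (hK 0)))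

theorem one_le_opNorm_cocycle (hdet : ∀ x, (A x).det = 1) (n : ℕ) (x : ℝ) :
    1 ≤ opNorm (cocycle ω A n x) :=
  one_le_opNorm_of_det_eq_one (det_cocycle hdet n x)

theorem log_opNorm_cocycle_nonneg (hdet : ∀ x, (A x).det = 1) (n : ℕ) (x : ℝ) :
    0 ≤ log (opNorm (cocycle ω A n x)) :=
  log_nonneg (one_le_opNorm_cocycle hdet n x)

theorem continuous_log_opNorm_cocycle (hdet : ∀ x, (A x).det = 1) (hA : Continuous A) (n : ℕ) :
    Continuous fun x => log (opNorm (cocycle ω A n x)) :=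
  (continuous_opNorm.comp (continuous_cocycle hA n)).log fun x =>
    (zero_lt_one.trans_le (one_le_opNorm_cocycle hdet n x)).ne'

end Cocycle

/-! ### Finite Lyapunov exponents -/

theorem intervalIntegral_zero_one_comp_add_right {g : ℝ → ℝ} (hg : Function.Periodic g 1) (a : ℝ) :
    ∫ x in (0 : ℝ)..1, g (x + a) = ∫ x in (0 : ℝ)..1, g x := by
  rw [intervalIntegral.integral_comp_add_right g a]
  simpa [add_comm] using hg.intervalIntegral_add_eq a 0

section Lyapunov

variable {ω : ℝ} {A : ℝ → Matrix (Fin 2) (Fin 2) ℝ}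

theorem LEn_eq_div (n : ℕ) :
    LEn ω A n = (∫ x in (0 : ℝ)..1, log (opNorm (cocycle ω A n x))) / n := by
  rw [LEn, one_div, div_eq_inv_mul]

theorem LEn_nonneg (hdet : ∀ x, (A x).det = 1) (n : ℕ) : 0 ≤ LEn ω A n :=
  mul_nonneg (by positivity)
    (intervalIntegral.integral_nonneg zero_le_one fun _ _ => log_opNorm_cocycle_nonneg hdet _ _)

theorem subadditive_integral_log_opNorm_cocycle (hA : Continuous A) (hper : Function.Periodic A 1)
    (hdet : ∀ x, (A x).det = 1) :
    Subadditive fun n => ∫ x in (0 : ℝ)..1, log (opNorm (cocycle ω A n x)) := by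
  intro m n
  have cont := fun k => continuous_log_opNorm_cocycle (ω := ω) hdet hA k
  have cont_shift : Continuous fun x => log (opNorm (cocycle ω A m (x + n * ω))) :=
    (cont m).comp (by fun_prop : Continuous fun x : ℝ => x + n * ω)
  have integral_shift : ∫ x in (0 : ℝ)..1, log (opNorm (cocycle ω A m (x + n * ω))) =
      ∫ x in (0 : ℝ)..1, log (opNorm (cocycle ω A m x)) :=
    intervalIntegral_zero_one_comp_add_right
      ((periodic_cocycle hper m).comp fun M => log (opNorm M)) _
  beta_reduce
  rw [← integral_shift, ← intervalIntegral.integral_add (cont_shift.intervalIntegrable _ _)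
    ((cont n).intervalIntegrable _ _)]
  refine intervalIntegral.integral_mono zero_le_one ((cont _).intervalIntegrable _ _)
    ((cont_shift.add (cont n)).intervalIntegrable _ _) fun x => ?_
  have norm_m := one_le_opNorm_cocycle (ω := ω) hdet m (x + n * ω)
  have norm_n := one_le_opNorm_cocycle (ω := ω) hdet n x
  have norm_mn := one_le_opNorm_cocycle (ω := ω) hdet (m + n) x
  calc log (opNorm (cocycle ω A (m + n) x))
      ≤ log (opNorm (cocycle ω A m (x + n * ω)) * opNorm (cocycle ω A n x)) := by
        refine log_le_log (by linarith) ?_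
        rw [cocycle_add]
        exact opNorm_mul_le _ _
    _ = log (opNorm (cocycle ω A m (x + n * ω))) + log (opNorm (cocycle ω A n x)) :=
        log_mul (by linarith) (by linarith)

theorem exists_tendsto_LEn (hA : Continuous A) (hper : Function.Periodic A 1)
    (hdet : ∀ x, (A x).det = 1) : ∃ L, Tendsto (LEn ω A) atTop (nhds L) := by
  have sub := subadditive_integral_log_opNorm_cocycle (ω := ω) hA hper hdet
  refine ⟨sub.lim, (sub.tendsto_lim ⟨0, ?_⟩).congr fun n => (LEn_eq_div n).symm⟩
  rintro _ ⟨n, rfl⟩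
  simpa only [LEn_eq_div] using LEn_nonneg hdet n

theorem tendsto_LEn_of_tendsto {A' : ℕ → ℝ → Matrix (Fin 2) (Fin 2) ℝ}
    (hcont : ∀ k, Continuous (A' k)) (hdet' : ∀ k x, (A' k x).det = 1)
    (hdet : ∀ x, (A x).det = 1) (hlim : ∀ x, Tendsto (fun k => A' k x) atTop (nhds (A x)))
    {K : ℝ} (hK : ∀ k x, opNorm (A' k x) ≤ K) (n : ℕ) :
    Tendsto (fun k => LEn ω (A' k) n) atTop (nhds (LEn ω A n)) := by
  have cocycle_lim (x : ℝ) :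
      Tendsto (fun k => cocycle ω (A' k) n x) atTop (nhds (cocycle ω A n x)) := by
    induction n with
    | zero => exact tendsto_const_nhds
    | succ n ih => exact (hlim _).mul ih
  refine (intervalIntegral.tendsto_integral_filter_of_dominated_convergence
    (fun _ => log (K ^ n)) ?_ ?_ (by simp) ?_).const_mul _
  · exact .of_forall fun k =>
      (continuous_log_opNorm_cocycle (hdet' k) (hcont k) n).aestronglyMeasurable
  · refine .of_forall fun k => .of_forall fun x _ => ?_
    rw [Real.norm_of_nonneg (log_opNorm_cocycle_nonneg (hdet' k) n x)]
    exact log_le_log (zero_lt_one.trans_le (one_le_opNorm_cocycle (hdet' k) n x))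
      (opNorm_cocycle_le_pow (hK k) n x)
  · refine .of_forall fun x _ => ((continuous_opNorm.tendsto _).comp (cocycle_lim x)).log ?_
    exact (zero_lt_one.trans_le (one_le_opNorm_cocycle hdet n x)).ne'

theorem tendsto_LEn_zero_of_opNorm_cocycle_le_linear (hA : Continuous A)
    (hdet : ∀ x, (A x).det = 1) {K : ℝ} (hK : 1 ≤ K)
    (hgrowth : ∀ (n : ℕ) x, opNorm (cocycle ω A n x) ≤ K * (n + 1)) :
    Tendsto (LEn ω A) atTop (nhds 0) := by
  have log_div_tendsto : Tendsto (fun n : ℕ => log n / n) atTop (nhds 0) :=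
    isLittleO_log_id_atTop.tendsto_div_nhds_zero.comp tendsto_natCast_atTop_atTop
  have bound_tendsto : Tendsto (fun n : ℕ => log (2 * K) / n + log n / n) atTop (nhds 0) := by
    simpa using (tendsto_const_div_atTop_nhds_zero_nat (log (2 * K))).add log_div_tendsto
  refine squeeze_zero' (.of_forall fun n => LEn_nonneg hdet n) ?_ bound_tendsto
  filter_upwards [eventually_ge_atTop 1] with n hn
  have one_le_n : (1 : ℝ) ≤ n := by exact_mod_cast hn
  have integrand_le (x : ℝ) : log (opNorm (cocycle ω A n x)) ≤ log (2 * K) + log n := by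
    rw [← log_mul (by positivity) (by positivity)]
    refine log_le_log (zero_lt_one.trans_le (one_le_opNorm_cocycle hdet n x)) ?_
    calc opNorm (cocycle ω A n x) ≤ K * (n + 1) := hgrowth n x
      _ ≤ 2 * K * n := by nlinarith
  have integral_le : ∫ x in (0 : ℝ)..1, log (opNorm (cocycle ω A n x)) ≤ log (2 * K) + log n := by
    simpa using intervalIntegral.integral_mono zero_le_one
      ((continuous_log_opNorm_cocycle hdet hA n).intervalIntegrable 0 1)
      (intervalIntegrable_const (μ := volume) (c := log (2 * K) + log n)) integrand_le
  rw [LEn_eq_div, ← add_div]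
  gcongr

end Lyapunov

section Schrodinger

variable {ω : ℝ} {v V V' f θ : ℝ → ℝ}

theorem det_schrodingerCocycle (v : ℝ → ℝ) (x : ℝ) : (SchrodingerCocycle v x).det = 1 := by
  simp [SchrodingerCocycle, Matrix.det_fin_two]

theorem continuous_schrodingerCocycle (hv : Continuous v) : Continuous (SchrodingerCocycle v) := by
  refine continuous_matrix fun i j => ?_
  fin_cases i <;> fin_cases j <;> simp [SchrodingerCocycle, hv, continuous_const]

theorem periodic_schrodingerCocycle (hv : Function.Periodic v 1) :
    Function.Periodic (SchrodingerCocycle v) 1 := fun x => by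
  simp only [SchrodingerCocycle, hv x]

theorem opNorm_schrodingerCocycle_le (v : ℝ → ℝ) (x : ℝ) :
    opNorm (SchrodingerCocycle v x) ≤ |v x| + 2 := by
  refine (opNorm_le_sum_abs _).trans_eq ?_
  simp [SchrodingerCocycle]
  ring

theorem tendsto_schrodingerCocycle {V : ℕ → ℝ → ℝ} {x : ℝ}
    (h : Tendsto (fun k => V k x) atTop (nhds (v x))) :
    Tendsto (fun k => SchrodingerCocycle (V k) x) atTop (nhds (SchrodingerCocycle v x)) := by
  refine tendsto_pi_nhds.mpr fun i => tendsto_pi_nhds.mpr fun j => ?_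
  fin_cases i <;> fin_cases j <;> simp [SchrodingerCocycle, h]

theorem cocycle_schrodingerCocycle_succ_zero (n : ℕ) (x : ℝ) (k : Fin 2) :
    cocycle ω (SchrodingerCocycle v) (n + 1) x 0 k =
      v (x + n * ω) * cocycle ω (SchrodingerCocycle v) n x 0 k -
        cocycle ω (SchrodingerCocycle v) n x 1 k := by
  rw [cocycle, Matrix.mul_apply]
  simp [SchrodingerCocycle, Fin.sum_univ_two, sub_eq_add_neg]

theorem cocycle_schrodingerCocycle_succ_one (n : ℕ) (x : ℝ) (k : Fin 2) :
    cocycle ω (SchrodingerCocycle v) (n + 1) x 1 k = cocycle ω (SchrodingerCocycle v) n x 0 k := by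
  rw [cocycle, Matrix.mul_apply]
  simp [SchrodingerCocycle, Fin.sum_univ_two]

theorem abs_cocycle_zero_apply_le_one (A : ℝ → Matrix (Fin 2) (Fin 2) ℝ) (x : ℝ) (i k : Fin 2) :
    |cocycle ω A 0 x i k| ≤ 1 := by
  simp only [cocycle, Matrix.one_apply]
  split_ifs <;> simp

/-! ### Positive solutions and Wronskians -/

/-- `f` is a positive solution of the difference equation
`f (x + ω) + f (x - ω) = v x * f x` along every orbit of the rotation by `ω`. -/
structure IsGroundState (ω : ℝ) (v f : ℝ → ℝ) : Prop where
  pos : ∀ x, 0 < f x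
  eq : ∀ x, v x * f x = f (x + ω) + f (x - ω)

/-- The potential of which a positive function `f` is a ground state. -/
noncomputable def groundPotential (ω : ℝ) (f : ℝ → ℝ) (x : ℝ) : ℝ :=
  (f (x + ω) + f (x - ω)) / f x

theorem isGroundState_groundPotential (ω : ℝ) {f : ℝ → ℝ} (hf : ∀ x, 0 < f x) :
    IsGroundState ω (groundPotential ω f) f where
  pos := hf
  eq x := div_mul_cancel₀ _ (hf x).ne'

theorem IsGroundState.le_pow_mul {ω Λ : ℝ} {v f : ℝ → ℝ} (hf : IsGroundState ω v f)
    (hv : ∀ x, v x ≤ Λ) (x : ℝ) (n : ℕ) : f (x + n * ω) ≤ Λ ^ n * f x := by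
  have one_step (y : ℝ) : f (y + ω) ≤ Λ * f y := by
    linarith [hf.eq y, hf.pos (y - ω), mul_le_mul_of_nonneg_right (hv y) (hf.pos y).le]
  have Λ_pos : 0 < Λ := pos_of_mul_pos_left ((hf.pos _).trans_le (one_step x)) (hf.pos x).le
  induction n with
  | zero => simp
  | succ n ih =>
    calc f (x + (n + 1 : ℕ) * ω) = f (x + n * ω + ω) := by push_cast; ring_nf
      _ ≤ Λ * f (x + n * ω) := one_step _
      _ ≤ Λ * (Λ ^ n * f x) := by gcongr
      _ = Λ ^ (n + 1) * f x := by ring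

/-- The discrete Wronskian, at time `n` along the orbit of `x`, of `f` and the solution for the
potential `V` given by the `k`-th column of the cocycle. -/
noncomputable def wronskian (ω : ℝ) (V f : ℝ → ℝ) (k : Fin 2) (n : ℕ) (x : ℝ) : ℝ :=
  cocycle ω (SchrodingerCocycle V) n x 0 k * f (x + (n - 1) * ω) -
    cocycle ω (SchrodingerCocycle V) n x 1 k * f (x + n * ω)

theorem wronskian_succ_eq (V f : ℝ → ℝ) (k : Fin 2) (n : ℕ) (x : ℝ) :
    wronskian ω V f k (n + 1) x =
      cocycle ω (SchrodingerCocycle V) (n + 1) x 0 k * f (x + n * ω) -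
        cocycle ω (SchrodingerCocycle V) n x 0 k * f (x + (n + 1) * ω) := by
  simp only [wronskian, cocycle_schrodingerCocycle_succ_one, Nat.cast_add, Nat.cast_one,
    add_sub_cancel_right]

theorem IsGroundState.wronskian_succ (hf : IsGroundState ω v f) (V : ℝ → ℝ) (k : Fin 2) (n : ℕ)
    (x : ℝ) :
    wronskian ω V f k (n + 1) x = wronskian ω V f k n x +
      (V (x + n * ω) - v (x + n * ω)) * cocycle ω (SchrodingerCocycle V) n x 0 k *
        f (x + n * ω) := by
  have eq := hf.eq (x + n * ω)
  rw [show x + n * ω + ω = x + (n + 1) * ω by ring,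
    show x + n * ω - ω = x + (n - 1) * ω by ring] at eq
  rw [wronskian_succ_eq, wronskian, cocycle_schrodingerCocycle_succ_zero]
  linear_combination cocycle ω (SchrodingerCocycle V) n x 0 k * eq

section BoundedGroundState

variable {a b : ℝ}

theorem IsGroundState.abs_wronskian_le (hf : IsGroundState ω v f) (hb : ∀ x, f x ≤ b)
    (k : Fin 2) (n : ℕ) (x : ℝ) : |wronskian ω v f k n x| ≤ b := by
  have abs_le (y : ℝ) : |f y| ≤ b := (abs_of_pos (hf.pos y)).trans_le (hb y)
  induction n with
  | zero =>
    rcases Fin.exists_fin_two.mp ⟨k, rfl⟩ with rfl | rfl <;>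
      simpa [wronskian, cocycle] using abs_le _
  | succ n ih => rwa [hf.wronskian_succ, sub_self, zero_mul, zero_mul, add_zero]

theorem IsGroundState.abs_cocycle_div_le (hf : IsGroundState ω v f) (ha : 0 < a)
    (hfa : ∀ x, a ≤ f x) (hfb : ∀ x, f x ≤ b) (k : Fin 2) (n : ℕ) (x : ℝ) :
    |cocycle ω (SchrodingerCocycle v) n x 0 k| / f (x + n * ω) ≤ 1 / a + n * (b / a ^ 2) := by
  induction n with
  | zero =>
    simpa using div_le_div₀ zero_le_one (abs_cocycle_zero_apply_le_one _ x 0 k) ha (hfa x)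
  | succ n ih =>
    have wronskian_le := hf.abs_wronskian_le hfb k (n + 1) x
    rw [wronskian_succ_eq] at wronskian_le
    push_cast
    set p := cocycle ω (SchrodingerCocycle v) n x 0 k
    set p' := cocycle ω (SchrodingerCocycle v) (n + 1) x 0 k
    set F := f (x + n * ω)
    set F' := f (x + (n + 1) * ω)
    have hF : 0 < F := hf.pos _
    have hF' : 0 < F' := hf.pos _
    have hb : 0 ≤ b := (abs_nonneg _).trans wronskian_le
    calc |p'| / F' = |(p' * F - p * F') / (F * F') + p / F| := by
          rw [← abs_of_pos hF', ← abs_div, abs_of_pos hF']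
          congr 1
          field_simp
          ring
      _ ≤ |p' * F - p * F'| / (F * F') + |p| / F := by
          refine (abs_add_le _ _).trans_eq ?_
          rw [abs_div, abs_div, abs_of_pos hF, abs_of_pos (mul_pos hF hF')]
      _ ≤ b / a ^ 2 + (1 / a + n * (b / a ^ 2)) := by
          refine add_le_add (div_le_div₀ hb wronskian_le (by positivity) ?_) ih
          rw [sq]
          exact mul_le_mul (hfa _) (hfa _) ha.le hF.le
      _ = 1 / a + (n + 1) * (b / a ^ 2) := by ring

theorem IsGroundState.abs_cocycle_le (hf : IsGroundState ω v f) (ha : 0 < a)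
    (hfa : ∀ x, a ≤ f x) (hfb : ∀ x, f x ≤ b) (i k : Fin 2) (n : ℕ) (x : ℝ) :
    |cocycle ω (SchrodingerCocycle v) n x i k| ≤ (b / a) ^ 2 * (n + 1) := by
  have hab : 1 ≤ b / a := (one_le_div ha).mpr ((hfa 0).trans (hfb 0))
  have row_zero (n : ℕ) :
      |cocycle ω (SchrodingerCocycle v) n x 0 k| ≤ (b / a) ^ 2 * (n + 1) := by
    have hb : 0 < b := ha.trans_le ((hfa 0).trans (hfb 0))
    calc |cocycle ω (SchrodingerCocycle v) n x 0 k|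
        ≤ (1 / a + n * (b / a ^ 2)) * f (x + n * ω) :=
          (div_le_iff₀ (hf.pos _)).mp (hf.abs_cocycle_div_le ha hfa hfb k n x)
      _ ≤ (1 / a + n * (b / a ^ 2)) * b := by gcongr; exact hfb _
      _ = b / a + (b / a) ^ 2 * n := by field_simp
      _ ≤ (b / a) ^ 2 * (n + 1) := by nlinarith
  rcases Fin.exists_fin_two.mp ⟨i, rfl⟩ with rfl | rfl
  · exact row_zero n
  · cases n with
    | zero =>
      rw [Nat.cast_zero, zero_add, mul_one]
      exact (abs_cocycle_zero_apply_le_one _ x 1 k).trans (one_le_pow₀ hab)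
    | succ n =>
      rw [cocycle_schrodingerCocycle_succ_one]
      refine (row_zero n).trans ?_
      push_cast
      gcongr
      linarith

theorem IsGroundState.tendsto_LEn_zero (hf : IsGroundState ω v f) (ha : 0 < a)
    (hfa : ∀ x, a ≤ f x) (hfb : ∀ x, f x ≤ b) (hv : Continuous v) :
    Tendsto (LEn ω (SchrodingerCocycle v)) atTop (nhds 0) := by
  have hab : 1 ≤ b / a := (one_le_div ha).mpr ((hfa 0).trans (hfb 0))
  refine tendsto_LEn_zero_of_opNorm_cocycle_le_linear (K := 4 * (b / a) ^ 2)
    (continuous_schrodingerCocycle hv) (det_schrodingerCocycle v) (by nlinarith) fun n x => ?_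
  refine (opNorm_le_sum_abs _).trans ?_
  have entry := fun i k => hf.abs_cocycle_le ha hfa hfb i k n x
  linarith [entry 0 0, entry 0 1, entry 1 0, entry 1 1]

end BoundedGroundState

/-! ### Comparison of Dirichlet determinants -/

/-- The Dirichlet determinant of length `n` on the orbit of `x`: the upper left entry of the
Schrödinger transfer matrix. -/
noncomputable def dirichletDet (ω : ℝ) (v : ℝ → ℝ) (n : ℕ) (x : ℝ) : ℝ :=
  cocycle ω (SchrodingerCocycle v) n x 0 0

theorem continuous_dirichletDet (hv : Continuous v) (n : ℕ) :
    Continuous (dirichletDet ω v n) :=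
  (continuous_cocycle (continuous_schrodingerCocycle hv) n).matrix_elem 0 0

theorem dirichletDet_le_opNorm (v : ℝ → ℝ) (n : ℕ) (x : ℝ) :
    dirichletDet ω v n x ≤ opNorm (cocycle ω (SchrodingerCocycle v) n x) :=
  (le_abs_self _).trans (abs_apply_le_opNorm _ 0 0)

theorem IsGroundState.wronskian_zero_pos (hf : IsGroundState ω v f) (V : ℝ → ℝ) (x : ℝ) :
    0 < wronskian ω V f 0 0 x := by
  simpa [wronskian, cocycle] using hf.pos _

theorem IsGroundState.dirichletDet_pos_and_wronskian_pos (hf : IsGroundState ω v f)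
    (hV : ∀ x, v x ≤ V x) (n : ℕ) (x : ℝ) :
    0 < dirichletDet ω V n x ∧ 0 < wronskian ω V f 0 n x := by
  induction n with
  | zero => exact ⟨by simp [dirichletDet, cocycle], hf.wronskian_zero_pos V x⟩
  | succ n ih =>
    obtain ⟨det_pos, wronskian_pos⟩ := ih
    have wronskian_succ_pos : 0 < wronskian ω V f 0 (n + 1) x := by
      rw [hf.wronskian_succ]
      have := mul_nonneg (mul_nonneg (sub_nonneg.mpr (hV (x + n * ω))) det_pos.le)
        (hf.pos (x + n * ω)).le
      exact add_pos_of_pos_of_nonneg wronskian_pos this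
    refine ⟨pos_of_mul_pos_left ?_ (hf.pos (x + n * ω)).le, wronskian_succ_pos⟩
    rw [wronskian_succ_eq, sub_pos] at wronskian_succ_pos
    exact (mul_pos det_pos (hf.pos _)).trans wronskian_succ_pos

-- The Wronskians with `f` obey the same comparison, which closes the induction.
theorem IsGroundState.exp_neg_sum_mul_dirichletDet_le (hf : IsGroundState ω v f)
    (hV : ∀ x, v x ≤ V x) (hθ : ∀ x, 0 ≤ θ x)
    (hV' : ∀ x, exp (-θ x) * (V x - v x) ≤ V' x - v x) (n : ℕ) (x : ℝ) :
    exp (-∑ i ∈ Finset.range n, θ (x + i * ω)) * dirichletDet ω V n x ≤ dirichletDet ω V' n x ∧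
      exp (-∑ i ∈ Finset.range n, θ (x + i * ω)) * wronskian ω V f 0 n x ≤
        wronskian ω V' f 0 n x := by
  induction n with
  | zero => simp [dirichletDet, wronskian, cocycle]
  | succ n ih =>
    obtain ⟨det_le, wronskian_le⟩ := ih
    obtain ⟨det_pos, wronskian_pos⟩ := hf.dirichletDet_pos_and_wronskian_pos hV n x
    have hF := hf.pos (x + n * ω)
    have step := hV' (x + n * ω)
    have hq := sub_nonneg.mpr (hV (x + n * ω))
    rw [Finset.sum_range_succ, neg_add, exp_add]
    set G := exp (-∑ i ∈ Finset.range n, θ (x + i * ω))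
    set e := exp (-θ (x + n * ω))
    have hG : 0 < G := exp_pos _
    have he : 0 < e := exp_pos _
    have he_le : e ≤ 1 := exp_le_one_iff.mpr (neg_nonpos.mpr (hθ _))
    have wronskian_succ_le :
        G * e * wronskian ω V f 0 (n + 1) x ≤ wronskian ω V' f 0 (n + 1) x := by
      rw [hf.wronskian_succ, hf.wronskian_succ]
      calc _ = e * (G * wronskian ω V f 0 n x) +
            (e * (V (x + n * ω) - v (x + n * ω))) * (G * dirichletDet ω V n x) *
              f (x + n * ω) := by rw [dirichletDet]; ring
        _ ≤ 1 * (G * wronskian ω V f 0 n x) +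
            (V' (x + n * ω) - v (x + n * ω)) * dirichletDet ω V' n x * f (x + n * ω) := by
          have := (mul_nonneg he.le hq).trans step
          gcongr
        _ ≤ _ := by rw [one_mul]; exact add_le_add_left wronskian_le _
    refine ⟨le_of_mul_le_mul_right ?_ hF, wronskian_succ_le⟩
    have shifted : G * e * (dirichletDet ω V n x * f (x + (n + 1) * ω)) ≤
        dirichletDet ω V' n x * f (x + (n + 1) * ω) := by
      rw [← mul_assoc]
      refine mul_le_mul_of_nonneg_right ?_ (hf.pos _).le
      exact le_trans (by gcongr; exact mul_le_of_le_one_right hG.le he_le) det_le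
    rw [wronskian_succ_eq, wronskian_succ_eq] at wronskian_succ_le
    simp only [dirichletDet] at *
    linarith

theorem IsGroundState.integral_log_dirichletDet_sub_le (hf : IsGroundState ω v f)
    (hV : ∀ x, v x ≤ V x) (hθ : ∀ x, 0 ≤ θ x)
    (hV' : ∀ x, exp (-θ x) * (V x - v x) ≤ V' x - v x) (hVc : Continuous V)
    (hVc' : Continuous V') (hθc : Continuous θ) (hθp : Function.Periodic θ 1) (n : ℕ) :
    (∫ x in (0 : ℝ)..1, log (dirichletDet ω V n x)) - n * ∫ x in (0 : ℝ)..1, θ x ≤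
      ∫ x in (0 : ℝ)..1, log (dirichletDet ω V' n x) := by
  have det_pos := fun x => (hf.dirichletDet_pos_and_wronskian_pos hV n x).1
  have compare := fun x => (hf.exp_neg_sum_mul_dirichletDet_le hV hθ hV' n x).1
  have sum_cont : Continuous fun x => ∑ i ∈ Finset.range n, θ (x + i * ω) := by fun_prop
  have integral_sum : ∫ x in (0 : ℝ)..1, ∑ i ∈ Finset.range n, θ (x + i * ω) =
      n * ∫ x in (0 : ℝ)..1, θ x := by
    have shift_cont (i : ℕ) : Continuous fun x => θ (x + i * ω) := by fun_prop
    rw [intervalIntegral.integral_finsetSum fun i _ => (shift_cont i).intervalIntegrable _ _]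
    simp [intervalIntegral_zero_one_comp_add_right hθp]
  have log_cont : Continuous fun x => log (dirichletDet ω V n x) :=
    (continuous_dirichletDet hVc n).log fun x => (det_pos x).ne'
  have log_cont' : Continuous fun x => log (dirichletDet ω V' n x) :=
    (continuous_dirichletDet hVc' n).log fun x =>
      ((mul_pos (exp_pos _) (det_pos x)).trans_le (compare x)).ne'
  rw [← integral_sum, ← intervalIntegral.integral_sub (log_cont.intervalIntegrable _ _)
    (sum_cont.intervalIntegrable _ _)]
  refine intervalIntegral.integral_mono zero_le_one
    ((log_cont.sub sum_cont).intervalIntegrable _ _) (log_cont'.intervalIntegrable _ _) fun x => ?_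
  have := log_le_log (mul_pos (exp_pos _) (det_pos x)) (compare x)
  rw [log_mul (exp_pos _).ne' (det_pos x).ne', log_exp] at this
  linarith

theorem sub_one_pow_le_dirichletDet_const {W : ℝ} (hW : 2 ≤ W) (n : ℕ) (x : ℝ) :
    (W - 1) ^ n ≤ dirichletDet ω (fun _ => W) n x := by
  suffices H : (W - 1) ^ n ≤ dirichletDet ω (fun _ => W) n x ∧
      cocycle ω (SchrodingerCocycle fun _ => W) n x 1 0 ≤ dirichletDet ω (fun _ => W) n x from H.1
  induction n with
  | zero => simp [dirichletDet, cocycle]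
  | succ n ih =>
    rw [dirichletDet, cocycle_schrodingerCocycle_succ_zero, cocycle_schrodingerCocycle_succ_one,
      pow_succ, ← dirichletDet]
    have : 0 ≤ (W - 1) ^ n := pow_nonneg (by linarith) n
    constructor <;> nlinarith [ih.1, ih.2]

theorem le_LEn_of_le_integral_log_dirichletDet (hv : Continuous v) {n : ℕ} (hn : 1 ≤ n) {κ : ℝ}
    (hpos : ∀ x, 0 < dirichletDet ω v n x)
    (h : n * κ ≤ ∫ x in (0 : ℝ)..1, log (dirichletDet ω v n x)) :
    κ ≤ LEn ω (SchrodingerCocycle v) n := by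
  have log_cont := (continuous_dirichletDet hv n).log fun x => (hpos x).ne'
  rw [LEn_eq_div, le_div_iff₀ (by positivity), mul_comm]
  refine h.trans (intervalIntegral.integral_mono zero_le_one (log_cont.intervalIntegrable _ _)
    ((continuous_log_opNorm_cocycle (det_schrodingerCocycle v)
      (continuous_schrodingerCocycle hv) n).intervalIntegrable _ _) fun x => ?_)
  exact log_le_log (hpos x) (dirichletDet_le_opNorm v n x)

end Schrodinger

/-! ### Badly approximable rotations -/

/-- `ω` is badly approximable with constant `c₀`: `|j ω - p| ≥ c₀ / j` for all `j ≥ 1`. -/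
def IsBadlyApproximable (c₀ ω : ℝ) : Prop :=
  ∀ j : ℕ, 1 ≤ j → ∀ p : ℤ, c₀ / j ≤ |j * ω - p|

/-- `x` lies within `δ` of an integer. -/
def NearInt (δ x : ℝ) : Prop := ∃ p : ℤ, |x - p| ≤ δ

theorem NearInt.mono {δ δ' x : ℝ} (h : NearInt δ x) (hδ : δ ≤ δ') : NearInt δ' x :=
  h.imp fun _ hp => hp.trans hδ

section BoundedType

variable {ω : ℝ}

theorem not_terminatedAt_of_irrational (hω : Irrational ω) (n : ℕ) :
    ¬(GenContFract.of ω).TerminatedAt n := fun h =>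
  have ⟨q, hq⟩ := GenContFract.exists_rat_eq_of_terminates (v := ω) ⟨n, h⟩
  hω ⟨q, hq.symm⟩

theorem exists_int_contsAux (hω : Irrational ω) (n : ℕ) :
    ∃ a b : ℤ, (GenContFract.of ω).contsAux n = ⟨(a : ℝ), (b : ℝ)⟩ := by
  induction n using Nat.strong_induction_on with
  | _ n ih =>
    match n with
    | 0 => exact ⟨1, 0, by simp⟩
    | 1 => exact ⟨⌊ω⌋, 1, by simp⟩
    | n + 2 =>
      obtain ⟨a, b, hab⟩ := ih n (by lia)
      obtain ⟨a', b', hab'⟩ := ih (n + 1) (by lia)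
      obtain ⟨gp, hgp⟩ : ∃ gp, (GenContFract.of ω).s.get? n = some gp :=
        Option.ne_none_iff_exists'.1 (not_terminatedAt_of_irrational hω n)
      have partNum : gp.a = 1 :=
        GenContFract.of_partNum_eq_one (GenContFract.partNum_eq_s_a hgp)
      obtain ⟨z, partDen⟩ := GenContFract.exists_int_eq_of_partDen
        (GenContFract.partDen_eq_s_b hgp)
      refine ⟨z * a' + a, z * b' + b, ?_⟩
      rw [GenContFract.contsAux_recurrence hgp hab hab', partNum, partDen]
      simp

theorem exists_int_nums_cfDen (hω : Irrational ω) (k : ℕ) :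
    ∃ a b : ℤ, (GenContFract.of ω).nums k = a ∧ cfDen ω k = b := by
  obtain ⟨a, b, hab⟩ := exists_int_contsAux hω (k + 1)
  refine ⟨a, b, ?_, ?_⟩
  · rw [GenContFract.num_eq_conts_a, GenContFract.nth_cont_eq_succ_nth_contAux, hab]
  · rw [cfDen, GenContFract.den_eq_conts_b, GenContFract.nth_cont_eq_succ_nth_contAux, hab]

theorem fib_succ_le_cfDen (hω : Irrational ω) (n : ℕ) : (Nat.fib (n + 1) : ℝ) ≤ cfDen ω n :=
  GenContFract.succ_nth_fib_le_of_nth_den (Or.inr (not_terminatedAt_of_irrational hω _))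

theorem cfDen_pos (hω : Irrational ω) (n : ℕ) : 0 < cfDen ω n :=
  lt_of_lt_of_le (by exact_mod_cast Nat.fib_pos.mpr n.succ_pos) (fib_succ_le_cfDen hω n)

theorem cfDen_le_succ (n : ℕ) : cfDen ω n ≤ cfDen ω (n + 1) := GenContFract.of_den_mono

theorem abs_cfDen_mul_sub_nums_le (hω : Irrational ω) (k : ℕ) :
    |cfDen ω k * ω - (GenContFract.of ω).nums k| ≤ 1 / cfDen ω (k + 1) := by
  have den_pos := cfDen_pos hω k
  have conv_error := GenContFract.abs_sub_convs_le (not_terminatedAt_of_irrational hω k)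
  rw [GenContFract.conv_eq_num_div_den] at conv_error
  calc |cfDen ω k * ω - (GenContFract.of ω).nums k|
      = cfDen ω k * |ω - (GenContFract.of ω).nums k / cfDen ω k| := by
        rw [← abs_of_pos den_pos, ← abs_mul, abs_of_pos den_pos]
        field_simp
    _ ≤ cfDen ω k * (1 / (cfDen ω k * cfDen ω (k + 1))) := by gcongr; exact conv_error
    _ = 1 / cfDen ω (k + 1) := by field_simp

theorem one_le_two_mul_cfDen_mul_abs_sub (hω : Irrational ω) {j k : ℕ} {p : ℤ} (hj : 1 ≤ j)
    (hjk : 2 * (j : ℝ) ≤ cfDen ω k)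
    (hne : (GenContFract.of ω).nums k * j - p * cfDen ω k ≠ 0) :
    1 ≤ 2 * cfDen ω k * |j * ω - p| := by
  have hj' : (0 : ℝ) < j := by exact_mod_cast hj
  have den_pos := cfDen_pos hω k
  have numerator_ge : 1 ≤ |(GenContFract.of ω).nums k * j - p * cfDen ω k| := by
    obtain ⟨a, b, ha, hb⟩ := exists_int_nums_cfDen hω k
    rw [ha, hb] at hne ⊢
    exact_mod_cast Int.one_le_abs (by exact_mod_cast hne)
  have conv_error : |cfDen ω k * ω - (GenContFract.of ω).nums k| ≤ 1 / (2 * j) :=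
    (abs_cfDen_mul_sub_nums_le hω k).trans
      (one_div_le_one_div_of_le (by positivity) (hjk.trans (cfDen_le_succ k)))
  have : 1 ≤ 1 / 2 + cfDen ω k * |j * ω - p| := calc
    (1 : ℝ) ≤ |(GenContFract.of ω).nums k * j - p * cfDen ω k| := numerator_ge
    _ = |-j * (cfDen ω k * ω - (GenContFract.of ω).nums k) + cfDen ω k * (j * ω - p)| := by
        congr 1; ring
    _ ≤ j * |cfDen ω k * ω - (GenContFract.of ω).nums k| + cfDen ω k * |j * ω - p| := by
        refine (abs_add_le _ _).trans_eq ?_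
        rw [abs_mul, abs_mul, abs_neg, abs_of_pos den_pos, abs_of_pos hj']
    _ ≤ j * (1 / (2 * j)) + cfDen ω k * |j * ω - p| := by gcongr
    _ = 1 / 2 + cfDen ω k * |j * ω - p| := by field_simp
  linarith

theorem exists_cfDen_mem_Icc (hω : Irrational ω) {M : ℝ}
    (hbt : ∀ k : ℕ, cfDen ω (k + 1) ≤ M * cfDen ω k) (hM : 1 ≤ M) {j : ℕ} (hj : 1 ≤ j) :
    ∃ n, 2 * (j : ℝ) ≤ cfDen ω n ∧ cfDen ω n ≤ 2 * M * j := by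
  classical
  have hj' : (1 : ℝ) ≤ j := by exact_mod_cast hj
  have unbounded : ∃ n, 2 * (j : ℝ) ≤ cfDen ω n := by
    refine ⟨2 * j + 4, le_trans ?_ (fib_succ_le_cfDen hω _)⟩
    have le_fib := Nat.le_fib_self (n := 2 * j + 4 + 1) (by lia)
    exact_mod_cast (by lia : 2 * j ≤ Nat.fib (2 * j + 4 + 1))
  refine ⟨Nat.find unbounded, Nat.find_spec unbounded, ?_⟩
  rcases h : Nat.find unbounded with _ | m
  · have den_zero : cfDen ω 0 = 1 := by simp [cfDen]
    rw [den_zero]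
    nlinarith
  · have previous := Nat.find_min unbounded (m := m) (by lia)
    push Not at previous
    nlinarith [hbt m]

-- If the first convergent with denominator at least `2 j` equals `p / j`, the next one does not.
theorem isBadlyApproximable_of_cfDen_le (hω : Irrational ω) {M : ℝ} (hM : 1 ≤ M)
    (hbt : ∀ k : ℕ, cfDen ω (k + 1) ≤ M * cfDen ω k) :
    IsBadlyApproximable (1 / (4 * M ^ 2)) ω := by
  intro j hj p
  have hj' : (0 : ℝ) < j := by exact_mod_cast hj
  obtain ⟨n, two_j_le, den_le⟩ := exists_cfDen_mem_Icc hω hbt hM hj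
  suffices ∃ k, 2 * (j : ℝ) ≤ cfDen ω k ∧ cfDen ω k ≤ 2 * M ^ 2 * j ∧
      (GenContFract.of ω).nums k * j - p * cfDen ω k ≠ 0 by
    obtain ⟨k, hk, hk', hne⟩ := this
    have bound := one_le_two_mul_cfDen_mul_abs_sub hω hj hk hne
    have scale := mul_le_mul_of_nonneg_right hk' (abs_nonneg (j * ω - p))
    rw [div_div, div_le_iff₀ (by positivity)]
    linarith
  by_cases h : (GenContFract.of ω).nums n * j - p * cfDen ω n = 0
  · refine ⟨n + 1, two_j_le.trans (cfDen_le_succ n), ?_, fun h' => ?_⟩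
    · calc cfDen ω (n + 1) ≤ M * cfDen ω n := hbt n
        _ ≤ M * (2 * M * j) := by gcongr
        _ = 2 * M ^ 2 * j := by ring
    · have determinant : (GenContFract.of ω).nums n * cfDen ω (n + 1) -
          cfDen ω n * (GenContFract.of ω).nums (n + 1) = (-1) ^ (n + 1) :=
        (SimpContFract.of ω).determinant (not_terminatedAt_of_irrational hω n)
      have : (j : ℝ) * (-1) ^ (n + 1) = 0 := by
        rw [← determinant]
        linear_combination cfDen ω (n + 1) * h - cfDen ω n * h'
      simp [hj'.ne'] at this
  · exact ⟨n, two_j_le, den_le.trans (by nlinarith), h⟩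

end BoundedType

theorem exists_nat_abs_add_mul_sub_int_le {a : ℝ} (ha : 0 < a) (x : ℝ) :
    ∃ i : ℕ, (i : ℝ) ≤ 1 / a ∧ ∃ p : ℤ, |x + i * a - p| ≤ a := by
  have fract_lt_one := Int.fract_lt_one (-x)
  have fract_eq : -x - ⌊-x⌋ = Int.fract (-x) := rfl
  refine ⟨⌊Int.fract (-x) / a⌋₊, ?_, -⌊-x⌋, ?_⟩
  · exact (Nat.floor_le (by positivity)).trans (by gcongr)
  · have floor_le := (le_div_iff₀ ha).mp (Nat.floor_le (by positivity : 0 ≤ Int.fract (-x) / a))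
    have lt_floor := (div_lt_iff₀ ha).mp (Nat.lt_floor_add_one (Int.fract (-x) / a))
    push_cast
    rw [abs_le]
    constructor <;> nlinarith

theorem exists_nat_abs_add_mul_sub_int_le_abs {a : ℝ} (ha : a ≠ 0) (x : ℝ) :
    ∃ i : ℕ, (i : ℝ) ≤ 1 / |a| ∧ ∃ p : ℤ, |x + i * a - p| ≤ |a| := by
  rcases ha.lt_or_gt with neg | pos
  · obtain ⟨i, hi, p, hp⟩ := exists_nat_abs_add_mul_sub_int_le (neg_pos.mpr neg) (-x)
    rw [abs_of_neg neg]
    refine ⟨i, hi, -p, ?_⟩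
    rw [← abs_neg]
    convert hp using 2
    push_cast
    ring
  · rw [abs_of_pos pos]
    exact exists_nat_abs_add_mul_sub_int_le pos x

-- Dirichlet's theorem gives `k ≤ 2 / δ` with `|k ω - p| ≤ δ`; walk in steps of length `k ω - p`.
theorem IsBadlyApproximable.exists_nearInt_add_mul {c₀ ω δ : ℝ} (hc₀ : 0 < c₀)
    (h : IsBadlyApproximable c₀ ω) (hδ : 0 < δ) (hδ1 : δ ≤ 1) (x : ℝ) :
    ∃ j : ℕ, (j : ℝ) ≤ (4 / c₀) / δ ^ 2 ∧ NearInt δ (x + j * ω) := by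
  set n := ⌈1 / δ⌉₊
  have le_n : 1 / δ ≤ n := Nat.le_ceil _
  have n_le : (n : ℝ) ≤ 2 / δ := by
    have : 1 ≤ 1 / δ := (one_le_div hδ).mpr hδ1
    rw [show 2 / δ = 1 / δ + 1 / δ by ring]
    linarith [Nat.ceil_lt_add_one (by positivity : 0 ≤ 1 / δ)]
  obtain ⟨k, hk, hkn, dirichlet⟩ :=
    Real.exists_nat_abs_mul_sub_round_le ω (Nat.ceil_pos.mpr (by positivity : 0 < 1 / δ))
  set p := round ((k : ℝ) * ω)
  set a := (k : ℝ) * ω - p with ha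
  have hk' : (0 : ℝ) < k := by exact_mod_cast hk
  have hkn' : (k : ℝ) ≤ n := by exact_mod_cast hkn
  have lower := h k hk p
  have abs_a_pos : 0 < |a| := lt_of_lt_of_le (by positivity) lower
  have abs_a_le : |a| ≤ δ := by
    refine dirichlet.trans ((div_le_iff₀ (by positivity)).mpr ?_)
    linarith [(div_le_iff₀ hδ).mp le_n]
  have inv_le : 1 / |a| ≤ n / c₀ := by
    rw [div_le_div_iff₀ abs_a_pos hc₀]
    rw [div_le_iff₀ hk'] at lower
    nlinarith
  obtain ⟨i, hi, q, hq⟩ := exists_nat_abs_add_mul_sub_int_le_abs (abs_pos.mp abs_a_pos) x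
  refine ⟨i * k, ?_, i * p + q, ?_⟩
  · push_cast
    calc (i : ℝ) * k ≤ (n / c₀) * n := by gcongr; exact hi.trans inv_le
      _ ≤ (2 / δ / c₀) * (2 / δ) := by gcongr
      _ = (4 / c₀) / δ ^ 2 := by field_simp; norm_num
  · refine le_of_eq_of_le ?_ (hq.trans abs_a_le)
    rw [ha]
    push_cast
    ring_nf

theorem IsBadlyApproximable.neg {c₀ ω : ℝ} (h : IsBadlyApproximable c₀ ω) :
    IsBadlyApproximable c₀ (-ω) := fun j hj p => by
  rw [← abs_neg]
  convert h j hj (-p) using 2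
  push_cast
  ring

theorem IsBadlyApproximable.div_abs_le {c₀ ω : ℝ} (h : IsBadlyApproximable c₀ ω) {i : ℤ}
    (hi : i ≠ 0) (p : ℤ) : c₀ / |(i : ℝ)| ≤ |i * ω - p| := by
  have one_le : 1 ≤ i.natAbs := Int.natAbs_pos.mpr hi
  have cast_natAbs : ((i.natAbs : ℕ) : ℝ) = |(i : ℝ)| := by rw [Nat.cast_natAbs, Int.cast_abs]
  rcases le_total 0 i with nonneg | nonpos
  · have := h _ one_le p
    rwa [cast_natAbs, abs_of_nonneg (Int.cast_nonneg nonneg)] at *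
  · have := h.neg _ one_le p
    rwa [cast_natAbs, abs_of_nonpos (Int.cast_nonpos.mpr nonpos), neg_mul_neg] at *

theorem IsBadlyApproximable.not_nearInt_add_mul {c₀ ω δ δ' y : ℝ} (h : IsBadlyApproximable c₀ ω)
    (hy : NearInt δ y) {i : ℤ} (hi : i ≠ 0) (hδ : δ + δ' < c₀ / |(i : ℝ)|) :
    ¬NearInt δ' (y + i * ω) := by
  rintro ⟨q, hq⟩
  obtain ⟨p, hp⟩ := hy
  have upper : |i * ω - ((q - p : ℤ) : ℝ)| ≤ δ' + δ := by
    push_cast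
    rw [show (i : ℝ) * ω - (q - p) = (y + i * ω - q) - (y - p) by ring]
    exact (abs_sub _ _).trans (add_le_add hq hp)
  linarith [h.div_abs_le hi (q - p)]

/-! ### Cones and strips in the complex plane -/

/-- The sector `|Im w| ≤ t Re w` around the positive half-line. For `t = 0` this is the positive
half-line itself. -/
def InCone (t : ℝ) (w : ℂ) : Prop := 0 < w.re ∧ |w.im| ≤ t * w.re

namespace InCone

variable {t a b : ℝ} {z w c Y : ℂ}

theorem ne_zero (h : InCone t w) : w ≠ 0 := by
  rintro rfl
  exact lt_irrefl _ h.1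

theorem nonneg (h : InCone t w) : 0 ≤ t :=
  nonneg_of_mul_nonneg_left ((abs_nonneg _).trans h.2) h.1

theorem add (h : InCone t z) (h' : InCone t w) : InCone t (z + w) := by
  refine ⟨add_pos h.1 h'.1, ?_⟩
  rw [Complex.add_re, Complex.add_im, mul_add]
  exact (abs_add_le _ _).trans (add_le_add h.2 h'.2)

theorem inv (h : InCone t z) : InCone t z⁻¹ := by
  have normSq_pos : 0 < Complex.normSq z := Complex.normSq_pos.mpr h.ne_zero
  refine ⟨by rw [Complex.inv_re]; exact div_pos h.1 normSq_pos, ?_⟩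
  rw [Complex.inv_re, Complex.inv_im, abs_div, abs_neg, abs_of_pos normSq_pos, ← mul_div_assoc]
  exact div_le_div_of_nonneg_right h.2 normSq_pos.le

-- Addition formula for the tangent: the slopes `a` and `b` combine to `(a + b) / (1 - a b)`.
theorem mul (h : InCone a z) (h' : InCone b w) (hab : a * b < 1)
    (ht : a + b ≤ t * (1 - a * b)) : InCone t (z * w) := by
  have ha := h.nonneg
  have hb := h'.nonneg
  obtain ⟨z_pos, z_im⟩ := h
  obtain ⟨w_pos, w_im⟩ := h'
  have re_pos : 0 < z.re * w.re := mul_pos z_pos w_pos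
  have im_im : |z.im * w.im| ≤ a * b * (z.re * w.re) := by
    rw [abs_mul]
    calc |z.im| * |w.im| ≤ (a * z.re) * (b * w.re) := by gcongr
      _ = a * b * (z.re * w.re) := by ring
  have re_im : |z.re * w.im| ≤ b * (z.re * w.re) := by
    rw [abs_mul, abs_of_pos z_pos]; nlinarith
  have im_re : |z.im * w.re| ≤ a * (z.re * w.re) := by
    rw [abs_mul, abs_of_pos w_pos]; nlinarith
  have ht0 : 0 ≤ t := nonneg_of_mul_nonneg_left ((add_nonneg ha hb).trans ht) (by linarith)
  have re_ge : (1 - a * b) * (z.re * w.re) ≤ (z * w).re := by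
    rw [Complex.mul_re]
    linarith [(abs_le.mp im_im).2]
  refine ⟨lt_of_lt_of_le (mul_pos (by linarith) re_pos) re_ge, ?_⟩
  rw [Complex.mul_im]
  calc |z.re * w.im + z.im * w.re| ≤ |z.re * w.im| + |z.im * w.re| := abs_add_le _ _
    _ ≤ (a + b) * (z.re * w.re) := by linarith
    _ ≤ t * (1 - a * b) * (z.re * w.re) := by gcongr
    _ = t * ((1 - a * b) * (z.re * w.re)) := by ring
    _ ≤ t * (z * w).re := by gcongr

-- Conductances in series: the reciprocals add.
theorem mul_div_add (h : InCone t z) (h' : InCone t w) : InCone t (z * w / (z + w)) := by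
  have reciprocal : z * w / (z + w) = (z⁻¹ + w⁻¹)⁻¹ := by
    rw [inv_add_inv h.ne_zero h'.ne_zero, inv_div]
  rw [reciprocal]
  exact (h.inv.add h'.inv).inv

theorem real_mul {E : ℝ} (hE : 0 < E) (h : InCone t z) : InCone t (E * z) := by
  refine ⟨by simpa using mul_pos hE h.1, ?_⟩
  rw [Complex.re_ofReal_mul, Complex.im_ofReal_mul, abs_mul, abs_of_pos hE, mul_left_comm]
  exact mul_le_mul_of_nonneg_left h.2 hE.le

theorem norm_le (h : InCone t z) (ht : t ≤ 1) : ‖z‖ ≤ 2 * z.re := by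
  have re_add_im := Complex.norm_le_abs_re_add_abs_im z
  rw [abs_of_pos h.1] at re_add_im
  nlinarith [h.1, h.2]

theorem ofReal_re_eq (h : InCone 0 z) : (z.re : ℂ) = z := by
  have im_eq : z.im = 0 := abs_nonpos_iff.mp (by simpa using h.2)
  exact Complex.ext rfl im_eq.symm

theorem ofReal {x : ℝ} (h : 0 < x) : InCone 0 (x : ℂ) := ⟨by simpa using h, by simp⟩

theorem mul_inv_inCone_one (hc : InCone (1 / 4) c) (hY : InCone (1 / 4) Y) :
    InCone 1 (Y * c⁻¹) :=
  hY.mul hc.inv (by norm_num) (by norm_num)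

theorem div_add_eq_inv (hc : InCone t c) : c / (c + Y) = (1 + Y * c⁻¹)⁻¹ := by
  rw [← div_eq_mul_inv, one_add_div hc.ne_zero, inv_div]

theorem div_add_inCone_one (hc : InCone (1 / 4) c) (hY : InCone (1 / 4) Y) :
    InCone 1 (c / (c + Y)) := by
  rw [hc.div_add_eq_inv]
  exact (InCone.add ⟨by simp, by simp⟩ (hc.mul_inv_inCone_one hY)).inv

theorem norm_div_add_le {m B : ℝ} (hm : 0 ≤ m) (hc : InCone (1 / 4) c)
    (hY : InCone (1 / 4) Y) (hcB : ‖c‖ ≤ B) (hYm : m ≤ ‖Y‖) :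
    ‖c / (c + Y)‖ ≤ 1 / (1 + m / (2 * B)) := by
  have norm_c_pos : 0 < ‖c‖ := norm_pos_iff.mpr hc.ne_zero
  have hB : 0 < B := norm_c_pos.trans_le hcB
  have quotient_norm : m / B ≤ ‖Y * c⁻¹‖ := by
    rw [norm_mul, norm_inv, ← div_eq_mul_inv]
    gcongr
  have denominator_norm : 1 + m / (2 * B) ≤ ‖1 + Y * c⁻¹‖ := by
    have re_le := (le_abs_self _).trans (Complex.abs_re_le_norm (1 + Y * c⁻¹))
    rw [Complex.add_re, Complex.one_re] at re_le
    have half : m / (2 * B) = m / B / 2 := by field_simp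
    linarith [(hc.mul_inv_inCone_one hY).norm_le le_rfl]
  rw [hc.div_add_eq_inv, norm_inv, ← one_div]
  exact one_div_le_one_div_of_le (by positivity) denominator_norm

theorem norm_div_add_le_one (hc : InCone (1 / 4) c) (hY : InCone (1 / 4) Y) :
    ‖c / (c + Y)‖ ≤ 1 := by
  simpa using norm_div_add_le le_rfl hc hY le_rfl (norm_nonneg _)

end InCone

/-- The horizontal strip `|Im z| < r`. -/
def strip (r : ℝ) : Set ℂ := {z | |z.im| < r}

section Strip

variable {r r' : ℝ} {z : ℂ}

theorem isOpen_strip (r : ℝ) : IsOpen (strip r) :=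
  isOpen_lt Complex.continuous_im.abs continuous_const

theorem strip_mono (h : r ≤ r') : strip r ⊆ strip r' := fun _ hz => lt_of_lt_of_le hz h

theorem add_ofReal_mem_strip (hz : z ∈ strip r) (a : ℝ) : z + a ∈ strip r := by
  simpa [strip] using hz

theorem ofReal_mem_strip (hr : 0 < r) (x : ℝ) : (x : ℂ) ∈ strip r := by
  simpa [strip] using hr

theorem ball_subset_strip (x r : ℝ) : Metric.ball (x : ℂ) r ⊆ strip r := fun z hz => by
  simpa [strip] using (Complex.abs_im_le_norm (z - x)).trans_lt (mem_ball_iff_norm.mp hz)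

theorem differentiableOn_strip_comp_add {F : ℂ → ℂ} (hF : DifferentiableOn ℂ F (strip r))
    (a : ℝ) : DifferentiableOn ℂ (fun z => F (z + a)) (strip r) :=
  hF.comp (by fun_prop) fun _ hz => add_ofReal_mem_strip hz a

theorem norm_im_mul_I_lt_of_mem_strip (hz : z ∈ strip r) : ‖(z.im * Complex.I : ℂ)‖ < r := by
  rw [norm_mul, Complex.norm_real, Complex.norm_I, mul_one, norm_eq_abs]
  exact hz

end Strip

/-! ### Holomorphic ladder networks -/

/-- Holomorphic `1`-periodic weights on the strip of width `r` of a one-sided ladder network along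
the orbits of a rotation: `c` is the conductance of the edge to the next site and `κ` the
conductance to the ground. -/
structure IsLadderNetwork (r B D m : ℝ) (c κ : ℂ → ℂ) : Prop where
  width_pos : 0 < r
  differentiableOn_edge : DifferentiableOn ℂ c (strip r)
  differentiableOn_ground : DifferentiableOn ℂ κ (strip r)
  periodic_edge : Function.Periodic c 1
  periodic_ground : Function.Periodic κ 1
  edge_inCone : ∀ z ∈ strip r, InCone (1 / 4) (c z)
  ground_inCone : ∀ z ∈ strip r, InCone (1 / 4) (κ z)
  edge_real : ∀ x : ℝ, InCone 0 (c x)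
  ground_real : ∀ x : ℝ, InCone 0 (κ x)
  norm_edge_le : ∀ z ∈ strip r, ‖c z‖ ≤ B
  norm_ground_le : ∀ z ∈ strip r, ‖κ z‖ ≤ D
  ground_lower_pos : 0 < m
  le_re_ground : ∀ z ∈ strip r, m ≤ (κ z).re

/-- The input conductance of the ladder truncated after `n` rungs. -/
noncomputable def truncatedConductance (ω : ℝ) (c κ : ℂ → ℂ) : ℕ → ℂ → ℂ
  | 0, z => κ z
  | n + 1, z => κ z + c z * truncatedConductance ω c κ n (z + ω) /
      (c z + truncatedConductance ω c κ n (z + ω))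

/-- The input conductance of the infinite ladder, as the sum of the increments of the truncated
ones. -/
noncomputable def ladderConductance (ω : ℝ) (c κ : ℂ → ℂ) (z : ℂ) : ℂ :=
  κ z + ∑' n, (truncatedConductance ω c κ (n + 1) z - truncatedConductance ω c κ n z)

namespace IsLadderNetwork

variable {r B D m : ℝ} {c κ : ℂ → ℂ} {z : ℂ} (ω : ℝ)

theorem truncated_inCone (h : IsLadderNetwork r B D m c κ) (n : ℕ) (hz : z ∈ strip r) :
    InCone (1 / 4) (truncatedConductance ω c κ n z) := by
  induction n generalizing z with
  | zero => exact h.ground_inCone z hz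
  | succ n ih =>
    exact (h.ground_inCone z hz).add
      ((h.edge_inCone z hz).mul_div_add (ih (add_ofReal_mem_strip hz ω)))

theorem re_ground_le_re_truncated (h : IsLadderNetwork r B D m c κ) (n : ℕ) (hz : z ∈ strip r) :
    (κ z).re ≤ (truncatedConductance ω c κ n z).re := by
  cases n with
  | zero => rfl
  | succ n =>
    have series := (h.edge_inCone z hz).mul_div_add
      (h.truncated_inCone ω n (add_ofReal_mem_strip hz ω))
    rw [truncatedConductance, Complex.add_re]
    linarith [series.1]

theorem truncated_real (h : IsLadderNetwork r B D m c κ) (n : ℕ) (x : ℝ) :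
    InCone 0 (truncatedConductance ω c κ n x) := by
  induction n generalizing x with
  | zero => exact h.ground_real x
  | succ n ih =>
    have series := (h.edge_real x).mul_div_add (ih (x + ω))
    rw [Complex.ofReal_add] at series
    exact (h.ground_real x).add series

theorem periodic_truncated (h : IsLadderNetwork r B D m c κ) (n : ℕ) :
    Function.Periodic (truncatedConductance ω c κ n) 1 := by
  induction n with
  | zero => exact h.periodic_ground
  | succ n ih =>
    intro z
    simp only [truncatedConductance]
    rw [add_right_comm, ih, h.periodic_ground, h.periodic_edge]

theorem differentiableOn_truncated (h : IsLadderNetwork r B D m c κ) (n : ℕ) :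
    DifferentiableOn ℂ (truncatedConductance ω c κ n) (strip r) := by
  induction n with
  | zero => exact h.differentiableOn_ground
  | succ n ih =>
    have shifted := differentiableOn_strip_comp_add ih ω
    refine h.differentiableOn_ground.add ((h.differentiableOn_edge.mul shifted).div
      (h.differentiableOn_edge.add shifted) fun z hz => ?_)
    exact ((h.edge_inCone z hz).add
      (h.truncated_inCone ω n (add_ofReal_mem_strip hz ω))).ne_zero

theorem norm_transmission_le (h : IsLadderNetwork r B D m c κ) (n : ℕ) (hz : z ∈ strip r) :
    ‖c z / (c z + truncatedConductance ω c κ n (z + ω))‖ ≤ 1 / (1 + m / (2 * B)) := by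
  have hz' := add_ofReal_mem_strip hz ω
  refine InCone.norm_div_add_le h.ground_lower_pos.le (h.edge_inCone z hz)
    (h.truncated_inCone ω n hz') (h.norm_edge_le z hz) ?_
  exact ((h.le_re_ground _ hz').trans (h.re_ground_le_re_truncated ω n hz')).trans
    ((le_abs_self _).trans (Complex.abs_re_le_norm _))

theorem edge_bound_pos (h : IsLadderNetwork r B D m c κ) : 0 < B := by
  have zero_mem := ofReal_mem_strip h.width_pos 0
  exact (norm_pos_iff.mpr (h.edge_inCone _ zero_mem).ne_zero).trans_le (h.norm_edge_le _ zero_mem)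

theorem ratio_lt_one (h : IsLadderNetwork r B D m c κ) : 1 / (1 + m / (2 * B)) < 1 := by
  have hm := h.ground_lower_pos
  have hB := h.edge_bound_pos
  rw [div_lt_one (by positivity)]
  linarith [show 0 < m / (2 * B) by positivity]

theorem norm_truncated_succ_sub_le (h : IsLadderNetwork r B D m c κ) (n : ℕ) (hz : z ∈ strip r) :
    ‖truncatedConductance ω c κ (n + 1) z - truncatedConductance ω c κ n z‖ ≤
      D * (1 / (1 + m / (2 * B))) ^ n := by
  have hm := h.ground_lower_pos
  have hB := h.edge_bound_pos
  induction n generalizing z with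
  | zero =>
    have first : truncatedConductance ω c κ 1 z - truncatedConductance ω c κ 0 z =
        c z / (c z + truncatedConductance ω c κ 0 (z + ω)) * κ (z + ω) := by
      simp only [truncatedConductance]
      ring
    rw [first, norm_mul, pow_zero, mul_one]
    calc _ ≤ 1 * ‖κ (z + ω)‖ := by
          gcongr
          exact (h.norm_transmission_le ω 0 hz).trans h.ratio_lt_one.le
      _ ≤ D := by rw [one_mul]; exact h.norm_ground_le _ (add_ofReal_mem_strip hz ω)
  | succ n ih =>
    have hz' := add_ofReal_mem_strip hz ω
    have denominator := fun n => ((h.edge_inCone z hz).add (h.truncated_inCone ω n hz')).ne_zero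
    have telescoped :
        truncatedConductance ω c κ (n + 2) z - truncatedConductance ω c κ (n + 1) z =
          c z / (c z + truncatedConductance ω c κ (n + 1) (z + ω)) *
            (c z / (c z + truncatedConductance ω c κ n (z + ω))) *
            (truncatedConductance ω c κ (n + 1) (z + ω) -
              truncatedConductance ω c κ n (z + ω)) := by
      rw [truncatedConductance.eq_2 ω c κ z (n + 1), truncatedConductance.eq_2 ω c κ z n]
      have := denominator n
      have := denominator (n + 1)
      field_simp
      ring
    rw [telescoped, norm_mul, norm_mul]
    calc _ ≤ 1 / (1 + m / (2 * B)) * 1 * (D * (1 / (1 + m / (2 * B))) ^ n) := by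
          gcongr
          · exact h.norm_transmission_le ω (n + 1) hz
          · exact (h.norm_transmission_le ω n hz).trans h.ratio_lt_one.le
          · exact ih hz'
      _ = D * (1 / (1 + m / (2 * B))) ^ (n + 1) := by ring

theorem summable_majorant (h : IsLadderNetwork r B D m c κ) :
    Summable fun n : ℕ => D * (1 / (1 + m / (2 * B))) ^ n := by
  have hm := h.ground_lower_pos
  have hB := h.edge_bound_pos
  exact (summable_geometric_of_lt_one (by positivity) h.ratio_lt_one).mul_left D

theorem tendsto_truncated (h : IsLadderNetwork r B D m c κ) (hz : z ∈ strip r) :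
    Tendsto (fun n => truncatedConductance ω c κ n z) atTop
      (nhds (ladderConductance ω c κ z)) := by
  have summable_increments :=
    Summable.of_norm_bounded h.summable_majorant fun n => h.norm_truncated_succ_sub_le ω n hz
  refine (summable_increments.hasSum.tendsto_sum_nat.const_add (κ z)).congr fun n => ?_
  rw [Finset.sum_range_sub fun n => truncatedConductance ω c κ n z, truncatedConductance.eq_1]
  ring

theorem inCone_ladderConductance_of_truncated (h : IsLadderNetwork r B D m c κ)
    (hz : z ∈ strip r) {t : ℝ} (hcone : ∀ n, InCone t (truncatedConductance ω c κ n z)) :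
    InCone t (ladderConductance ω c κ z) := by
  have lim := h.tendsto_truncated ω hz
  have re_lim := (Complex.continuous_re.tendsto _).comp lim
  have im_lim := (Complex.continuous_im.tendsto _).comp lim
  refine ⟨(h.ground_inCone z hz).1.trans_le (ge_of_tendsto re_lim (.of_forall fun n =>
    h.re_ground_le_re_truncated ω n hz)), ?_⟩
  exact le_of_tendsto_of_tendsto im_lim.abs (re_lim.const_mul t) (.of_forall fun n => (hcone n).2)

theorem ladderConductance_inCone (h : IsLadderNetwork r B D m c κ) (hz : z ∈ strip r) :
    InCone (1 / 4) (ladderConductance ω c κ z) :=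
  h.inCone_ladderConductance_of_truncated ω hz fun n => h.truncated_inCone ω n hz

theorem ladderConductance_real (h : IsLadderNetwork r B D m c κ) (x : ℝ) :
    InCone 0 (ladderConductance ω c κ x) :=
  h.inCone_ladderConductance_of_truncated ω (ofReal_mem_strip h.width_pos x) fun n =>
    h.truncated_real ω n x

theorem periodic_ladderConductance (h : IsLadderNetwork r B D m c κ) :
    Function.Periodic (ladderConductance ω c κ) 1 := fun z => by
  have periodic := fun n => h.periodic_truncated ω n z
  simp only [ladderConductance, periodic, h.periodic_ground z]

theorem differentiableOn_ladderConductance (h : IsLadderNetwork r B D m c κ) :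
    DifferentiableOn ℂ (ladderConductance ω c κ) (strip r) :=
  h.differentiableOn_ground.add (Complex.differentiableOn_tsum_of_summable_norm
    h.summable_majorant (fun n => (h.differentiableOn_truncated ω (n + 1)).sub
      (h.differentiableOn_truncated ω n)) (isOpen_strip r)
    fun n _ hz => h.norm_truncated_succ_sub_le ω n hz)

theorem ladderConductance_eq (h : IsLadderNetwork r B D m c κ) (hz : z ∈ strip r) :
    ladderConductance ω c κ z = κ z + c z * ladderConductance ω c κ (z + ω) /
      (c z + ladderConductance ω c κ (z + ω)) := by
  have hz' := add_ofReal_mem_strip hz ω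
  have shifted_lim := h.tendsto_truncated ω hz'
  have denominator := ((h.edge_inCone z hz).add (h.ladderConductance_inCone ω hz')).ne_zero
  refine tendsto_nhds_unique ((h.tendsto_truncated ω hz).comp (tendsto_add_atTop_nat 1)) ?_
  exact ((shifted_lim.const_mul (c z)).div (shifted_lim.const_add (c z)) denominator).const_add
    (κ z)

end IsLadderNetwork

/-! ### Logarithmic closeness -/

/-- `b = a * exp u` with `‖u‖ ≤ ε`: the multiplicative closeness in which the analytic
continuations are compared with their values on the real line. -/
def LogClose (ε : ℝ) (a b : ℂ) : Prop := ∃ u : ℂ, ‖u‖ ≤ ε ∧ b = a * Complex.exp u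

namespace LogClose

variable {ε ε' : ℝ} {a b a' b' : ℂ}

theorem mono (h : LogClose ε a b) (hε : ε ≤ ε') : LogClose ε' a b := by
  obtain ⟨u, hu, rfl⟩ := h
  exact ⟨u, hu.trans hε, rfl⟩

theorem symm (h : LogClose ε a b) : LogClose ε b a := by
  obtain ⟨u, hu, rfl⟩ := h
  exact ⟨-u, by rwa [norm_neg], by rw [mul_assoc, ← Complex.exp_add, add_neg_cancel,
    Complex.exp_zero, mul_one]⟩

theorem mul (h : LogClose ε a b) (h' : LogClose ε' a' b') :
    LogClose (ε + ε') (a * a') (b * b') := by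
  obtain ⟨u, hu, rfl⟩ := h
  obtain ⟨u', hu', rfl⟩ := h'
  exact ⟨u + u', norm_add_le_of_le hu hu', by rw [Complex.exp_add]; ring⟩

theorem const_mul (c : ℂ) (h : LogClose ε a b) : LogClose ε (c * a) (c * b) := by
  obtain ⟨u, hu, rfl⟩ := h
  exact ⟨u, hu, (mul_assoc c a _).symm⟩

theorem inv (h : LogClose ε a b) : LogClose ε a⁻¹ b⁻¹ := by
  obtain ⟨u, hu, rfl⟩ := h
  exact ⟨-u, by rwa [norm_neg], by rw [mul_inv, Complex.exp_neg]⟩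

theorem prod_range {a b : ℕ → ℂ} (h : ∀ i, LogClose ε (a i) (b i)) (n : ℕ) :
    LogClose (n * ε) (∏ i ∈ Finset.range n, a i) (∏ i ∈ Finset.range n, b i) := by
  induction n with
  | zero => exact ⟨0, by simp, by simp⟩
  | succ n ih =>
    rw [Finset.prod_range_succ, Finset.prod_range_succ, Nat.cast_add_one, add_one_mul]
    exact ih.mul (h n)

theorem norm_le (h : LogClose ε a b) : ‖b‖ ≤ ‖a‖ * Real.exp ε := by
  obtain ⟨u, hu, rfl⟩ := h
  rw [norm_mul]
  gcongr
  exact (Complex.norm_exp_le_exp_norm u).trans (Real.exp_le_exp.mpr hu)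

theorem norm_sub_le (h : LogClose ε a b) (hε : ε ≤ 1) : ‖b - a‖ ≤ ‖a‖ * (2 * ε) := by
  obtain ⟨u, hu, rfl⟩ := h
  rw [← mul_sub_one, norm_mul]
  gcongr
  linarith [Complex.norm_exp_sub_one_le (hu.trans hε)]

theorem of_norm_sub_le {δ : ℝ} (ha : a ≠ 0) (hδ : δ ≤ 1 / 2) (h : ‖b - a‖ ≤ δ * ‖a‖) :
    LogClose (2 * δ) a b := by
  have norm_ratio : ‖(b - a) / a‖ ≤ δ := by
    rwa [norm_div, div_le_iff₀ (norm_pos_iff.mpr ha)]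
  have b_eq : b = a * (1 + (b - a) / a) := by
    field_simp
    ring
  have ne_zero : 1 + (b - a) / a ≠ 0 := fun h0 => by
    rw [show (b - a) / a = -1 by linear_combination h0, norm_neg, norm_one] at norm_ratio
    linarith
  refine ⟨Complex.log (1 + (b - a) / a), ?_, by rwa [Complex.exp_log ne_zero]⟩
  linarith [Complex.norm_log_one_add_half_le_self (norm_ratio.trans hδ),
    norm_nonneg ((b - a) / a)]

theorem inCone {r : ℝ} (hr : 0 < r) (hε : ε ≤ 1 / 100) (h : LogClose ε (r : ℂ) b) :
    InCone (1 / 10) b := by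
  have norm_sub : ‖b - r‖ ≤ r / 50 := by
    have := h.norm_sub_le (by linarith)
    rw [Complex.norm_real, Real.norm_of_nonneg hr.le] at this
    nlinarith
  have re_close := abs_le.mp ((Complex.abs_re_le_norm (b - r)).trans norm_sub)
  have im_small := (Complex.abs_im_le_norm (b - r)).trans norm_sub
  rw [Complex.sub_re, Complex.ofReal_re] at re_close
  rw [Complex.sub_im, Complex.ofReal_im, sub_zero] at im_small
  exact ⟨by linarith, by linarith⟩

end LogClose

-- `arg ∘ F` is bounded, so Borel–Carathéodory applies to `-i (log F(x + ·) - log F(x))`.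
theorem logClose_of_re_pos {F : ℂ → ℂ} {x w : ℂ} {R M : ℝ} (hM : 2 ≤ M)
    (hF : DifferentiableOn ℂ F (Metric.ball x R)) (hre : ∀ z ∈ Metric.ball x R, 0 < (F z).re)
    (hR : 0 < R) (hw : ‖w‖ ≤ R / M) : LogClose (16 / M) (F x) (F (x + w)) := by
  have shift_mem : ∀ z ∈ Metric.ball (0 : ℂ) R, x + z ∈ Metric.ball x R := fun z hz => by
    simpa using hz
  have x_mem : x ∈ Metric.ball x R := Metric.mem_ball_self hR
  have F_ne_zero : ∀ z ∈ Metric.ball x R, F z ≠ 0 := fun z hz h0 => by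
    simpa [h0] using hre z hz
  have arg_bound : ∀ z ∈ Metric.ball x R, |(F z).arg| < 2 := fun z hz => by
    linarith [Complex.abs_arg_lt_pi_div_two_iff.mpr (Or.inl (hre z hz)), Real.pi_lt_four]
  let h : ℂ → ℂ := fun z => -Complex.I * (Complex.log (F (x + z)) - Complex.log (F x))
  have h_differentiable : DifferentiableOn ℂ h (Metric.ball 0 R) :=
    (((hF.comp (by fun_prop) shift_mem).clog fun z hz => Complex.mem_slitPlane_iff.mpr
      (Or.inl (hre _ (shift_mem z hz)))).sub_const _).const_mul _
  have h_re_le : Set.MapsTo h (Metric.ball 0 R) {z | z.re ≤ 4} := fun z hz => by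
    have at_z := abs_lt.mp (arg_bound _ (shift_mem z hz))
    have at_x := abs_lt.mp (arg_bound _ x_mem)
    simp only [Set.mem_ofPred_eq, h, Complex.mul_re, Complex.neg_re, Complex.neg_im, Complex.I_re,
      Complex.I_im, Complex.sub_im, Complex.log_im]
    linarith
  have w_mem : w ∈ Metric.ball (0 : ℂ) R := by
    simpa using hw.trans_lt (div_lt_self hR (by linarith))
  have h_w := Complex.borelCaratheodory_zero (by norm_num : (0 : ℝ) < 4) h_differentiable h_re_le hR
    w_mem (by simp [h])
  have bound : 2 * 4 * ‖w‖ / (R - ‖w‖) ≤ 16 / M := by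
    have M_pos : 0 < M := by linarith
    rw [div_le_div_iff₀ (by linarith [mem_ball_zero_iff.mp w_mem]) M_pos]
    rw [le_div_iff₀ M_pos] at hw
    nlinarith [norm_nonneg w]
  refine ⟨Complex.log (F (x + w)) - Complex.log (F x), ?_, ?_⟩
  · refine le_trans (le_of_eq ?_) (h_w.trans bound)
    simp [h]
  · rw [Complex.exp_sub, Complex.exp_log (F_ne_zero _ (shift_mem w w_mem)),
      Complex.exp_log (F_ne_zero _ x_mem), mul_div_cancel₀ _ (F_ne_zero _ x_mem)]

theorem logClose_of_re_pos_on_strip {F : ℂ → ℂ} {r M : ℝ} (hr : 0 < r) (hM : 2 ≤ M)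
    (hF : DifferentiableOn ℂ F (strip r)) (hre : ∀ z ∈ strip r, 0 < (F z).re) (x : ℝ) {w : ℂ}
    (hw : ‖w‖ ≤ r / M) : LogClose (16 / M) (F x) (F (x + w)) :=
  logClose_of_re_pos hM (hF.mono (ball_subset_strip x r))
    (fun z hz => hre z (ball_subset_strip x r hz)) hr hw

/-! ### Products along orbits -/

/-- The product of `u` over the first `n` points `x, x + ω, …` of the orbit of `x`. -/
def orbitProd {𝕜 R : Type*} [Semiring 𝕜] [CommMonoid R] (ω : 𝕜) (u : 𝕜 → R) (n : ℕ) (x : 𝕜) : R :=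
  ∏ i ∈ Finset.range n, u (x + i * ω)

section OrbitProd

variable {𝕜 R : Type*} [CommSemiring 𝕜] [CommMonoid R] (ω : 𝕜)

theorem orbitProd_zero (u : 𝕜 → R) (x : 𝕜) : orbitProd ω u 0 x = 1 := Finset.prod_range_zero _

theorem orbitProd_one (u : 𝕜 → R) (x : 𝕜) : orbitProd ω u 1 x = u x := by
  rw [orbitProd, Finset.prod_range_one, Nat.cast_zero, zero_mul, add_zero]

theorem orbitProd_succ (u : 𝕜 → R) (n : ℕ) (x : 𝕜) :
    orbitProd ω u (n + 1) x = orbitProd ω u n x * u (x + n * ω) := Finset.prod_range_succ _ _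

theorem orbitProd_add (u : 𝕜 → R) (m n : ℕ) (x : 𝕜) :
    orbitProd ω u (m + n) x = orbitProd ω u m x * orbitProd ω u n (x + m * ω) := by
  rw [orbitProd, Finset.prod_range_add]
  refine congrArg _ (Finset.prod_congr rfl fun i _ => congrArg u ?_)
  push_cast
  ring

variable {u : 𝕜 → ℝ}

theorem orbitProd_nonneg (h0 : ∀ x, 0 ≤ u x) (n : ℕ) (x : 𝕜) : 0 ≤ orbitProd ω u n x :=
  Finset.prod_nonneg fun _ _ => h0 _

theorem orbitProd_le_one (h0 : ∀ x, 0 ≤ u x) (h1 : ∀ x, u x ≤ 1) (n : ℕ) (x : 𝕜) :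
    orbitProd ω u n x ≤ 1 :=
  Finset.prod_le_one (fun _ _ => h0 _) fun _ _ => h1 _

theorem orbitProd_anti (h0 : ∀ x, 0 ≤ u x) (h1 : ∀ x, u x ≤ 1) {m n : ℕ} (h : m ≤ n) (x : 𝕜) :
    orbitProd ω u n x ≤ orbitProd ω u m x := by
  obtain ⟨k, rfl⟩ := Nat.exists_eq_add_of_le h
  rw [orbitProd_add]
  exact mul_le_of_le_one_right (orbitProd_nonneg ω h0 m x) (orbitProd_le_one ω h0 h1 k _)

theorem orbitProd_mul_le_pow (h0 : ∀ x, 0 ≤ u x) {T : ℕ} {ρ : ℝ}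
    (hT : ∀ x, orbitProd ω u T x ≤ ρ) (m : ℕ) (x : 𝕜) : orbitProd ω u (m * T) x ≤ ρ ^ m := by
  have hρ : 0 ≤ ρ := (orbitProd_nonneg ω h0 T x).trans (hT x)
  induction m with
  | zero => rw [zero_mul, orbitProd_zero, pow_zero]
  | succ m ih =>
    rw [Nat.succ_mul, orbitProd_add, pow_succ]
    exact mul_le_mul ih (hT _) (orbitProd_nonneg ω h0 T _) (pow_nonneg hρ m)

end OrbitProd

/-! ### Input conductances and currents on the real line -/

/-- `Y` is the input conductance of the one-sided ladder network on `x, x + ω, x + 2ω, …` whose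
edges have conductance `f x * f (x + ω)` and whose sites are grounded through `E * f x ^ 2`. -/
structure IsInputConductance (ω E : ℝ) (f Y : ℝ → ℝ) : Prop where
  weight_pos : ∀ x, 0 < f x
  coupling_pos : 0 < E
  pos : ∀ x, 0 < Y x
  eq : ∀ x, Y x = E * f x ^ 2 + f x * f (x + ω) * Y (x + ω) / (f x * f (x + ω) + Y (x + ω))

/-- The voltage at `x + ω` per unit voltage at `x` when only `x` is driven, for the network of
`IsInputConductance`. -/
noncomputable def transmission (ω : ℝ) (f Y : ℝ → ℝ) (x : ℝ) : ℝ :=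
  f x * f (x + ω) / (f x * f (x + ω) + Y (x + ω))

namespace IsInputConductance

variable {ω E : ℝ} {f Y : ℝ → ℝ}

theorem transmission_pos (h : IsInputConductance ω E f Y) (x : ℝ) :
    0 < transmission ω f Y x := by
  have edge_pos := mul_pos (h.weight_pos x) (h.weight_pos (x + ω))
  exact div_pos edge_pos (add_pos edge_pos (h.pos (x + ω)))

theorem transmission_le_one (h : IsInputConductance ω E f Y) (x : ℝ) :
    transmission ω f Y x ≤ 1 := by
  have edge_pos := mul_pos (h.weight_pos x) (h.weight_pos (x + ω))
  exact (div_le_one (add_pos edge_pos (h.pos (x + ω)))).mpr (by linarith [h.pos (x + ω)])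

theorem ground_pos (h : IsInputConductance ω E f Y) (x : ℝ) : 0 < E * f x ^ 2 :=
  mul_pos h.coupling_pos (pow_pos (h.weight_pos x) 2)

theorem eq_add_transmission_mul (h : IsInputConductance ω E f Y) (x : ℝ) :
    Y x = E * f x ^ 2 + transmission ω f Y x * Y (x + ω) := by
  rw [h.eq x, transmission]
  ring

theorem transmission_mul_pos (h : IsInputConductance ω E f Y) (x : ℝ) :
    0 < transmission ω f Y x * Y (x + ω) :=
  mul_pos (h.transmission_pos x) (h.pos _)

theorem transmission_mul_le_edge (h : IsInputConductance ω E f Y) (x : ℝ) :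
    transmission ω f Y x * Y (x + ω) ≤ f x * f (x + ω) := by
  have edge_pos := mul_pos (h.weight_pos x) (h.weight_pos (x + ω))
  have := h.pos (x + ω)
  rw [transmission, div_mul_eq_mul_div, div_le_iff₀ (by positivity)]
  nlinarith

theorem orbitProd_transmission_nonneg (h : IsInputConductance ω E f Y) (n : ℕ) (x : ℝ) :
    0 ≤ orbitProd ω (transmission ω f Y) n x :=
  orbitProd_nonneg ω (fun x => (h.transmission_pos x).le) n x

theorem orbitProd_transmission_le_one (h : IsInputConductance ω E f Y) (n : ℕ) (x : ℝ) :
    orbitProd ω (transmission ω f Y) n x ≤ 1 :=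
  orbitProd_le_one ω (fun x => (h.transmission_pos x).le) h.transmission_le_one n x

theorem orbitProd_transmission_mul_le_edge (h : IsInputConductance ω E f Y) (x : ℝ) {k : ℕ}
    (hk : 1 ≤ k) :
    orbitProd ω (transmission ω f Y) k x * Y (x + k * ω) ≤ f x * f (x + ω) := by
  induction k, hk using Nat.le_induction with
  | base => simpa [orbitProd_one] using h.transmission_mul_le_edge x
  | succ k _ ih =>
    have next : x + ((k + 1 : ℕ) : ℝ) * ω = x + k * ω + ω := by
      push_cast
      ring
    refine le_trans ?_ ih
    rw [orbitProd_succ, mul_assoc, next]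
    refine mul_le_mul_of_nonneg_left ?_ (h.orbitProd_transmission_nonneg k x)
    linarith [h.eq_add_transmission_mul (x + k * ω), h.ground_pos (x + k * ω)]

theorem orbitProd_transmission_mul_ground_le (h : IsInputConductance ω E f Y) (x : ℝ) {k : ℕ}
    (hk : 1 ≤ k) :
    orbitProd ω (transmission ω f Y) k x * (E * f (x + k * ω) ^ 2) ≤ f x * f (x + ω) := by
  refine le_trans ?_ (h.orbitProd_transmission_mul_le_edge x hk)
  refine mul_le_mul_of_nonneg_left ?_ (h.orbitProd_transmission_nonneg k x)
  linarith [h.eq_add_transmission_mul (x + k * ω), h.transmission_mul_pos (x + k * ω)]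

theorem ground_le (h : IsInputConductance ω E f Y) (hf : ∀ x, f x ≤ 1) (x : ℝ) :
    E * f x ^ 2 ≤ E :=
  mul_le_of_le_one_right h.coupling_pos.le (pow_le_one₀ (h.weight_pos x).le (hf x))

theorem le_mul_add (h : IsInputConductance ω E f Y) (hf : ∀ x, f x ≤ 1) (x : ℝ) (n : ℕ) :
    Y x ≤ n * E + Y (x + n * ω) := by
  induction n with
  | zero => simp
  | succ n ih =>
    have next : x + ((n + 1 : ℕ) : ℝ) * ω = x + n * ω + ω := by
      push_cast
      ring
    have transmitted := mul_le_of_le_one_left (h.pos (x + n * ω + ω)).le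
      (h.transmission_le_one (x + n * ω))
    rw [next]
    push_cast
    linarith [h.eq_add_transmission_mul (x + n * ω), h.ground_le hf (x + n * ω)]

end IsInputConductance

/-- `B` is the current fed into `x` by its neighbours `x + ω, x + 2ω, …` when the ground of every
site `y` of the network of `IsInputConductance` is held at voltage `g₀ y`. -/
structure IsInputCurrent (ω E : ℝ) (f Y g₀ B : ℝ → ℝ) : Prop where
  nonneg : ∀ x, 0 ≤ B x
  le : ∀ x, B x ≤ transmission ω f Y x * Y (x + ω)
  eq : ∀ x, B x = transmission ω f Y x * (E * f (x + ω) ^ 2 * g₀ (x + ω) + B (x + ω))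

namespace IsInputCurrent

variable {ω E : ℝ} {f Y g₀ B : ℝ → ℝ}

theorem le_one (h : IsInputCurrent ω E f Y g₀ B) (hY : IsInputConductance ω E f Y)
    (hf : ∀ x, f x ≤ 1) (x : ℝ) : B x ≤ 1 :=
  (h.le x).trans ((hY.transmission_mul_le_edge x).trans
    (mul_le_one₀ (hf x) (hY.weight_pos _).le (hf _)))

theorem le_mul_add_orbitProd_mul (h : IsInputCurrent ω E f Y g₀ B)
    (hY : IsInputConductance ω E f Y) (hf : ∀ x, f x ≤ 1) (hg₀ : ∀ x, 0 ≤ g₀ x) {x G : ℝ} (k : ℕ)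
    (hG : ∀ j : ℕ, 1 ≤ j → j ≤ k → g₀ (x + j * ω) ≤ G) :
    B x ≤ k * (E * G) + orbitProd ω (transmission ω f Y) k x * B (x + k * ω) := by
  induction k with
  | zero => simp [orbitProd_zero]
  | succ k ih =>
    have next : x + ((k + 1 : ℕ) : ℝ) * ω = x + k * ω + ω := by
      push_cast
      ring
    have source_le : E * f (x + k * ω + ω) ^ 2 * g₀ (x + k * ω + ω) ≤ E * G := by
      rw [← next]
      exact mul_le_mul (hY.ground_le hf _) (hG (k + 1) (by lia) le_rfl) (hg₀ _)
        hY.coupling_pos.le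
    have transmitted_source := mul_le_of_le_one_left
      (mul_nonneg (hY.ground_pos (x + k * ω + ω)).le (hg₀ (x + k * ω + ω)))
      (hY.orbitProd_transmission_le_one (k + 1) x)
    have split : orbitProd ω (transmission ω f Y) k x * B (x + k * ω) =
        orbitProd ω (transmission ω f Y) (k + 1) x *
          (E * f (x + k * ω + ω) ^ 2 * g₀ (x + k * ω + ω)) +
        orbitProd ω (transmission ω f Y) (k + 1) x * B (x + k * ω + ω) := by
      rw [h.eq (x + k * ω), orbitProd_succ]
      ring
    rw [next]
    push_cast
    linarith [ih fun j hj hjk => hG j hj (by lia)]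

theorem le_mul_add_orbitProd (h : IsInputCurrent ω E f Y g₀ B) (hY : IsInputConductance ω E f Y)
    (hf : ∀ x, f x ≤ 1) (hg₀ : ∀ x, 0 ≤ g₀ x) {x G : ℝ} (k : ℕ)
    (hG : ∀ j : ℕ, 1 ≤ j → j ≤ k → g₀ (x + j * ω) ≤ G) :
    B x ≤ k * (E * G) + orbitProd ω (transmission ω f Y) k x :=
  (h.le_mul_add_orbitProd_mul hY hf hg₀ k hG).trans (add_le_add_right
    (mul_le_of_le_one_right (hY.orbitProd_transmission_nonneg k x) (h.le_one hY hf _)) _)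

end IsInputCurrent

/-! ### The response of the two-sided network -/

/-- The conductance seen from `x` in the two-sided network, with input conductances `Yp` to the
right and `Ym` to the left. -/
noncomputable def totalConductance (ω E : ℝ) (f Yp Ym : ℝ → ℝ) (x : ℝ) : ℝ :=
  E * f x ^ 2 + transmission ω f Yp x * Yp (x + ω) + transmission (-ω) f Ym x * Ym (x + -ω)

/-- The current flowing into `x` at zero voltage in the two-sided network, with input currents `Bp`
from the right and `Bm` from the left. -/
def totalCurrent (E : ℝ) (f g₀ Bp Bm : ℝ → ℝ) (x : ℝ) : ℝ :=
  E * f x ^ 2 * g₀ x + Bp x + Bm x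

/-- `g` is the voltage of the two-sided network with edge conductances `f x * f (x + ω)` whose
sites are connected to voltages `g₀ x` through conductances `E * f x ^ 2`. -/
structure IsResponse (ω E : ℝ) (f g₀ g Yp Ym Bp Bm : ℝ → ℝ) : Prop where
  right_conductance : IsInputConductance ω E f Yp
  left_conductance : IsInputConductance (-ω) E f Ym
  right_current : IsInputCurrent ω E f Yp g₀ Bp
  left_current : IsInputCurrent (-ω) E f Ym g₀ Bm
  source_pos : ∀ x, 0 < g₀ x
  source_le_one : ∀ x, g₀ x ≤ 1
  eq : ∀ x, g x = totalCurrent E f g₀ Bp Bm x / totalConductance ω E f Yp Ym x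

-- Ohm's law on an edge `c` joining two half-networks with conductances `Yl`, `Yr` and
-- short-circuit currents `b`, `a`.
theorem edge_current_eq {c Yl Yr : ℝ} (a b : ℝ) (hc : 0 < c) (hl : 0 < Yl) (hr : 0 < Yr) :
    c * ((a + c / (c + Yl) * b) / (Yr + c / (c + Yl) * Yl) -
        (b + c / (c + Yr) * a) / (Yl + c / (c + Yr) * Yr)) =
      c / (c + Yr) * a -
        c / (c + Yr) * Yr * ((b + c / (c + Yr) * a) / (Yl + c / (c + Yr) * Yr)) := by
  have left_eq : (b + c / (c + Yr) * a) / (Yl + c / (c + Yr) * Yr) =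
      (b * (c + Yr) + c * a) / (c * Yl + Yl * Yr + c * Yr) := by
    field_simp
  have right_eq : (a + c / (c + Yl) * b) / (Yr + c / (c + Yl) * Yl) =
      (a * (c + Yl) + c * b) / (c * Yl + Yl * Yr + c * Yr) := by
    field_simp
    ring
  rw [left_eq, right_eq]
  field_simp
  ring

namespace IsResponse

variable {ω E : ℝ} {f g₀ g Yp Ym Bp Bm : ℝ → ℝ}

theorem weight_pos (h : IsResponse ω E f g₀ g Yp Ym Bp Bm) (x : ℝ) : 0 < f x :=
  h.right_conductance.weight_pos x

theorem ground_pos (h : IsResponse ω E f g₀ g Yp Ym Bp Bm) (x : ℝ) : 0 < E * f x ^ 2 :=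
  h.right_conductance.ground_pos x

theorem ground_le_totalConductance (h : IsResponse ω E f g₀ g Yp Ym Bp Bm) (x : ℝ) :
    E * f x ^ 2 ≤ totalConductance ω E f Yp Ym x := by
  unfold totalConductance
  linarith [h.right_conductance.transmission_mul_pos x, h.left_conductance.transmission_mul_pos x]

theorem totalConductance_pos (h : IsResponse ω E f g₀ g Yp Ym Bp Bm) (x : ℝ) :
    0 < totalConductance ω E f Yp Ym x :=
  (h.ground_pos x).trans_le (h.ground_le_totalConductance x)

theorem ground_mul_source_le_totalCurrent (h : IsResponse ω E f g₀ g Yp Ym Bp Bm) (x : ℝ) :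
    E * f x ^ 2 * g₀ x ≤ totalCurrent E f g₀ Bp Bm x := by
  unfold totalCurrent
  linarith [h.right_current.nonneg x, h.left_current.nonneg x]

theorem totalCurrent_pos (h : IsResponse ω E f g₀ g Yp Ym Bp Bm) (x : ℝ) :
    0 < totalCurrent E f g₀ Bp Bm x :=
  (mul_pos (h.ground_pos x) (h.source_pos x)).trans_le (h.ground_mul_source_le_totalCurrent x)

theorem totalCurrent_le_totalConductance (h : IsResponse ω E f g₀ g Yp Ym Bp Bm) (x : ℝ) :
    totalCurrent E f g₀ Bp Bm x ≤ totalConductance ω E f Yp Ym x := by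
  unfold totalCurrent totalConductance
  linarith [h.right_current.le x, h.left_current.le x,
    mul_le_of_le_one_right (h.ground_pos x).le (h.source_le_one x)]

theorem pos (h : IsResponse ω E f g₀ g Yp Ym Bp Bm) (x : ℝ) : 0 < g x := by
  rw [h.eq]
  exact div_pos (h.totalCurrent_pos x) (h.totalConductance_pos x)

theorem le_one (h : IsResponse ω E f g₀ g Yp Ym Bp Bm) (x : ℝ) : g x ≤ 1 := by
  rw [h.eq]
  exact (div_le_one (h.totalConductance_pos x)).mpr (h.totalCurrent_le_totalConductance x)

theorem symm (h : IsResponse ω E f g₀ g Yp Ym Bp Bm) :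
    IsResponse (-ω) E f g₀ g Ym Yp Bm Bp where
  right_conductance := h.left_conductance
  left_conductance := by rw [neg_neg]; exact h.right_conductance
  right_current := h.left_current
  left_current := by rw [neg_neg]; exact h.right_current
  source_pos := h.source_pos
  source_le_one := h.source_le_one
  eq x := by
    rw [h.eq, totalCurrent, totalCurrent, totalConductance, totalConductance, neg_neg]
    congr 1 <;> ring

theorem current_right (h : IsResponse ω E f g₀ g Yp Ym Bp Bm) (x : ℝ) :
    f x * f (x + ω) * (g (x + ω) - g x) =
      Bp x - transmission ω f Yp x * Yp (x + ω) * g x := by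
  have edge_pos := mul_pos (h.weight_pos x) (h.weight_pos (x + ω))
  have back : x + ω + -ω = x := by ring
  have transmission_back :
      transmission (-ω) f Ym (x + ω) = f x * f (x + ω) / (f x * f (x + ω) + Ym x) := by
    rw [transmission, back, mul_comm (f (x + ω))]
  have g_left : g x = (E * f x ^ 2 * g₀ x + Bm x + transmission ω f Yp x *
      (E * f (x + ω) ^ 2 * g₀ (x + ω) + Bp (x + ω))) /
      (Ym x + transmission ω f Yp x * Yp (x + ω)) := by
    rw [h.eq, totalCurrent, totalConductance, h.left_conductance.eq_add_transmission_mul x,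
      ← h.right_current.eq x]
    congr 1 <;> ring
  have g_right : g (x + ω) = (E * f (x + ω) ^ 2 * g₀ (x + ω) + Bp (x + ω) +
      transmission (-ω) f Ym (x + ω) * (E * f x ^ 2 * g₀ x + Bm x)) /
      (Yp (x + ω) + transmission (-ω) f Ym (x + ω) * Ym x) := by
    have left_current := h.left_current.eq (x + ω)
    rw [back] at left_current
    rw [h.eq, totalCurrent, totalConductance, back, left_current,
      h.right_conductance.eq_add_transmission_mul (x + ω)]
  rw [g_left, g_right, h.right_current.eq x, transmission_back, transmission]
  exact edge_current_eq _ _ edge_pos (h.left_conductance.pos x) (h.right_conductance.pos _)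

theorem kirchhoff (h : IsResponse ω E f g₀ g Yp Ym Bp Bm) (x : ℝ) :
    f (x + ω) * (g (x + ω) - g x) + f (x - ω) * (g (x - ω) - g x) = E * f x * (g x - g₀ x) := by
  have balance : totalCurrent E f g₀ Bp Bm x = totalConductance ω E f Yp Ym x * g x := by
    rw [h.eq, mul_div_cancel₀ _ (h.totalConductance_pos x).ne']
  rw [totalCurrent, totalConductance] at balance
  rw [sub_eq_add_neg x ω]
  refine mul_left_cancel₀ (h.weight_pos x).ne' ?_
  linarith [h.current_right x, h.symm.current_right x]

theorem groundPotential_eq (h : IsResponse ω E f g₀ g Yp Ym Bp Bm) (x : ℝ) :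
    groundPotential ω (fun y => f y * g y) x =
      groundPotential ω f x + E * (1 - g₀ x / g x) := by
  have := h.pos x
  have := h.weight_pos x
  unfold groundPotential
  field_simp
  linarith [h.kirchhoff x]

theorem source_div_le {A x : ℝ} (h : IsResponse ω E f g₀ g Yp Ym Bp Bm)
    (hp : Yp x ≤ A * (E * f x ^ 2)) (hm : Ym x ≤ A * (E * f x ^ 2)) : g₀ x / g x ≤ 2 * A := by
  have ground_pos := h.ground_pos x
  have source_pos := h.source_pos x
  have conductance_le : totalConductance ω E f Yp Ym x ≤ 2 * A * (E * f x ^ 2) := by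
    unfold totalConductance
    linarith [h.right_conductance.eq_add_transmission_mul x,
      h.left_conductance.eq_add_transmission_mul x]
  have A_pos : 0 ≤ A :=
    (pos_of_mul_pos_left ((h.right_conductance.pos x).trans_le hp) ground_pos.le).le
  rw [div_le_iff₀ (h.pos x), h.eq, ← mul_div_assoc, le_div_iff₀ (h.totalConductance_pos x)]
  calc g₀ x * totalConductance ω E f Yp Ym x ≤ g₀ x * (2 * A * (E * f x ^ 2)) := by gcongr
    _ = 2 * A * (E * f x ^ 2 * g₀ x) := by ring
    _ ≤ _ := by gcongr; exact h.ground_mul_source_le_totalCurrent x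

theorem le_totalCurrent_div_ground (h : IsResponse ω E f g₀ g Yp Ym Bp Bm) (x : ℝ) :
    g x ≤ totalCurrent E f g₀ Bp Bm x / (E * f x ^ 2) := by
  rw [h.eq]
  exact div_le_div_of_nonneg_left (h.totalCurrent_pos x).le (h.ground_pos x)
    (h.ground_le_totalConductance x)

theorem totalCurrent_le (h : IsResponse ω E f g₀ g Yp Ym Bp Bm) (hf : ∀ x, f x ≤ 1) {p G ρ : ℝ}
    (k : ℕ) (hG : ∀ j : ℤ, |j| ≤ k → g₀ (p + j * ω) ≤ G)
    (hp : orbitProd ω (transmission ω f Yp) k p ≤ ρ)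
    (hm : orbitProd (-ω) (transmission (-ω) f Ym) k p ≤ ρ) :
    totalCurrent E f g₀ Bp Bm p ≤ (2 * k + 1) * (E * G) + 2 * ρ := by
  have right := h.right_current.le_mul_add_orbitProd (x := p) (G := G) h.right_conductance hf
    (fun x => (h.source_pos x).le) k fun j _ hj => by
      simpa using hG j (by rwa [Nat.abs_cast, Nat.cast_le])
  have left := h.left_current.le_mul_add_orbitProd (x := p) (G := G) h.left_conductance hf
    (fun x => (h.source_pos x).le) k fun j _ hj => by
      simpa using hG (-j) (by rwa [abs_neg, Nat.abs_cast, Nat.cast_le])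
  have center : E * f p ^ 2 * g₀ p ≤ E * G :=
    mul_le_mul (h.right_conductance.ground_le hf p) (by simpa using hG 0 (by simp))
      (h.source_pos p).le h.right_conductance.coupling_pos.le
  unfold totalCurrent
  linarith

end IsResponse

/-! ### Admissible weights and their refinement -/

theorem mul_pow_le_pow_of_lt {a b : ℝ} {m n : ℕ} (ha : a ≤ b) (hb : 1 ≤ b) (hmn : m < n) :
    a * b ^ m ≤ b ^ n :=
  calc a * b ^ m ≤ b * b ^ m := by gcongr
    _ = b ^ (m + 1) := (pow_succ' b m).symm
    _ ≤ b ^ n := pow_le_pow_right₀ hb hmn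

theorem pow_le_exp_mul {a : ℝ} (ha : 0 ≤ a) (n : ℕ) : a ^ n ≤ exp (n * a) := by
  rw [exp_nat_mul]
  exact pow_le_pow_left₀ ha (by linarith [add_one_le_exp a]) n

/-- The bounds, at scale `s`, on a weight `f` and a coupling `E` that the construction propagates.
The last two say that a half-network attached to a point near `ℤ` is dominated by its first site,
and that a signal decays along `s ^ 7` consecutive sites. -/
structure IsAdmissible (ω Λ : ℝ) (s : ℕ) (E : ℝ) (f : ℝ → ℝ) : Prop where
  exp_neg_le_coupling : exp (-s) ≤ E
  coupling_le : E ≤ Λ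
  pos : ∀ x, 0 < f x
  le_one : ∀ x, f x ≤ 1
  periodic : Function.Periodic f 1
  inv_sq_le : ∀ x, NearInt (1 / (4 * (s : ℝ) ^ 3)) x → 1 / (s : ℝ) ^ 2 ≤ f x
  exp_neg_le : ∀ x, exp (-(s : ℝ) ^ 7) ≤ f x
  groundPotential_le : ∀ x, groundPotential ω f x + E + 1 / s ≤ Λ
  conductance_le : ∀ ω', (ω' = ω ∨ ω' = -ω) → ∀ Y, IsInputConductance ω' E f Y →
    ∀ x, NearInt (1 / (4 * (s : ℝ) ^ 3)) x → Y x ≤ (s : ℝ) ^ 6 * (E * f x ^ 2)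
  orbitProd_le_half : ∀ ω', (ω' = ω ∨ ω' = -ω) → ∀ Y, IsInputConductance ω' E f Y →
    ∀ x, orbitProd ω' (transmission ω' f Y) (s ^ 7) x ≤ 1 / 2

theorem groundPotential_neg (ω : ℝ) (f : ℝ → ℝ) : groundPotential (-ω) f = groundPotential ω f := by
  funext x
  rw [groundPotential, groundPotential, sub_neg_eq_add, ← sub_eq_add_neg, add_comm]

namespace IsAdmissible

variable {ω Λ E : ℝ} {s : ℕ} {f : ℝ → ℝ}

theorem coupling_pos (h : IsAdmissible ω Λ s E f) : 0 < E :=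
  (exp_pos _).trans_le h.exp_neg_le_coupling

theorem neg (h : IsAdmissible ω Λ s E f) : IsAdmissible (-ω) Λ s E f where
  exp_neg_le_coupling := h.exp_neg_le_coupling
  coupling_le := h.coupling_le
  pos := h.pos
  le_one := h.le_one
  periodic := h.periodic
  inv_sq_le := h.inv_sq_le
  exp_neg_le := h.exp_neg_le
  groundPotential_le := by
    rw [groundPotential_neg]
    exact h.groundPotential_le
  conductance_le ω' hω' := h.conductance_le ω' (by rwa [neg_neg, or_comm] at hω')
  orbitProd_le_half ω' hω' := h.orbitProd_le_half ω' (by rwa [neg_neg, or_comm] at hω')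

theorem orbitProd_le_exp (h : IsAdmissible ω Λ s E f) {Y : ℝ → ℝ}
    (hY : IsInputConductance ω E f Y) (x : ℝ) :
    orbitProd ω (transmission ω f Y) (4 * s ^ 15) x ≤ exp (-(2 * (s : ℝ) ^ 8)) := by
  have halving := orbitProd_mul_le_pow ω (fun x => (hY.transmission_pos x).le)
    (h.orbitProd_le_half ω (.inl rfl) Y hY) (4 * s ^ 8) x
  rw [show 4 * s ^ 8 * s ^ 7 = 4 * s ^ 15 by ring] at halving
  have half_le : (1 / 2 : ℝ) ≤ exp (-(1 / 2)) := by linarith [add_one_le_exp (-(1 / 2 : ℝ))]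
  calc orbitProd ω (transmission ω f Y) (4 * s ^ 15) x ≤ (1 / 2) ^ (4 * s ^ 8) := halving
    _ ≤ exp (-(1 / 2)) ^ (4 * s ^ 8) := by gcongr
    _ = _ := by
      rw [← exp_nat_mul]
      congr 1
      push_cast
      ring

end IsAdmissible

/-- The passage from an admissible weight `f` at scale `s` to the weight `f * g` at the scale
`S = s ^ 16`, where `g` is the response of the network of `f` to a source `g₀` concentrated
near `ℤ`. -/
structure IsRefinement (ω Λ c₀ : ℝ) (s S : ℕ) (E : ℝ) (f g₀ g : ℝ → ℝ) : Prop where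
  admissible : IsAdmissible ω Λ s E f
  large : 10 ^ 6 ≤ s
  scale_eq : S = s ^ 16
  diophantine_pos : 0 < c₀
  diophantine : IsBadlyApproximable c₀ ω
  diophantine_le : 20 / c₀ ≤ s
  one_le_bound : 1 ≤ Λ
  bound_le : Λ ≤ s
  response : ∃ Yp Ym Bp Bm, IsResponse ω E f g₀ g Yp Ym Bp Bm
  half_le_source : ∀ x, NearInt (1 / (4 * (S : ℝ) ^ 3)) x → 1 / 2 ≤ g₀ x
  source_le_exp : ∀ x, ¬NearInt (1 / (S : ℝ)) x → g₀ x ≤ exp (-(16 * (S : ℝ) ^ 8))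
  periodic : Function.Periodic g 1

namespace IsRefinement

variable {ω Λ c₀ E : ℝ} {s S : ℕ} {f g₀ g : ℝ → ℝ}

theorem neg (h : IsRefinement ω Λ c₀ s S E f g₀ g) : IsRefinement (-ω) Λ c₀ s S E f g₀ g where
  admissible := h.admissible.neg
  large := h.large
  scale_eq := h.scale_eq
  diophantine_pos := h.diophantine_pos
  diophantine := h.diophantine.neg
  diophantine_le := h.diophantine_le
  one_le_bound := h.one_le_bound
  bound_le := h.bound_le
  response :=
    let ⟨Yp, Ym, Bp, Bm, hr⟩ := h.response
    ⟨Ym, Yp, Bm, Bp, hr.symm⟩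
  half_le_source := h.half_le_source
  source_le_exp := h.source_le_exp
  periodic := h.periodic

theorem million_le (h : IsRefinement ω Λ c₀ s S E f g₀ g) : (10 ^ 6 : ℝ) ≤ s := by
  exact_mod_cast h.large

theorem one_le (h : IsRefinement ω Λ c₀ s S E f g₀ g) : (1 : ℝ) ≤ s := by
  linarith [h.million_le]

theorem scale_eq_pow (h : IsRefinement ω Λ c₀ s S E f g₀ g) : (S : ℝ) = (s : ℝ) ^ 16 := by
  exact_mod_cast h.scale_eq

theorem pow_le_scale (h : IsRefinement ω Λ c₀ s S E f g₀ g) {n : ℕ} (hn : n ≤ 16) :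
    (s : ℝ) ^ n ≤ S := by
  rw [h.scale_eq_pow]
  exact pow_le_pow_right₀ h.one_le hn

theorem mul_pow_le_scale (h : IsRefinement ω Λ c₀ s S E f g₀ g) {a : ℝ} {n : ℕ}
    (ha : a ≤ 10 ^ 6) (hn : n < 16) : a * (s : ℝ) ^ n ≤ S := by
  rw [h.scale_eq_pow]
  exact mul_pow_le_pow_of_lt (ha.trans h.million_le) h.one_le hn

theorem million_le_scale (h : IsRefinement ω Λ c₀ s S E f g₀ g) : (10 ^ 6 : ℝ) ≤ S :=
  h.million_le.trans (by simpa using h.pow_le_scale (n := 1) (by norm_num))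

theorem pos (h : IsRefinement ω Λ c₀ s S E f g₀ g) (x : ℝ) : 0 < g x :=
  let ⟨_, _, _, _, hr⟩ := h.response
  hr.pos x

theorem source_pos (h : IsRefinement ω Λ c₀ s S E f g₀ g) (x : ℝ) : 0 < g₀ x :=
  let ⟨_, _, _, _, hr⟩ := h.response
  hr.source_pos x

theorem refined_pos (h : IsRefinement ω Λ c₀ s S E f g₀ g) (x : ℝ) : 0 < f x * g x :=
  mul_pos (h.admissible.pos x) (h.pos x)

theorem refined_le (h : IsRefinement ω Λ c₀ s S E f g₀ g) (x : ℝ) : f x * g x ≤ g x :=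
  mul_le_of_le_one_left (h.pos x).le (h.admissible.le_one x)

theorem refined_le_one (h : IsRefinement ω Λ c₀ s S E f g₀ g) (x : ℝ) : f x * g x ≤ 1 :=
  let ⟨_, _, _, _, hr⟩ := h.response
  (h.refined_le x).trans (hr.le_one x)

theorem groundPotential_eq (h : IsRefinement ω Λ c₀ s S E f g₀ g) (x : ℝ) :
    groundPotential ω (fun y => f y * g y) x =
      groundPotential ω f x + E * (1 - g₀ x / g x) :=
  let ⟨_, _, _, _, hr⟩ := h.response
  hr.groundPotential_eq x

theorem coupling_mul_source_div_pos (h : IsRefinement ω Λ c₀ s S E f g₀ g) (x : ℝ) :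
    0 < E * (g₀ x / g x) :=
  mul_pos h.admissible.coupling_pos (div_pos (h.source_pos x) (h.pos x))

theorem source_div_le_of_nearInt (h : IsRefinement ω Λ c₀ s S E f g₀ g) {x : ℝ}
    (hx : NearInt (1 / (4 * (s : ℝ) ^ 3)) x) : g₀ x / g x ≤ 2 * (s : ℝ) ^ 6 :=
  let ⟨Yp, Ym, _, _, hr⟩ := h.response
  hr.source_div_le (h.admissible.conductance_le ω (.inl rfl) Yp hr.right_conductance x hx)
    (h.admissible.conductance_le (-ω) (.inr rfl) Ym hr.left_conductance x hx)

theorem inv_le_refined (h : IsRefinement ω Λ c₀ s S E f g₀ g) {x : ℝ}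
    (hx : NearInt (1 / (4 * (S : ℝ) ^ 3)) x) : 1 / (4 * (s : ℝ) ^ 8) ≤ f x * g x := by
  have s_pos : (0 : ℝ) < s := by linarith [h.one_le]
  have s_le : (s : ℝ) ≤ S := by simpa using h.pow_le_scale (n := 1) (by norm_num)
  have hx' : NearInt (1 / (4 * (s : ℝ) ^ 3)) x := hx.mono (by gcongr)
  have source_le := (div_le_iff₀ (h.pos x)).mp (h.source_div_le_of_nearInt hx')
  have response_ge : 1 / (4 * (s : ℝ) ^ 6) ≤ g x := by
    rw [div_le_iff₀ (by positivity)]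
    linarith [h.half_le_source x hx]
  calc 1 / (4 * (s : ℝ) ^ 8) = 1 / (s : ℝ) ^ 2 * (1 / (4 * (s : ℝ) ^ 6)) := by field_simp
    _ ≤ f x * g x :=
      mul_le_mul (h.admissible.inv_sq_le x hx') response_ge (by positivity)
        (h.admissible.pos x).le

theorem exists_nearInt (h : IsRefinement ω Λ c₀ s S E f g₀ g) (x : ℝ) :
    ∃ j : ℕ, (j : ℝ) ≤ 4 * s * (S : ℝ) ^ 6 ∧ NearInt (1 / (4 * (S : ℝ) ^ 3)) (x + j * ω) := by
  have one_le_S : (1 : ℝ) ≤ S := by linarith [h.million_le_scale]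
  have width_le : 1 / (4 * (S : ℝ) ^ 3) ≤ 1 := by
    rw [div_le_one (by positivity)]
    linarith [one_le_pow₀ (n := 3) one_le_S]
  obtain ⟨j, hj, near⟩ := h.diophantine.exists_nearInt_add_mul h.diophantine_pos
    (δ := 1 / (4 * (S : ℝ) ^ 3)) (by positivity) width_le x
  refine ⟨j, ?_, near⟩
  have c₀_pos := h.diophantine_pos
  calc (j : ℝ) ≤ 4 / c₀ / (1 / (4 * (S : ℝ) ^ 3)) ^ 2 := hj
    _ = 20 / c₀ * (64 / 20 * S ^ 6) := by field_simp; norm_num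
    _ ≤ s * (64 / 20 * S ^ 6) := by gcongr; exact h.diophantine_le
    _ ≤ 4 * s * S ^ 6 := by linarith [show (0 : ℝ) ≤ s * S ^ 6 by positivity]

theorem groundPotential_refined_le (h : IsRefinement ω Λ c₀ s S E f g₀ g) (x : ℝ) :
    groundPotential ω (fun y => f y * g y) x ≤ Λ := by
  have : (0 : ℝ) < 1 / s := one_div_pos.mpr (by linarith [h.one_le])
  rw [h.groundPotential_eq]
  linarith [h.admissible.groundPotential_le x, h.coupling_mul_source_div_pos x]

theorem nine_mul_add_le_scale_pow (h : IsRefinement ω Λ c₀ s S E f g₀ g) :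
    9 * s + 4 * (s : ℝ) ^ 2 * S ^ 6 ≤ (S : ℝ) ^ 7 := by
  have one_le_S6 : (1 : ℝ) ≤ (S : ℝ) ^ 6 := one_le_pow₀ (by linarith [h.million_le_scale])
  have scale_ge : 13 * (s : ℝ) ^ 2 ≤ S := h.mul_pow_le_scale (by norm_num) (by norm_num)
  have s_le : (s : ℝ) ≤ (s : ℝ) ^ 2 * S ^ 6 :=
    (le_self_pow₀ h.one_le (by norm_num)).trans (le_mul_of_one_le_right (by positivity) one_le_S6)
  calc 9 * s + 4 * (s : ℝ) ^ 2 * S ^ 6 ≤ 13 * (s : ℝ) ^ 2 * S ^ 6 := by linarith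
    _ ≤ S * (S : ℝ) ^ 6 := by gcongr
    _ = (S : ℝ) ^ 7 := by ring

theorem exp_neg_le_refined (h : IsRefinement ω Λ c₀ s S E f g₀ g) (x : ℝ) :
    exp (-(S : ℝ) ^ 7) ≤ f x * g x := by
  have one_le := h.one_le
  have refined_pos := h.refined_pos x
  obtain ⟨j, hj, near⟩ := h.exists_nearInt x
  have harnack := (isGroundState_groundPotential ω h.refined_pos).le_pow_mul
    h.groundPotential_refined_le x j
  have growth : Λ ^ j ≤ exp (4 * s ^ 2 * S ^ 6) := by
    have j_mul_le : j * (s : ℝ) ≤ 4 * s * S ^ 6 * s := by gcongr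
    calc Λ ^ j ≤ (s : ℝ) ^ j :=
          pow_le_pow_left₀ (by linarith [h.one_le_bound]) h.bound_le j
      _ ≤ exp (j * s) := pow_le_exp_mul (by linarith) j
      _ ≤ exp (4 * s ^ 2 * S ^ 6) := exp_le_exp.mpr (by linarith)
  have exp_neg_le : exp (-(9 * s)) ≤ 1 / (4 * (s : ℝ) ^ 8) := by
    rw [exp_neg, ← one_div]
    refine one_div_le_one_div_of_le (by positivity) ?_
    exact (mul_pow_le_pow_of_lt (n := 9) (by linarith [h.million_le]) one_le (by norm_num)).trans
      (by simpa using pow_le_exp_mul (a := (s : ℝ)) (by linarith) 9)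
  have lower : exp (-(9 * s)) ≤ exp (4 * s ^ 2 * S ^ 6) * (f x * g x) :=
    (exp_neg_le.trans (h.inv_le_refined near)).trans (harnack.trans (by gcongr))
  calc exp (-(S : ℝ) ^ 7) ≤ exp (-(9 * s) - 4 * s ^ 2 * S ^ 6) :=
        exp_le_exp.mpr (by linarith [h.nine_mul_add_le_scale_pow])
    _ ≤ f x * g x := by
      rw [exp_sub, div_le_iff₀ (exp_pos _)]
      linarith

theorem source_div_le_exp (h : IsRefinement ω Λ c₀ s S E f g₀ g) {x : ℝ}
    (hx : ¬NearInt (1 / (S : ℝ)) x) : g₀ x / g x ≤ exp (-(S : ℝ) ^ 8) := by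
  have one_le_S : (1 : ℝ) ≤ S := by linarith [h.million_le_scale]
  have S7_le : (S : ℝ) ^ 7 ≤ (S : ℝ) ^ 8 := pow_le_pow_right₀ one_le_S (by norm_num)
  rw [div_le_iff₀ (h.pos x)]
  calc g₀ x ≤ exp (-(16 * (S : ℝ) ^ 8)) := h.source_le_exp x hx
    _ ≤ exp (-(S : ℝ) ^ 8) * exp (-(S : ℝ) ^ 7) := by
      rw [← exp_add]
      exact exp_le_exp.mpr (by linarith [show (0 : ℝ) ≤ (S : ℝ) ^ 8 by positivity])
    _ ≤ exp (-(S : ℝ) ^ 8) * g x := by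
      gcongr
      exact (h.exp_neg_le_refined x).trans (h.refined_le x)

theorem coupling_mul_source_div_le_exp (h : IsRefinement ω Λ c₀ s S E f g₀ g) {x : ℝ}
    (hx : ¬NearInt (1 / (S : ℝ)) x) : E * (g₀ x / g x) ≤ exp (-(s : ℝ) ^ 8) := by
  have one_le_S : (1 : ℝ) ≤ S := by linarith [h.million_le_scale]
  have coupling_le : E ≤ exp s := by
    linarith [h.admissible.coupling_le, h.bound_le, add_one_le_exp (s : ℝ)]
  have exponent_le : (s : ℝ) + s ^ 8 ≤ (S : ℝ) ^ 8 :=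
    calc (s : ℝ) + s ^ 8 ≤ 2 * (s : ℝ) ^ 8 := by
          linarith [le_self_pow₀ (n := 8) h.one_le (by norm_num)]
      _ ≤ (S : ℝ) := h.mul_pow_le_scale (by norm_num) (by norm_num)
      _ ≤ (S : ℝ) ^ 8 := le_self_pow₀ one_le_S (by norm_num)
  calc E * (g₀ x / g x) ≤ exp s * exp (-(S : ℝ) ^ 8) :=
        mul_le_mul coupling_le (h.source_div_le_exp hx)
          (div_pos (h.source_pos x) (h.pos x)).le (exp_pos _).le
    _ ≤ exp (-(s : ℝ) ^ 8) := by
      rw [← exp_add]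
      exact exp_le_exp.mpr (by linarith)

theorem source_div_le (h : IsRefinement ω Λ c₀ s S E f g₀ g) (x : ℝ) :
    g₀ x / g x ≤ 2 * (s : ℝ) ^ 6 := by
  have s_pos : (0 : ℝ) < s := by linarith [h.one_le]
  by_cases hx : NearInt (1 / (S : ℝ)) x
  · exact h.source_div_le_of_nearInt (hx.mono (one_div_le_one_div_of_le (by positivity)
      (h.mul_pow_le_scale (by norm_num) (by norm_num))))
  · have : exp (-(S : ℝ) ^ 8) ≤ 1 := exp_le_one_iff.mpr (by simp)
    linarith [h.source_div_le_exp hx, one_le_pow₀ (n := 6) h.one_le]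

theorem not_nearInt_add_mul (h : IsRefinement ω Λ c₀ s S E f g₀ g) {y : ℝ}
    (hy : NearInt (1 / (4 * (S : ℝ) ^ 3)) y) {i : ℤ} (hi : i ≠ 0)
    (hi' : |(i : ℝ)| ≤ 10 * (s : ℝ) ^ 15) : ¬NearInt (1 / (S : ℝ)) (y + i * ω) := by
  refine h.diophantine.not_nearInt_add_mul hy hi ?_
  have c₀_pos := h.diophantine_pos
  have s_pos : (0 : ℝ) < s := by linarith [h.one_le]
  have one_le_S : (1 : ℝ) ≤ S := by linarith [h.million_le_scale]
  have : 0 < |(i : ℝ)| := abs_pos.mpr (by exact_mod_cast hi)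
  have width_lt : 1 / (4 * (S : ℝ) ^ 3) < 1 / S := by
    refine one_div_lt_one_div_of_lt (by linarith) ?_
    linarith [le_self_pow₀ (n := 3) one_le_S (by norm_num)]
  calc 1 / (4 * (S : ℝ) ^ 3) + 1 / S < 1 / S + 1 / S := by gcongr
    _ = 20 / s / (10 * (s : ℝ) ^ 15) := by rw [h.scale_eq_pow]; field_simp; norm_num
    _ ≤ c₀ / (10 * (s : ℝ) ^ 15) := by
      gcongr
      exact (div_le_comm₀ c₀_pos s_pos).mp h.diophantine_le
    _ ≤ c₀ / |(i : ℝ)| := by gcongr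

theorem exp_le_ground (h : IsRefinement ω Λ c₀ s S E f g₀ g) (x : ℝ) :
    exp (-(s + 2 * (s : ℝ) ^ 7)) ≤ E * f x ^ 2 :=
  calc exp (-(s + 2 * (s : ℝ) ^ 7)) = exp (-s) * exp (-(s : ℝ) ^ 7) ^ 2 := by
        rw [← exp_nat_mul, ← exp_add]
        congr 1
        push_cast
        ring
    _ ≤ E * f x ^ 2 := by
      have := h.admissible.coupling_pos
      gcongr
      exacts [h.admissible.exp_neg_le_coupling, h.admissible.exp_neg_le x]

theorem totalCurrent_valley_le (h : IsRefinement ω Λ c₀ s S E f g₀ g) {Yp Ym Bp Bm : ℝ → ℝ}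
    (hr : IsResponse ω E f g₀ g Yp Ym Bp Bm) {y : ℝ} (hy : NearInt (1 / (4 * (S : ℝ) ^ 3)) y) :
    totalCurrent E f g₀ Bp Bm (y + (5 * s ^ 15 : ℕ) * ω) ≤
      10 * (s : ℝ) ^ 16 * exp (-(2 * (s : ℝ) ^ 8)) := by
  have one_le := h.one_le
  have s_le : (s : ℝ) ≤ S := by simpa using h.pow_le_scale (n := 1) (by norm_num)
  have one_le_s15 : (1 : ℤ) ≤ (s : ℤ) ^ 15 := one_le_pow₀ (by exact_mod_cast one_le)
  have source_le (j : ℤ) (hj : |j| ≤ (4 * s ^ 15 : ℕ)) :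
      g₀ (y + (5 * s ^ 15 : ℕ) * ω + j * ω) ≤ exp (-(2 * (s : ℝ) ^ 8)) := by
    push_cast at hj
    obtain ⟨j_ge, j_le⟩ := abs_le.mp hj
    have i_le : |5 * (s : ℤ) ^ 15 + j| ≤ 10 * (s : ℤ) ^ 15 := abs_le.mpr ⟨by lia, by lia⟩
    have far := h.not_nearInt_add_mul hy (i := 5 * (s : ℤ) ^ 15 + j) (by lia)
      (by exact_mod_cast i_le)
    have exponent_le : (s : ℝ) ^ 8 ≤ (S : ℝ) ^ 8 := by gcongr
    calc g₀ (y + (5 * s ^ 15 : ℕ) * ω + j * ω) =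
          g₀ (y + (5 * (s : ℤ) ^ 15 + j : ℤ) * ω) := by push_cast; ring_nf
      _ ≤ exp (-(16 * (S : ℝ) ^ 8)) := h.source_le_exp _ far
      _ ≤ exp (-(2 * (s : ℝ) ^ 8)) :=
        exp_le_exp.mpr (by linarith [show (0 : ℝ) ≤ (s : ℝ) ^ 8 by positivity])
  have current_le := hr.totalCurrent_le h.admissible.le_one (4 * s ^ 15) source_le
    (h.admissible.orbitProd_le_exp hr.right_conductance _)
    (h.admissible.neg.orbitProd_le_exp hr.left_conductance _)
  have s_le_s16 : (s : ℝ) ≤ (s : ℝ) ^ 16 := le_self_pow₀ one_le (by norm_num)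
  have coupling_le : E ≤ s := h.admissible.coupling_le.trans h.bound_le
  calc _ ≤ _ := current_le
    _ = ((8 * (s : ℝ) ^ 15 + 1) * E + 2) * exp (-(2 * (s : ℝ) ^ 8)) := by push_cast; ring
    _ ≤ ((8 * (s : ℝ) ^ 15 + 1) * s + 2) * exp (-(2 * (s : ℝ) ^ 8)) := by gcongr
    _ = (8 * (s : ℝ) ^ 16 + s + 2) * exp (-(2 * (s : ℝ) ^ 8)) := by ring
    _ ≤ _ := by gcongr; linarith [h.million_le]

theorem valley_le (h : IsRefinement ω Λ c₀ s S E f g₀ g) {y : ℝ}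
    (hy : NearInt (1 / (4 * (S : ℝ) ^ 3)) y) :
    g (y + (5 * s ^ 15 : ℕ) * ω) ≤ exp (-(s : ℝ) ^ 8) / (2 * (S : ℝ) ^ 4) := by
  obtain ⟨Yp, Ym, Bp, Bm, hr⟩ := h.response
  have one_le := h.one_le
  set p := y + (5 * s ^ 15 : ℕ) * ω
  have prefactor_le : 10 * (s : ℝ) ^ 16 * (2 * (S : ℝ) ^ 4) ≤ exp (81 * s) :=
    calc 10 * (s : ℝ) ^ 16 * (2 * (S : ℝ) ^ 4) = 20 * (s : ℝ) ^ 80 := by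
          rw [h.scale_eq_pow]
          ring
      _ ≤ (s : ℝ) ^ 81 :=
        mul_pow_le_pow_of_lt (by linarith [h.million_le]) one_le (by norm_num)
      _ ≤ exp (81 * s) := by simpa using pow_le_exp_mul (a := (s : ℝ)) (by linarith) 81
  have exponent_le : 81 * s + (s + 2 * (s : ℝ) ^ 7) ≤ (s : ℝ) ^ 8 :=
    calc 81 * s + (s + 2 * (s : ℝ) ^ 7) ≤ 84 * (s : ℝ) ^ 7 := by
          linarith [le_self_pow₀ (n := 7) one_le (by norm_num)]
      _ ≤ (s : ℝ) ^ 8 := mul_pow_le_pow_of_lt (by linarith [h.million_le]) one_le (by norm_num)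
  rw [le_div_iff₀ (by rw [h.scale_eq_pow]; positivity)]
  calc g p * (2 * (S : ℝ) ^ 4)
      ≤ totalCurrent E f g₀ Bp Bm p / (E * f p ^ 2) * (2 * (S : ℝ) ^ 4) := by
        gcongr
        exact hr.le_totalCurrent_div_ground p
    _ ≤ 10 * (s : ℝ) ^ 16 * exp (-(2 * (s : ℝ) ^ 8)) / exp (-(s + 2 * (s : ℝ) ^ 7)) *
          (2 * (S : ℝ) ^ 4) := by
        gcongr
        exacts [h.totalCurrent_valley_le hr hy, h.exp_le_ground p]
    _ = 10 * (s : ℝ) ^ 16 * (2 * (S : ℝ) ^ 4) * exp (-(2 * (s : ℝ) ^ 8) + (s + 2 * s ^ 7)) := by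
        rw [exp_neg ((s : ℝ) + 2 * (s : ℝ) ^ 7), exp_add (-(2 * (s : ℝ) ^ 8)), div_inv_eq_mul]
        ring
    _ ≤ exp (81 * s) * exp (-(2 * (s : ℝ) ^ 8) + (s + 2 * s ^ 7)) := by gcongr
    _ ≤ exp (-(s : ℝ) ^ 8) := by
        rw [← exp_add]
        exact exp_le_exp.mpr (by linarith)

theorem le_refined_ground (h : IsRefinement ω Λ c₀ s S E f g₀ g) {y : ℝ}
    (hy : NearInt (1 / (4 * (S : ℝ) ^ 3)) y) :
    exp (-(s : ℝ) ^ 8) / (16 * S) ≤ exp (-(s : ℝ) ^ 8) * (f y * g y) ^ 2 := by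
  have s_pos : (0 : ℝ) < s := by linarith [h.one_le]
  calc exp (-(s : ℝ) ^ 8) / (16 * S) = exp (-(s : ℝ) ^ 8) * (1 / (4 * (s : ℝ) ^ 8)) ^ 2 := by
        rw [h.scale_eq_pow]
        field_simp
        norm_num
    _ ≤ exp (-(s : ℝ) ^ 8) * (f y * g y) ^ 2 := by
        gcongr
        exact h.inv_le_refined hy

theorem refined_mul_refined_le (h : IsRefinement ω Λ c₀ s S E f g₀ g) (x y : ℝ) :
    f x * g x * (f y * g y) ≤ g x :=
  (mul_le_of_le_one_right (h.refined_pos x).le (h.refined_le_one y)).trans (h.refined_le x)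

theorem refined_conductance_le (h : IsRefinement ω Λ c₀ s S E f g₀ g) {Y : ℝ → ℝ}
    (hY : IsInputConductance ω (exp (-(s : ℝ) ^ 8)) (fun x => f x * g x) Y) {y : ℝ}
    (hy : NearInt (1 / (4 * (S : ℝ) ^ 3)) y) :
    Y y ≤ (S : ℝ) ^ 6 * (exp (-(s : ℝ) ^ 8) * (f y * g y) ^ 2) := by
  have one_le_S : (1 : ℝ) ≤ S := by linarith [h.million_le_scale]
  have one_le_S4 : (1 : ℝ) ≤ (S : ℝ) ^ 4 := one_le_pow₀ one_le_S
  set p := y + (5 * s ^ 15 : ℕ) * ω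
  have valley : g p ≤ exp (-(s : ℝ) ^ 8) :=
    (h.valley_le hy).trans (div_le_self (exp_pos _).le (by linarith))
  have far_conductance : Y p ≤ 2 * exp (-(s : ℝ) ^ 8) := by
    linarith [hY.eq_add_transmission_mul p, hY.ground_le h.refined_le_one p,
      hY.transmission_mul_le_edge p, h.refined_mul_refined_le p (p + ω)]
  have count_le : ((5 * s ^ 15 : ℕ) : ℝ) ≤ 5 * S := by
    push_cast
    linarith [h.pow_le_scale (n := 15) (by norm_num)]
  have poly_le : 5 * S + 2 ≤ (S : ℝ) ^ 5 / 16 := by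
    have : 112 * (S : ℝ) ^ 1 ≤ (S : ℝ) ^ 5 :=
      mul_pow_le_pow_of_lt (by linarith [h.million_le_scale]) one_le_S (by norm_num)
    linarith
  calc Y y ≤ (5 * s ^ 15 : ℕ) * exp (-(s : ℝ) ^ 8) + Y p := hY.le_mul_add h.refined_le_one y _
    _ ≤ 5 * S * exp (-(s : ℝ) ^ 8) + 2 * exp (-(s : ℝ) ^ 8) := by gcongr
    _ = (5 * S + 2) * exp (-(s : ℝ) ^ 8) := by ring
    _ ≤ (S : ℝ) ^ 5 / 16 * exp (-(s : ℝ) ^ 8) := by gcongr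
    _ = (S : ℝ) ^ 6 * (exp (-(s : ℝ) ^ 8) / (16 * S)) := by field_simp
    _ ≤ _ := by gcongr; exact h.le_refined_ground hy

-- The signal has to cross a valley of `g` before it reaches the site `x + 5 s ^ 15 ω` near `ℤ`.
theorem refined_orbitProd_le_half_of_nearInt (h : IsRefinement ω Λ c₀ s S E f g₀ g) {Y : ℝ → ℝ}
    (hY : IsInputConductance ω (exp (-(s : ℝ) ^ 8)) (fun x => f x * g x) Y) {x : ℝ}
    (hx : NearInt (1 / (4 * (S : ℝ) ^ 3)) (x + (5 * s ^ 15 : ℕ) * ω)) :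
    orbitProd ω (transmission ω (fun x => f x * g x) Y) (5 * s ^ 15) x ≤ 1 / 2 := by
  have one_le_S : (1 : ℝ) ≤ S := by linarith [h.million_le_scale]
  have one_le_s15 : 1 ≤ s ^ 15 := Nat.one_le_pow _ _ (by linarith [h.large])
  have valley : g x ≤ exp (-(s : ℝ) ^ 8) / (2 * (S : ℝ) ^ 4) := by
    convert h.neg.valley_le hx using 2
    ring
  have cut := hY.orbitProd_transmission_mul_ground_le x (k := 5 * s ^ 15) (by lia)
  set P := orbitProd ω (transmission ω (fun x => f x * g x) Y) (5 * s ^ 15) x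
  have P_nonneg : 0 ≤ P := hY.orbitProd_transmission_nonneg _ _
  have P_mul_le : P * (exp (-(s : ℝ) ^ 8) / (16 * S)) ≤
      8 / (S : ℝ) ^ 3 * (exp (-(s : ℝ) ^ 8) / (16 * S)) :=
    calc P * (exp (-(s : ℝ) ^ 8) / (16 * S))
        ≤ P * (exp (-(s : ℝ) ^ 8) *
            (f (x + (5 * s ^ 15 : ℕ) * ω) * g (x + (5 * s ^ 15 : ℕ) * ω)) ^ 2) := by
          gcongr
          exact h.le_refined_ground hx
      _ ≤ g x := cut.trans (h.refined_mul_refined_le x (x + ω))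
      _ ≤ exp (-(s : ℝ) ^ 8) / (2 * (S : ℝ) ^ 4) := valley
      _ = _ := by field_simp; norm_num
  refine (le_of_mul_le_mul_right P_mul_le (by positivity)).trans ?_
  rw [div_le_iff₀ (by positivity)]
  linarith [le_self_pow₀ (n := 3) one_le_S (by norm_num), h.million_le_scale]

theorem refined_orbitProd_le_half (h : IsRefinement ω Λ c₀ s S E f g₀ g) {Y : ℝ → ℝ}
    (hY : IsInputConductance ω (exp (-(s : ℝ) ^ 8)) (fun x => f x * g x) Y) (x : ℝ) :
    orbitProd ω (transmission ω (fun x => f x * g x) Y) (S ^ 7) x ≤ 1 / 2 := by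
  obtain ⟨j, hj, near⟩ := h.exists_nearInt (x + (5 * s ^ 15 : ℕ) * ω)
  have length_le : j + 5 * s ^ 15 ≤ S ^ 7 := by
    have one_le_S6 : (1 : ℝ) ≤ (S : ℝ) ^ 6 := one_le_pow₀ (by linarith [h.million_le_scale])
    have s_le : (s : ℝ) ≤ (s : ℝ) ^ 15 := le_self_pow₀ h.one_le (by norm_num)
    have real_length_le : (j : ℝ) + 5 * (s : ℝ) ^ 15 ≤ (S : ℝ) ^ 7 :=
      calc (j : ℝ) + 5 * (s : ℝ) ^ 15
          ≤ 4 * (s : ℝ) ^ 15 * S ^ 6 + 5 * (s : ℝ) ^ 15 * S ^ 6 :=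
            add_le_add (hj.trans (by gcongr)) (le_mul_of_one_le_right (by positivity) one_le_S6)
        _ = 9 * (s : ℝ) ^ 15 * S ^ 6 := by ring
        _ ≤ S * (S : ℝ) ^ 6 := by
            gcongr
            exact h.mul_pow_le_scale (by norm_num) (by norm_num)
        _ = (S : ℝ) ^ 7 := by ring
    exact_mod_cast real_length_le
  have block_le := h.refined_orbitProd_le_half_of_nearInt hY (x := x + j * ω)
    (by rwa [add_right_comm])
  calc _ ≤ orbitProd ω (transmission ω (fun x => f x * g x) Y) (j + 5 * s ^ 15) x :=
        orbitProd_anti ω (fun x => (hY.transmission_pos x).le) hY.transmission_le_one length_le x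
    _ ≤ 1 * (1 / 2) := by
      rw [orbitProd_add]
      exact mul_le_mul (hY.orbitProd_transmission_le_one j x) block_le
        (hY.orbitProd_transmission_nonneg _ _) zero_le_one
    _ = 1 / 2 := one_mul _

theorem refined_groundPotential_le (h : IsRefinement ω Λ c₀ s S E f g₀ g) (x : ℝ) :
    groundPotential ω (fun y => f y * g y) x + exp (-(s : ℝ) ^ 8) + 1 / S ≤ Λ := by
  have s_pos : (0 : ℝ) < s := by linarith [h.one_le]
  have exp_le : exp (-(s : ℝ) ^ 8) ≤ 1 / (2 * s) := by
    rw [exp_neg, ← one_div]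
    refine one_div_le_one_div_of_le (by positivity) ?_
    have : 2 * (s : ℝ) ^ 1 ≤ (s : ℝ) ^ 8 :=
      mul_pow_le_pow_of_lt (by linarith [h.million_le]) h.one_le (by norm_num)
    linarith [add_one_le_exp ((s : ℝ) ^ 8)]
  have inv_scale_le : 1 / (S : ℝ) ≤ 1 / (2 * s) :=
    one_div_le_one_div_of_le (by positivity)
      (by simpa using h.mul_pow_le_scale (a := 2) (n := 1) (by norm_num) (by norm_num))
  have halves : 1 / (2 * (s : ℝ)) + 1 / (2 * s) = 1 / s := by field_simp; norm_num
  rw [h.groundPotential_eq]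
  linarith [h.admissible.groundPotential_le x, h.coupling_mul_source_div_pos x]

theorem isAdmissible (h : IsRefinement ω Λ c₀ s S E f g₀ g) :
    IsAdmissible ω Λ S (exp (-(s : ℝ) ^ 8)) (fun x => f x * g x) where
  exp_neg_le_coupling := exp_le_exp.mpr (neg_le_neg (h.pow_le_scale (by norm_num)))
  coupling_le := (exp_le_one_iff.mpr (by simp)).trans h.one_le_bound
  pos := h.refined_pos
  le_one := h.refined_le_one
  periodic := h.admissible.periodic.mul h.periodic
  inv_sq_le x hx := by
    have s_pos : (0 : ℝ) < s := by linarith [h.one_le]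
    refine le_trans (one_div_le_one_div_of_le (by positivity) ?_) (h.inv_le_refined hx)
    rw [h.scale_eq_pow, ← pow_mul]
    exact mul_pow_le_pow_of_lt (by linarith [h.million_le]) h.one_le (by norm_num)
  exp_neg_le := h.exp_neg_le_refined
  groundPotential_le := h.refined_groundPotential_le
  conductance_le := by
    rintro ω' (rfl | rfl) Y hY x hx
    exacts [h.refined_conductance_le hY hx, h.neg.refined_conductance_le hY hx]
  orbitProd_le_half := by
    rintro ω' (rfl | rfl) Y hY x
    exacts [h.refined_orbitProd_le_half hY x, h.neg.refined_orbitProd_le_half hY x]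

end IsRefinement

/-! ### Analytic ground states -/

/-- An admissible weight extended holomorphically to a strip of polynomially small width, with
values in a narrow cone. -/
structure IsAnalyticAdmissible (ω Λ : ℝ) (s : ℕ) (E : ℝ) (F : ℂ → ℂ) : Prop where
  admissible : IsAdmissible ω Λ s E (fun x : ℝ => (F x).re)
  periodic : Function.Periodic F 1
  differentiableOn : DifferentiableOn ℂ F (strip (1 / (s : ℝ) ^ 14))
  inCone : ∀ z ∈ strip (1 / (s : ℝ) ^ 14), InCone (1 / 10) (F z)
  real : ∀ x : ℝ, InCone 0 (F x)

/-- The holomorphic extension of the input conductance of the network with edges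
`F z * F (z + ω)` and grounds `E * F z ^ 2`. -/
noncomputable def analyticConductance (ω E : ℝ) (F : ℂ → ℂ) : ℂ → ℂ :=
  ladderConductance ω (fun z => F z * F (z + ω)) (fun z => E * F z ^ 2)

/-- The holomorphic extension of `transmission`. -/
noncomputable def analyticTransmission (ω E : ℝ) (F : ℂ → ℂ) (z : ℂ) : ℂ :=
  F z * F (z + ω) / (F z * F (z + ω) + analyticConductance ω E F (z + ω))

/-- The real input conductance underlying `analyticConductance`. -/
noncomputable def realConductance (ω E : ℝ) (F : ℂ → ℂ) (x : ℝ) : ℝ :=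
  (analyticConductance ω E F x).re

/-- The real transmission factor underlying `analyticTransmission`. -/
noncomputable def realTransmission (ω E : ℝ) (F : ℂ → ℂ) : ℝ → ℝ :=
  transmission ω (fun x : ℝ => (F x).re) (realConductance ω E F)

namespace IsAnalyticAdmissible

variable {ω Λ E : ℝ} {s : ℕ} {F : ℂ → ℂ} {z : ℂ}

theorem neg (h : IsAnalyticAdmissible ω Λ s E F) : IsAnalyticAdmissible (-ω) Λ s E F :=
  ⟨h.admissible.neg, h.periodic, h.differentiableOn, h.inCone, h.real⟩

theorem ofReal_re_eq (h : IsAnalyticAdmissible ω Λ s E F) (x : ℝ) : ((F x).re : ℂ) = F x :=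
  (h.real x).ofReal_re_eq

theorem norm_ofReal (h : IsAnalyticAdmissible ω Λ s E F) (x : ℝ) : ‖F x‖ = (F x).re := by
  rw [← h.ofReal_re_eq, Complex.norm_real, Complex.ofReal_re,
    Real.norm_of_nonneg (h.admissible.pos x).le]

theorem half_strip_subset : strip (1 / (s : ℝ) ^ 14 / 2) ⊆ strip (1 / (s : ℝ) ^ 14) :=
  strip_mono (half_le_self (by positivity))

theorem differentiableOn_half (h : IsAnalyticAdmissible ω Λ s E F) :
    DifferentiableOn ℂ F (strip (1 / (s : ℝ) ^ 14 / 2)) :=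
  h.differentiableOn.mono half_strip_subset

theorem logClose_re (h : IsAnalyticAdmissible ω Λ s E F) (hs : 0 < s)
    (hz : z ∈ strip (1 / (s : ℝ) ^ 14 / 2)) : LogClose 8 (F (z.re : ℝ)) (F z) := by
  have close := logClose_of_re_pos_on_strip (w := z.im * Complex.I) (by positivity) le_rfl
    h.differentiableOn (fun z hz => (h.inCone z hz).1) z.re
    (norm_im_mul_I_lt_of_mem_strip hz).le
  rw [Complex.re_add_im] at close
  exact close.mono (by norm_num)

theorem norm_le (h : IsAnalyticAdmissible ω Λ s E F) (hs : 0 < s)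
    (hz : z ∈ strip (1 / (s : ℝ) ^ 14 / 2)) : ‖F z‖ ≤ exp 8 := by
  refine (h.logClose_re hs hz).norm_le.trans ?_
  rw [h.norm_ofReal]
  exact mul_le_of_le_one_left (exp_pos 8).le (h.admissible.le_one z.re)

theorem le_norm (h : IsAnalyticAdmissible ω Λ s E F) (hs : 0 < s)
    (hz : z ∈ strip (1 / (s : ℝ) ^ 14 / 2)) : exp (-(s : ℝ) ^ 7) * exp (-8) ≤ ‖F z‖ := by
  have norm_re_le := (h.logClose_re hs hz).symm.norm_le
  rw [h.norm_ofReal] at norm_re_le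
  rw [exp_neg 8, ← div_eq_mul_inv, div_le_iff₀ (exp_pos 8)]
  exact (h.admissible.exp_neg_le z.re).trans norm_re_le

theorem edge_inCone (h : IsAnalyticAdmissible ω Λ s E F)
    (hz : z ∈ strip (1 / (s : ℝ) ^ 14 / 2)) : InCone (1 / 4) (F z * F (z + ω)) :=
  (h.inCone z (half_strip_subset hz)).mul
    (h.inCone _ (add_ofReal_mem_strip (half_strip_subset hz) ω)) (by norm_num) (by norm_num)

theorem ground_inCone (h : IsAnalyticAdmissible ω Λ s E F)
    (hz : z ∈ strip (1 / (s : ℝ) ^ 14 / 2)) : InCone (1 / 4) (E * F z ^ 2) := by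
  have cone := h.inCone z (half_strip_subset hz)
  rw [sq]
  exact (cone.mul cone (by norm_num) (by norm_num)).real_mul h.admissible.coupling_pos

theorem norm_ground (h : IsAnalyticAdmissible ω Λ s E F) (z : ℂ) :
    ‖(E : ℂ) * F z ^ 2‖ = E * ‖F z‖ ^ 2 := by
  rw [norm_mul, norm_pow, Complex.norm_real, Real.norm_of_nonneg h.admissible.coupling_pos.le]

theorem isLadderNetwork (h : IsAnalyticAdmissible ω Λ s E F) (hs : 0 < s) :
    IsLadderNetwork (1 / (s : ℝ) ^ 14 / 2) (exp 8 * exp 8) (E * exp 8 ^ 2)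
      (E * (exp (-(s : ℝ) ^ 7) * exp (-8)) ^ 2 / 2)
      (fun z => F z * F (z + ω)) (fun z => E * F z ^ 2) where
  width_pos := by positivity
  differentiableOn_edge := h.differentiableOn_half.mul
    (differentiableOn_strip_comp_add h.differentiableOn_half ω)
  differentiableOn_ground := (h.differentiableOn_half.pow 2).const_mul _
  periodic_edge z := by simp only [h.periodic z, add_right_comm z 1, h.periodic (z + ω)]
  periodic_ground z := by simp only [h.periodic z]
  edge_inCone _ hz := h.edge_inCone hz
  ground_inCone _ hz := h.ground_inCone hz
  edge_real x := by
    rw [← Complex.ofReal_add]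
    exact (h.real x).mul (h.real (x + ω)) (by norm_num) (by norm_num)
  ground_real x := by
    rw [sq]
    exact ((h.real x).mul (h.real x) (by norm_num) (by norm_num)).real_mul
      h.admissible.coupling_pos
  norm_edge_le z hz := by
    rw [norm_mul]
    exact mul_le_mul (h.norm_le hs hz) (h.norm_le hs (add_ofReal_mem_strip hz ω))
      (norm_nonneg _) (exp_pos _).le
  norm_ground_le z hz := by
    have := h.norm_le hs hz
    have := h.admissible.coupling_pos
    rw [h.norm_ground]
    gcongr
  ground_lower_pos := by
    have := h.admissible.coupling_pos
    positivity
  le_re_ground z hz := by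
    have norm_le_re := (h.ground_inCone hz).norm_le (by norm_num)
    have := h.admissible.coupling_pos
    have norm_ge : E * (exp (-(s : ℝ) ^ 7) * exp (-8)) ^ 2 ≤ E * ‖F z‖ ^ 2 := by
      gcongr
      exact h.le_norm hs hz
    rw [h.norm_ground] at norm_le_re
    linarith

theorem conductance_inCone (h : IsAnalyticAdmissible ω Λ s E F) (hs : 0 < s)
    (hz : z ∈ strip (1 / (s : ℝ) ^ 14 / 2)) :
    InCone (1 / 4) (analyticConductance ω E F (z + ω)) :=
  (h.isLadderNetwork hs).ladderConductance_inCone ω (add_ofReal_mem_strip hz ω)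

theorem ofReal_realConductance (h : IsAnalyticAdmissible ω Λ s E F) (hs : 0 < s) (x : ℝ) :
    (realConductance ω E F x : ℂ) = analyticConductance ω E F x :=
  ((h.isLadderNetwork hs).ladderConductance_real ω x).ofReal_re_eq

theorem isInputConductance (h : IsAnalyticAdmissible ω Λ s E F) (hs : 0 < s) :
    IsInputConductance ω E (fun x : ℝ => (F x).re) (realConductance ω E F) where
  weight_pos := h.admissible.pos
  coupling_pos := h.admissible.coupling_pos
  pos x := ((h.isLadderNetwork hs).ladderConductance_real ω x).1
  eq x := by
    have eq := (h.isLadderNetwork hs).ladderConductance_eq ω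
      (ofReal_mem_strip (h.isLadderNetwork hs).width_pos x)
    apply Complex.ofReal_injective
    push_cast
    rw [h.ofReal_realConductance hs, h.ofReal_realConductance hs, h.ofReal_re_eq,
      ← Complex.ofReal_add, h.ofReal_re_eq, Complex.ofReal_add]
    exact eq

theorem ofReal_realTransmission (h : IsAnalyticAdmissible ω Λ s E F) (hs : 0 < s) (x : ℝ) :
    (realTransmission ω E F x : ℂ) = analyticTransmission ω E F x := by
  rw [realTransmission, transmission, analyticTransmission]
  push_cast
  rw [h.ofReal_realConductance hs, h.ofReal_re_eq, ← Complex.ofReal_add, h.ofReal_re_eq]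

theorem periodic_analyticConductance (h : IsAnalyticAdmissible ω Λ s E F) (hs : 0 < s) :
    Function.Periodic (analyticConductance ω E F) 1 :=
  (h.isLadderNetwork hs).periodic_ladderConductance ω

theorem periodic_analyticTransmission (h : IsAnalyticAdmissible ω Λ s E F) (hs : 0 < s) :
    Function.Periodic (analyticTransmission ω E F) 1 := fun z => by
  rw [analyticTransmission, h.periodic, add_right_comm, h.periodic,
    h.periodic_analyticConductance hs, analyticTransmission]

theorem differentiableOn_analyticConductance_add (h : IsAnalyticAdmissible ω Λ s E F)
    (hs : 0 < s) :
    DifferentiableOn ℂ (fun z => analyticConductance ω E F (z + ω))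
      (strip (1 / (s : ℝ) ^ 14 / 2)) :=
  differentiableOn_strip_comp_add ((h.isLadderNetwork hs).differentiableOn_ladderConductance ω) ω

theorem differentiableOn_analyticTransmission (h : IsAnalyticAdmissible ω Λ s E F) (hs : 0 < s) :
    DifferentiableOn ℂ (analyticTransmission ω E F) (strip (1 / (s : ℝ) ^ 14 / 2)) :=
  (h.isLadderNetwork hs).differentiableOn_edge.div
    ((h.isLadderNetwork hs).differentiableOn_edge.add
      (h.differentiableOn_analyticConductance_add hs))
    fun _ hz => ((h.edge_inCone hz).add (h.conductance_inCone hs hz)).ne_zero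

theorem norm_analyticTransmission_le_one (h : IsAnalyticAdmissible ω Λ s E F) (hs : 0 < s)
    (hz : z ∈ strip (1 / (s : ℝ) ^ 14 / 2)) : ‖analyticTransmission ω E F z‖ ≤ 1 :=
  (h.edge_inCone hz).norm_div_add_le_one (h.conductance_inCone hs hz)

theorem analyticTransmission_inCone_one (h : IsAnalyticAdmissible ω Λ s E F) (hs : 0 < s)
    (hz : z ∈ strip (1 / (s : ℝ) ^ 14 / 2)) : InCone 1 (analyticTransmission ω E F z) :=
  (h.edge_inCone hz).div_add_inCone_one (h.conductance_inCone hs hz)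

theorem transmission_mul_conductance_inCone (h : IsAnalyticAdmissible ω Λ s E F) (hs : 0 < s)
    (hz : z ∈ strip (1 / (s : ℝ) ^ 14 / 2)) :
    InCone (1 / 4) (analyticTransmission ω E F z * analyticConductance ω E F (z + ω)) := by
  rw [analyticTransmission, div_mul_eq_mul_div]
  exact (h.edge_inCone hz).mul_div_add (h.conductance_inCone hs hz)

end IsAnalyticAdmissible

/-! ### The source -/

/-- The holomorphic source `exp (-S ^ 12 * sin (π z) ^ 4)`, of order one within `1 / S ^ 3` of the
integers and negligible at distance `1 / S` from them. -/
noncomputable def analyticSource (S : ℕ) (z : ℂ) : ℂ :=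
  Complex.exp (-((S : ℂ) ^ 12 * Complex.sin (π * z) ^ 4))

/-- The restriction of `analyticSource` to the real line. -/
noncomputable def realSource (S : ℕ) (x : ℝ) : ℝ := exp (-((S : ℝ) ^ 12 * sin (π * x) ^ 4))

section Source

variable {S : ℕ} {x : ℝ}

theorem ofReal_realSource (S : ℕ) (x : ℝ) : (realSource S x : ℂ) = analyticSource S x := by
  rw [realSource, analyticSource]
  push_cast
  rfl

theorem differentiable_analyticSource (S : ℕ) : Differentiable ℂ (analyticSource S) := by
  unfold analyticSource
  fun_prop

theorem periodic_analyticSource (S : ℕ) : Function.Periodic (analyticSource S) 1 := fun z => by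
  rw [analyticSource, mul_add, mul_one, Complex.sin_add_pi, Even.neg_pow (by decide),
    analyticSource]

theorem realSource_pos (S : ℕ) (x : ℝ) : 0 < realSource S x := exp_pos _

theorem realSource_le_one (S : ℕ) (x : ℝ) : realSource S x ≤ 1 :=
  exp_le_one_iff.mpr (by rw [neg_nonpos]; positivity)

theorem sin_pi_mul_pow_four_eq (x : ℝ) (p : ℤ) : sin (π * x) ^ 4 = |sin (π * (x - p))| ^ 4 := by
  rw [mul_sub, mul_comm π (p : ℝ), sin_sub_int_mul_pi, abs_mul, mul_pow, abs_zpow, abs_neg,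
    abs_one, one_zpow, one_pow, one_mul, Even.pow_abs (by decide)]

theorem half_le_realSource (hS : 0 < S) (hx : NearInt (1 / (4 * (S : ℝ) ^ 3)) x) :
    1 / 2 ≤ realSource S x := by
  obtain ⟨p, hp⟩ := hx
  have abs_sin_le : |sin (π * (x - p))| ≤ (4 / 5) / (S : ℝ) ^ 3 :=
    calc |sin (π * (x - p))| ≤ |π * (x - p)| := abs_sin_le_abs
      _ = π * |x - p| := by rw [abs_mul, abs_of_pos pi_pos]
      _ ≤ 3.2 * (1 / (4 * (S : ℝ) ^ 3)) := by
          have := pi_lt_d2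
          gcongr
          linarith
      _ = (4 / 5) / (S : ℝ) ^ 3 := by field_simp; norm_num
  have exponent_le : (S : ℝ) ^ 12 * sin (π * x) ^ 4 ≤ 1 / 2 :=
    calc (S : ℝ) ^ 12 * sin (π * x) ^ 4 = (S : ℝ) ^ 12 * |sin (π * (x - p))| ^ 4 := by
          rw [sin_pi_mul_pow_four_eq x p]
      _ ≤ (S : ℝ) ^ 12 * ((4 / 5) / (S : ℝ) ^ 3) ^ 4 := by gcongr
      _ = (4 / 5) ^ 4 := by field_simp
      _ ≤ 1 / 2 := by norm_num
  rw [realSource]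
  linarith [add_one_le_exp (-((S : ℝ) ^ 12 * sin (π * x) ^ 4))]

theorem realSource_le_exp (hS : 0 < S) (hx : ¬ NearInt (1 / (S : ℝ)) x) :
    realSource S x ≤ exp (-(16 * (S : ℝ) ^ 8)) := by
  have lt_abs : 1 / (S : ℝ) < |x - round x| :=
    lt_of_not_ge fun hle => hx ⟨round x, hle⟩
  have le_abs_sin : 2 / (S : ℝ) ≤ |sin (π * (x - round x))| := by
    have abs_eq : |π * (x - round x)| = π * |x - round x| := by rw [abs_mul, abs_of_pos pi_pos]
    have concave := mul_abs_le_abs_sin (x := π * (x - round x))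
      (by rw [abs_eq]; nlinarith [pi_pos, abs_sub_round x])
    calc 2 / (S : ℝ) = 2 * (1 / S) := by ring
      _ ≤ 2 * |x - round x| := by gcongr
      _ = 2 / π * |π * (x - round x)| := by rw [abs_eq]; field_simp
      _ ≤ |sin (π * (x - round x))| := concave
  refine exp_le_exp.mpr (neg_le_neg ?_)
  rw [sin_pi_mul_pow_four_eq x (round x)]
  calc 16 * (S : ℝ) ^ 8 = (S : ℝ) ^ 12 * (2 / S) ^ 4 := by field_simp; norm_num
    _ ≤ _ := by gcongr

theorem norm_sin_add_sub_le (p : ℝ) {u : ℂ} (hu : ‖u‖ ≤ 1) :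
    ‖Complex.sin (p + u) - Complex.sin p‖ ≤ 2 * ‖u‖ := by
  have sub_eq : Complex.sin (p + u) - Complex.sin p =
      (Complex.exp ((-p : ℝ) * Complex.I) * (Complex.exp (-u * Complex.I) - 1) -
        Complex.exp (p * Complex.I) * (Complex.exp (u * Complex.I) - 1)) * Complex.I / 2 := by
    rw [Complex.sin, Complex.sin, mul_sub, mul_sub, ← Complex.exp_add, ← Complex.exp_add]
    push_cast
    ring_nf
  have exp_pos_sub : ‖Complex.exp (u * Complex.I) - 1‖ ≤ 2 * ‖u‖ := by
    simpa using Complex.norm_exp_sub_one_le (x := u * Complex.I) (by simpa using hu)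
  have exp_neg_sub : ‖Complex.exp (-u * Complex.I) - 1‖ ≤ 2 * ‖u‖ := by
    simpa using Complex.norm_exp_sub_one_le (x := -u * Complex.I) (by simpa using hu)
  have triangle := norm_sub_le
    (Complex.exp ((-p : ℝ) * Complex.I) * (Complex.exp (-u * Complex.I) - 1))
    (Complex.exp (p * Complex.I) * (Complex.exp (u * Complex.I) - 1))
  rw [norm_mul, norm_mul, Complex.norm_exp_ofReal_mul_I, Complex.norm_exp_ofReal_mul_I,
    one_mul, one_mul] at triangle
  rw [sub_eq, norm_div, norm_mul, Complex.norm_I, Complex.norm_ofNat, mul_one]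
  linarith

theorem norm_pow_four_sub_pow_four_le {a b : ℂ} (ha : ‖a‖ ≤ 2) (hb : ‖b‖ ≤ 1) :
    ‖a ^ 4 - b ^ 4‖ ≤ 15 * ‖a - b‖ :=
  calc ‖a ^ 4 - b ^ 4‖ = ‖a ^ 3 + a ^ 2 * b + a * b ^ 2 + b ^ 3‖ * ‖a - b‖ := by
        rw [← norm_mul]
        ring_nf
    _ ≤ (‖a ^ 3‖ + ‖a ^ 2 * b‖ + ‖a * b ^ 2‖ + ‖b ^ 3‖) * ‖a - b‖ := by
        gcongr
        exact norm_add₄_le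
    _ = (‖a‖ ^ 3 + ‖a‖ ^ 2 * ‖b‖ + ‖a‖ * ‖b‖ ^ 2 + ‖b‖ ^ 3) * ‖a - b‖ := by
        simp only [norm_mul, norm_pow]
    _ ≤ (2 ^ 3 + 2 ^ 2 * 1 + 2 * 1 ^ 2 + 1 ^ 3) * ‖a - b‖ := by gcongr
    _ = 15 * ‖a - b‖ := by norm_num

theorem logClose_analyticSource (hS : (10 : ℝ) ^ 6 ≤ S) (x : ℝ) {w : ℂ}
    (hw : ‖w‖ ≤ 1 / (S : ℝ) ^ 14) :
    LogClose (120 / (S : ℝ) ^ 2) (analyticSource S x) (analyticSource S (x + w)) := by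
  set a := Complex.sin (π * (x + w))
  set b := Complex.sin (π * x)
  have width_le : 1 / (S : ℝ) ^ 14 ≤ 1 / 10 ^ 6 :=
    one_div_le_one_div_of_le (by norm_num)
      (hS.trans (le_self_pow₀ (by linarith) (by norm_num)))
  have norm_pi_mul_le : ‖(π : ℂ) * w‖ ≤ 4 * ‖w‖ := by
    rw [norm_mul, Complex.norm_real, Real.norm_of_nonneg pi_pos.le]
    gcongr
    exact pi_lt_four.le
  have norm_sub_le : ‖a - b‖ ≤ 8 * ‖w‖ := by
    have := norm_sin_add_sub_le (π * x) (u := π * w) (by linarith)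
    push_cast at this
    rw [← mul_add] at this
    exact this.trans (by linarith)
  have norm_b_le : ‖b‖ ≤ 1 := by
    rw [show b = (sin (π * x) : ℝ) by push_cast; rfl, Complex.norm_real]
    exact abs_sin_le_one _
  have norm_a_le : ‖a‖ ≤ 2 := by linarith [norm_le_norm_add_norm_sub b a, norm_sub_rev b a]
  refine ⟨-((S : ℂ) ^ 12 * (a ^ 4 - b ^ 4)), ?_, ?_⟩
  · rw [norm_neg, norm_mul, norm_pow, Complex.norm_natCast]
    calc (S : ℝ) ^ 12 * ‖a ^ 4 - b ^ 4‖ ≤ (S : ℝ) ^ 12 * (15 * (8 * (1 / (S : ℝ) ^ 14))) := by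
          gcongr
          exact (norm_pow_four_sub_pow_four_le norm_a_le norm_b_le).trans (by linarith)
      _ = 120 / (S : ℝ) ^ 2 := by field_simp; norm_num
  · rw [analyticSource, analyticSource, ← Complex.exp_add]
    congr 1
    ring

end Source

/-! ### Current series -/

theorem orbitProd_ofReal_add (ω : ℝ) (ζ : ℂ → ℂ) (n : ℕ) (x : ℝ) (w : ℂ) :
    orbitProd (ω : ℂ) ζ n (x + w) = orbitProd ω (fun y : ℝ => ζ (y + w)) n x := by
  refine Finset.prod_congr rfl fun i _ => congrArg ζ ?_
  push_cast
  ring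

/-- The contribution of the site `z + (n + 1) * ω`, injecting the current `k`, to the current
reaching `z` through edges with transmission factor `ζ`. -/
def currentTerm {𝕜 : Type*} [CommSemiring 𝕜] (ω : 𝕜) (ζ k : 𝕜 → 𝕜) (n : ℕ) (z : 𝕜) : 𝕜 :=
  orbitProd ω ζ (n + 1) z * k (z + (n + 1 : ℕ) * ω)

/-- The current reaching `z` from all the sites `z + ω, z + 2ω, …`. -/
noncomputable def currentSeries {𝕜 : Type*} [RCLike 𝕜] (ω : 𝕜) (ζ k : 𝕜 → 𝕜) (z : 𝕜) : 𝕜 :=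
  ∑' n, currentTerm ω ζ k n z

section ExpSums

variable {b : ℝ}

theorem exp_neg_succ_div_eq (b : ℝ) (n : ℕ) :
    exp (-((n + 1 : ℕ) / b)) = exp (-(1 / b)) * exp (-(1 / b)) ^ n := by
  rw [← pow_succ', ← exp_nat_mul]
  ring_nf

theorem exp_neg_one_div_lt_one (hb : 0 < b) : exp (-(1 / b)) < 1 :=
  exp_lt_one_iff.mpr (neg_lt_zero.mpr (by positivity))

theorem summable_exp_neg_succ_div (hb : 0 < b) :
    Summable fun n : ℕ => exp (-((n + 1 : ℕ) / b)) := by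
  simp only [exp_neg_succ_div_eq]
  exact (summable_geometric_of_lt_one (exp_pos _).le (exp_neg_one_div_lt_one hb)).mul_left _

theorem tsum_exp_neg_succ_div_le (hb : 0 < b) : ∑' n : ℕ, exp (-((n + 1 : ℕ) / b)) ≤ b := by
  have lt_one := exp_neg_one_div_lt_one hb
  have mul_le : exp (-(1 / b)) * (1 / b + 1) ≤ 1 := by
    rw [exp_neg, inv_mul_le_iff₀ (exp_pos _), mul_one]
    exact add_one_le_exp (1 / b)
  simp only [exp_neg_succ_div_eq]
  rw [tsum_mul_left, tsum_geometric_of_lt_one (exp_pos _).le lt_one, ← div_eq_mul_inv,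
    div_le_iff₀ (by linarith)]
  have expand : b * (exp (-(1 / b)) * (1 / b + 1)) = exp (-(1 / b)) + b * exp (-(1 / b)) := by
    field_simp
  nlinarith

end ExpSums

/-- Holomorphic transmission factors `ζ` and injected currents `k`, extending real ones `Z` and
`K`: products of `T` successive factors contract, `Y` dominates the injected currents, and `ζ`, `k`
are logarithmically `ε₀`- and `ε₁`-close to their values on the real line. -/
structure IsCurrentData (ω r : ℝ) (ζ k : ℂ → ℂ) (Z K Y : ℝ → ℝ) (T : ℕ) (A ε₀ ε₁ : ℝ) :
    Prop where
  width_pos : 0 < r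
  differentiableOn_transmission : DifferentiableOn ℂ ζ (strip r)
  differentiableOn_injection : DifferentiableOn ℂ k (strip r)
  periodic_transmission : Function.Periodic ζ 1
  periodic_injection : Function.Periodic k 1
  norm_transmission_le_one : ∀ z ∈ strip r, ‖ζ z‖ ≤ 1
  ofReal_transmission : ∀ x : ℝ, (Z x : ℂ) = ζ x
  ofReal_injection : ∀ x : ℝ, (K x : ℂ) = k x
  transmission_pos : ∀ x, 0 < Z x
  injection_pos : ∀ x, 0 < K x
  injection_le : ∀ x, K x ≤ A
  logClose_transmission : ∀ (x : ℝ) (w : ℂ), ‖w‖ < r → LogClose ε₀ (ζ x) (ζ (x + w))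
  logClose_injection : ∀ (x : ℝ) (w : ℂ), ‖w‖ < r → LogClose ε₁ (k x) (k (x + w))
  block_pos : 0 < T
  block_mul_le : T * ε₀ ≤ 1 / 8
  injection_close_le : ε₁ ≤ 1 / 2
  orbitProd_le_half : ∀ x, orbitProd ω Z T x ≤ 1 / 2
  majorant_nonneg : ∀ x, 0 ≤ Y x
  majorant_step : ∀ x, K x + Z x * Y (x + ω) ≤ Y x

namespace IsCurrentData

variable {ω r : ℝ} {ζ k : ℂ → ℂ} {Z K Y : ℝ → ℝ} {T : ℕ} {A ε₀ ε₁ : ℝ} {w : ℂ}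

theorem add_mem_strip (x : ℝ) (hw : ‖w‖ < r) : (x + w : ℂ) ∈ strip r := by
  change |(x + w : ℂ).im| < r
  rw [Complex.add_im, Complex.ofReal_im, zero_add]
  exact (Complex.abs_im_le_norm w).trans_lt hw

theorem bound_pos (h : IsCurrentData ω r ζ k Z K Y T A ε₀ ε₁) : 0 < A :=
  (h.injection_pos 0).trans_le (h.injection_le 0)

theorem orbitProd_nonneg (h : IsCurrentData ω r ζ k Z K Y T A ε₀ ε₁) (n : ℕ) (x : ℝ) :
    0 ≤ orbitProd ω Z n x :=
  _root_.orbitProd_nonneg ω (fun x => (h.transmission_pos x).le) n x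

theorem ofReal_orbitProd (h : IsCurrentData ω r ζ k Z K Y T A ε₀ ε₁) (n : ℕ) (x : ℝ) :
    ((orbitProd ω Z n x : ℝ) : ℂ) = orbitProd (ω : ℂ) ζ n x := by
  rw [orbitProd, orbitProd, Complex.ofReal_prod]
  refine Finset.prod_congr rfl fun i _ => ?_
  rw [h.ofReal_transmission]
  push_cast
  rfl

theorem ofReal_currentTerm (h : IsCurrentData ω r ζ k Z K Y T A ε₀ ε₁) (n : ℕ) (x : ℝ) :
    ((currentTerm ω Z K n x : ℝ) : ℂ) = currentTerm (ω : ℂ) ζ k n x := by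
  rw [currentTerm, currentTerm, Complex.ofReal_mul, h.ofReal_orbitProd, h.ofReal_injection]
  push_cast
  rfl

theorem logClose_orbitProd (h : IsCurrentData ω r ζ k Z K Y T A ε₀ ε₁) (x : ℝ) (hw : ‖w‖ < r)
    (n : ℕ) : LogClose (n * ε₀) (orbitProd (ω : ℂ) ζ n x) (orbitProd (ω : ℂ) ζ n (x + w)) := by
  have base_eq := orbitProd_ofReal_add ω ζ n x 0
  simp only [add_zero] at base_eq
  rw [orbitProd_ofReal_add, base_eq]
  exact LogClose.prod_range (fun i => h.logClose_transmission (x + i * ω) w hw) n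

theorem orbitProd_norm_le (h : IsCurrentData ω r ζ k Z K Y T A ε₀ ε₁) (x : ℝ) (hw : ‖w‖ < r) :
    orbitProd ω (fun y : ℝ => ‖ζ (y + w)‖) T x ≤ 3 / 4 := by
  have close := (h.logClose_orbitProd x hw T).norm_le
  rw [← h.ofReal_orbitProd, Complex.norm_real, Real.norm_of_nonneg (h.orbitProd_nonneg T x),
    orbitProd_ofReal_add, orbitProd, norm_prod] at close
  have exp_le : exp (T * ε₀) ≤ 3 / 2 :=
    (exp_le_exp.mpr h.block_mul_le).trans
      ((exp_bound_div_one_sub_of_interval (by norm_num) (by norm_num)).trans (by norm_num))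
  calc _ ≤ _ := close
    _ ≤ 1 / 2 * (3 / 2) := by
        gcongr
        exact h.orbitProd_le_half x
    _ = 3 / 4 := by norm_num

theorem three_quarters_pow_div_le (n : ℕ) (hT : 0 < T) :
    (3 / 4 : ℝ) ^ (n / T) ≤ 2 * exp (-(n / (4 * T))) := by
  have three_quarters_le : (3 / 4 : ℝ) ≤ exp (-(1 / 4)) := by
    linarith [add_one_le_exp (-(1 / 4 : ℝ))]
  have exp_quarter_le : exp (1 / 4) ≤ 2 :=
    (exp_bound_div_one_sub_of_interval (by norm_num) (by norm_num)).trans (by norm_num)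
  have div_le : (n : ℝ) / (4 * T) ≤ ((n / T : ℕ) + 1) / 4 := by
    have n_le : (n : ℝ) ≤ (n / T * T + T : ℕ) := by exact_mod_cast (Nat.lt_div_mul_add hT).le
    push_cast at n_le
    rw [div_le_div_iff₀ (by positivity) (by norm_num)]
    linarith
  calc (3 / 4 : ℝ) ^ (n / T) ≤ exp (-(1 / 4)) ^ (n / T) := by gcongr
    _ = exp ((n / T : ℕ) * -(1 / 4)) := by rw [← exp_nat_mul]
    _ ≤ exp (1 / 4 + -(n / (4 * T))) := exp_le_exp.mpr (by linarith)
    _ = exp (1 / 4) * exp (-(n / (4 * T))) := exp_add _ _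
    _ ≤ 2 * exp (-(n / (4 * T))) := by gcongr

theorem norm_orbitProd_le (h : IsCurrentData ω r ζ k Z K Y T A ε₀ ε₁) (x : ℝ) (hw : ‖w‖ < r)
    (n : ℕ) : ‖orbitProd (ω : ℂ) ζ n (x + w)‖ ≤ 2 * exp (-(n / (4 * T))) := by
  have norm_le_one (y : ℝ) : ‖ζ (y + w)‖ ≤ 1 :=
    h.norm_transmission_le_one _ (add_mem_strip y hw)
  calc ‖orbitProd (ω : ℂ) ζ n (x + w)‖ = orbitProd ω (fun y : ℝ => ‖ζ (y + w)‖) n x := by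
        rw [orbitProd_ofReal_add, orbitProd, norm_prod, orbitProd]
    _ ≤ orbitProd ω (fun y : ℝ => ‖ζ (y + w)‖) (n / T * T) x :=
        orbitProd_anti ω (fun _ => norm_nonneg _) norm_le_one (Nat.div_mul_le_self n T) x
    _ ≤ (3 / 4) ^ (n / T) :=
        orbitProd_mul_le_pow ω (fun _ => norm_nonneg _) (fun y => h.orbitProd_norm_le y hw) _ x
    _ ≤ 2 * exp (-(n / (4 * T))) := three_quarters_pow_div_le n h.block_pos

theorem norm_injection_le (h : IsCurrentData ω r ζ k Z K Y T A ε₀ ε₁) (x : ℝ) (hw : ‖w‖ < r) :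
    ‖k (x + w)‖ ≤ 2 * A := by
  have close := (h.logClose_injection x w hw).norm_le
  rw [← h.ofReal_injection, Complex.norm_real, Real.norm_of_nonneg (h.injection_pos x).le] at close
  have exp_le : exp ε₁ ≤ 2 :=
    (exp_le_exp.mpr h.injection_close_le).trans
      ((exp_bound_div_one_sub_of_interval (by norm_num) (by norm_num)).trans (by norm_num))
  calc ‖k (x + w)‖ ≤ K x * exp ε₁ := close
    _ ≤ A * 2 := mul_le_mul (h.injection_le x) exp_le (exp_pos _).le h.bound_pos.le
    _ = 2 * A := mul_comm _ _

theorem norm_currentTerm_le (h : IsCurrentData ω r ζ k Z K Y T A ε₀ ε₁) (x : ℝ) (hw : ‖w‖ < r)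
    (n : ℕ) :
    ‖currentTerm (ω : ℂ) ζ k n (x + w)‖ ≤ 4 * A * exp (-((n + 1 : ℕ) / (4 * T))) := by
  have injection_le := h.norm_injection_le (x + (n + 1 : ℕ) * ω) hw
  have shift : (((x + (n + 1 : ℕ) * ω : ℝ) : ℂ) + w) = x + w + (n + 1 : ℕ) * ω := by
    push_cast
    ring
  rw [shift] at injection_le
  rw [currentTerm, norm_mul]
  calc _ ≤ 2 * exp (-((n + 1 : ℕ) / (4 * T))) * (2 * A) := by
        gcongr
        exact h.norm_orbitProd_le x hw (n + 1)
    _ = 4 * A * exp (-((n + 1 : ℕ) / (4 * T))) := by ring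

theorem summable_majorant (h : IsCurrentData ω r ζ k Z K Y T A ε₀ ε₁) :
    Summable fun n : ℕ => 4 * A * exp (-((n + 1 : ℕ) / (4 * T))) :=
  have := h.block_pos
  (summable_exp_neg_succ_div (by positivity)).mul_left (4 * A)

theorem summable_currentTerm (h : IsCurrentData ω r ζ k Z K Y T A ε₀ ε₁) (x : ℝ)
    (hw : ‖w‖ < r) : Summable fun n => currentTerm (ω : ℂ) ζ k n (x + w) :=
  h.summable_majorant.of_norm_bounded fun n => h.norm_currentTerm_le x hw n

theorem summable_currentTerm_ofReal (h : IsCurrentData ω r ζ k Z K Y T A ε₀ ε₁) (x : ℝ) :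
    Summable fun n => currentTerm (ω : ℂ) ζ k n x := by
  simpa only [add_zero] using h.summable_currentTerm x (w := 0) (by simpa using h.width_pos)

theorem summable_currentTerm_real (h : IsCurrentData ω r ζ k Z K Y T A ε₀ ε₁) (x : ℝ) :
    Summable fun n => currentTerm ω Z K n x := by
  rw [← Complex.summable_ofReal]
  simpa only [h.ofReal_currentTerm] using h.summable_currentTerm_ofReal x

theorem periodic_currentSeries (h : IsCurrentData ω r ζ k Z K Y T A ε₀ ε₁) :
    Function.Periodic (currentSeries (ω : ℂ) ζ k) 1 := fun z => by
  refine tsum_congr fun n => ?_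
  refine congrArg₂ (· * ·) (Finset.prod_congr rfl fun i _ => ?_) ?_
  · rw [add_right_comm, h.periodic_transmission]
  · rw [add_right_comm, h.periodic_injection]

theorem differentiableOn_currentTerm (h : IsCurrentData ω r ζ k Z K Y T A ε₀ ε₁) (n : ℕ) :
    DifferentiableOn ℂ (currentTerm (ω : ℂ) ζ k n) (strip r) := by
  refine DifferentiableOn.mul (DifferentiableOn.fun_finsetProd fun i _ => ?_) ?_
  · simpa using differentiableOn_strip_comp_add h.differentiableOn_transmission (i * ω)
  · simpa using differentiableOn_strip_comp_add h.differentiableOn_injection ((n + 1 : ℕ) * ω)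

theorem differentiableOn_currentSeries (h : IsCurrentData ω r ζ k Z K Y T A ε₀ ε₁) :
    DifferentiableOn ℂ (currentSeries (ω : ℂ) ζ k) (strip r) := by
  refine Complex.differentiableOn_tsum_of_summable_norm h.summable_majorant
    h.differentiableOn_currentTerm (isOpen_strip r) fun n z hz => ?_
  have bound := h.norm_currentTerm_le z.re (norm_im_mul_I_lt_of_mem_strip hz) n
  rwa [Complex.re_add_im] at bound

theorem ofReal_currentSeries (h : IsCurrentData ω r ζ k Z K Y T A ε₀ ε₁) (x : ℝ) :
    ((currentSeries ω Z K x : ℝ) : ℂ) = currentSeries (ω : ℂ) ζ k x := by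
  rw [currentSeries, Complex.ofReal_tsum, currentSeries]
  exact tsum_congr fun n => h.ofReal_currentTerm n x

theorem currentTerm_pos (h : IsCurrentData ω r ζ k Z K Y T A ε₀ ε₁) (n : ℕ) (x : ℝ) :
    0 < currentTerm ω Z K n x :=
  mul_pos (Finset.prod_pos fun _ _ => h.transmission_pos _) (h.injection_pos _)

theorem currentSeries_nonneg (h : IsCurrentData ω r ζ k Z K Y T A ε₀ ε₁) (x : ℝ) :
    0 ≤ currentSeries ω Z K x :=
  tsum_nonneg fun n => (h.currentTerm_pos n x).le

theorem currentSeries_eq (h : IsCurrentData ω r ζ k Z K Y T A ε₀ ε₁) (x : ℝ) :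
    currentSeries ω Z K x = Z x * (K (x + ω) + currentSeries ω Z K (x + ω)) := by
  rw [currentSeries, (h.summable_currentTerm_real x).tsum_eq_zero_add, mul_add, currentSeries,
    ← tsum_mul_left]
  congr 1
  · simp [currentTerm, orbitProd_one]
  · refine tsum_congr fun n => ?_
    rw [currentTerm, currentTerm, add_comm (n + 1) 1, orbitProd_add, orbitProd_one]
    push_cast
    ring_nf

theorem sum_currentTerm_add_le (h : IsCurrentData ω r ζ k Z K Y T A ε₀ ε₁) (x : ℝ) (n : ℕ) :
    ∑ i ∈ Finset.range n, currentTerm ω Z K i x +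
      orbitProd ω Z (n + 1) x * Y (x + (n + 1 : ℕ) * ω) ≤ Z x * Y (x + ω) := by
  induction n with
  | zero => simp [orbitProd_one]
  | succ n ih =>
    have step := mul_le_mul_of_nonneg_left (h.majorant_step (x + (n + 1 : ℕ) * ω))
      (h.orbitProd_nonneg (n + 1) x)
    have next : x + (n + 1 + 1 : ℕ) * ω = x + (n + 1 : ℕ) * ω + ω := by
      push_cast
      ring
    rw [Finset.sum_range_succ, orbitProd_succ, next, currentTerm]
    linarith

theorem currentSeries_le (h : IsCurrentData ω r ζ k Z K Y T A ε₀ ε₁) (x : ℝ) :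
    currentSeries ω Z K x ≤ Z x * Y (x + ω) := by
  refine Real.tsum_le_of_sum_range_le (fun n => (h.currentTerm_pos n x).le) fun n => ?_
  have := mul_nonneg (h.orbitProd_nonneg (n + 1) x) (h.majorant_nonneg (x + (n + 1 : ℕ) * ω))
  linarith [h.sum_currentTerm_add_le x n]

theorem logClose_currentTerm (h : IsCurrentData ω r ζ k Z K Y T A ε₀ ε₁) (x : ℝ) (hw : ‖w‖ < r)
    (n : ℕ) : LogClose ((n + 1 : ℕ) * ε₀ + ε₁) (currentTerm (ω : ℂ) ζ k n x)
      (currentTerm (ω : ℂ) ζ k n (x + w)) := by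
  have injection := h.logClose_injection (x + (n + 1 : ℕ) * ω) w hw
  have close := (h.logClose_orbitProd x hw (n + 1)).mul injection
  have shift : ((x + (n + 1 : ℕ) * ω : ℝ) : ℂ) = x + (n + 1 : ℕ) * ω := by push_cast; ring
  rw [shift, add_right_comm] at close
  exact close

-- The first `J` terms are compared by logarithmic closeness, the others by their exponential decay.
theorem norm_currentTerm_sub_le (h : IsCurrentData ω r ζ k Z K Y T A ε₀ ε₁) {J : ℕ} {ε : ℝ}
    (hε₀ : 0 ≤ ε₀) (hJ : J * ε₀ + ε₁ ≤ ε) (hε : ε ≤ 1) (hε_nonneg : 0 ≤ ε) (x : ℝ)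
    (hw : ‖w‖ < r) (n : ℕ) :
    ‖currentTerm (ω : ℂ) ζ k n (x + w) - currentTerm (ω : ℂ) ζ k n x‖ ≤
      2 * ε * currentTerm ω Z K n x +
        8 * A * exp (-(J / (8 * T))) * exp (-((n + 1 : ℕ) / (8 * T))) := by
  have term_pos := h.currentTerm_pos n x
  have A_pos := h.bound_pos
  rcases le_or_gt (n + 1) J with hn | hn
  · have close : LogClose ε (currentTerm (ω : ℂ) ζ k n x) (currentTerm (ω : ℂ) ζ k n (x + w)) := by
      refine (h.logClose_currentTerm x hw n).mono (le_trans ?_ hJ)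
      gcongr
    have sub_le := close.norm_sub_le hε
    rw [← h.ofReal_currentTerm, Complex.norm_real, Real.norm_of_nonneg term_pos.le] at sub_le
    rw [← h.ofReal_currentTerm]
    have : 0 ≤ 8 * A * exp (-(J / (8 * T))) * exp (-((n + 1 : ℕ) / (8 * T))) := by positivity
    linarith
  · have near_le := h.norm_currentTerm_le x hw n
    have real_le := h.norm_currentTerm_le x (w := 0) (by simpa using h.width_pos) n
    rw [add_zero] at real_le
    have exp_le : exp (-((n + 1 : ℕ) / (4 * T))) ≤
        exp (-(J / (8 * T))) * exp (-((n + 1 : ℕ) / (8 * T))) := by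
      rw [← exp_add, exp_le_exp]
      have J_le : (J : ℝ) / (8 * T) ≤ (n + 1 : ℕ) / (8 * T) := by gcongr
      have halves : ((n + 1 : ℕ) : ℝ) / (4 * T) =
          (n + 1 : ℕ) / (8 * T) + (n + 1 : ℕ) / (8 * T) := by ring
      linarith
    have : 0 ≤ 2 * ε * currentTerm ω Z K n x := by positivity
    nlinarith [norm_sub_le (currentTerm (ω : ℂ) ζ k n (x + w)) (currentTerm (ω : ℂ) ζ k n x)]

theorem norm_currentSeries_sub_le (h : IsCurrentData ω r ζ k Z K Y T A ε₀ ε₁) {J : ℕ} {ε : ℝ}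
    (hε₀ : 0 ≤ ε₀) (hJ : J * ε₀ + ε₁ ≤ ε) (hε : ε ≤ 1) (hε_nonneg : 0 ≤ ε) (x : ℝ)
    (hw : ‖w‖ < r) :
    ‖currentSeries (ω : ℂ) ζ k (x + w) - currentSeries (ω : ℂ) ζ k x‖ ≤
      2 * ε * currentSeries ω Z K x + 64 * A * T * exp (-(J / (8 * T))) := by
  have block_pos : (0 : ℝ) < 8 * T := by
    have := h.block_pos
    positivity
  have A_pos := h.bound_pos
  have summable_tail := summable_exp_neg_succ_div block_pos
  have summable_terms := h.summable_currentTerm_real x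
  rw [currentSeries, currentSeries,
    ← (h.summable_currentTerm x hw).tsum_sub (h.summable_currentTerm_ofReal x)]
  refine (tsum_of_norm_bounded
    ((summable_terms.mul_left (2 * ε)).add (summable_tail.mul_left _)).hasSum
    (h.norm_currentTerm_sub_le hε₀ hJ hε hε_nonneg x hw)).trans ?_
  rw [(summable_terms.mul_left _).tsum_add (summable_tail.mul_left _), tsum_mul_left,
    tsum_mul_left, ← currentSeries]
  have tail_le : 8 * A * exp (-(J / (8 * T))) * ∑' n : ℕ, exp (-((n + 1 : ℕ) / (8 * T))) ≤
      8 * A * exp (-(J / (8 * T))) * (8 * T) := by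
    gcongr
    exact tsum_exp_neg_succ_div_le block_pos
  linarith

end IsCurrentData

/-! ### One step of the construction -/

/-- The holomorphic current injected at a site by the source of scale `S`. -/
noncomputable def analyticInjection (E : ℝ) (S : ℕ) (F : ℂ → ℂ) (z : ℂ) : ℂ :=
  E * (F z ^ 2 * analyticSource S z)

/-- The real injected current underlying `analyticInjection`. -/
noncomputable def realInjection (E : ℝ) (S : ℕ) (F : ℂ → ℂ) (x : ℝ) : ℝ :=
  E * (F x).re ^ 2 * realSource S x

/-- The holomorphic extension of the input current created by the source of scale `S`. -/
noncomputable def analyticCurrent (ω E : ℝ) (S : ℕ) (F : ℂ → ℂ) : ℂ → ℂ :=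
  currentSeries (ω : ℂ) (analyticTransmission ω E F) (analyticInjection E S F)

/-- The real input current underlying `analyticCurrent`. -/
noncomputable def realCurrent (ω E : ℝ) (S : ℕ) (F : ℂ → ℂ) : ℝ → ℝ :=
  currentSeries ω (realTransmission ω E F) (realInjection E S F)

/-- The holomorphic extension of `totalConductance`. -/
noncomputable def analyticTotalConductance (ω E : ℝ) (F : ℂ → ℂ) (z : ℂ) : ℂ :=
  E * F z ^ 2 + analyticTransmission ω E F z * analyticConductance ω E F (z + ω) +
    analyticTransmission (-ω) E F z * analyticConductance (-ω) E F (z + (-ω : ℝ))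

/-- The holomorphic extension of `totalCurrent`. -/
noncomputable def analyticTotalCurrent (ω E : ℝ) (S : ℕ) (F : ℂ → ℂ) (z : ℂ) : ℂ :=
  analyticInjection E S F z + analyticCurrent ω E S F z + analyticCurrent (-ω) E S F z

/-- The real total conductance underlying `analyticTotalConductance`. -/
noncomputable def realTotalConductance (ω E : ℝ) (F : ℂ → ℂ) : ℝ → ℝ :=
  totalConductance ω E (fun x : ℝ => (F x).re) (realConductance ω E F) (realConductance (-ω) E F)

/-- The real total current underlying `analyticTotalCurrent`. -/
noncomputable def realTotalCurrent (ω E : ℝ) (S : ℕ) (F : ℂ → ℂ) : ℝ → ℝ :=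
  totalCurrent E (fun x : ℝ => (F x).re) (realSource S) (realCurrent ω E S F)
    (realCurrent (-ω) E S F)

/-- The voltage of the two-sided network of weight `F` driven by the source of scale `S`. -/
noncomputable def realResponse (ω E : ℝ) (S : ℕ) (F : ℂ → ℂ) (x : ℝ) : ℝ :=
  realTotalCurrent ω E S F x / realTotalConductance ω E F x

/-- The weight of the next step: `F` times the holomorphic extension of the voltage. -/
noncomputable def refinedWeight (ω E : ℝ) (S : ℕ) (F : ℂ → ℂ) (z : ℂ) : ℂ :=
  F z * (analyticTotalCurrent ω E S F z * (analyticTotalConductance ω E F z)⁻¹)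

/-- The ratio of the source to the voltage, which governs the change of the potential. -/
noncomputable def sourceRatio (ω E : ℝ) (S : ℕ) (F : ℂ → ℂ) (z : ℂ) : ℂ :=
  analyticSource S z * (analyticTotalConductance ω E F z * (analyticTotalCurrent ω E S F z)⁻¹)

/-- The hypotheses under which an analytic weight at scale `s` can be refined to scale `S`. -/
structure IsAnalyticStep (ω Λ c₀ : ℝ) (s S : ℕ) (E : ℝ) (F : ℂ → ℂ) : Prop where
  analytic : IsAnalyticAdmissible ω Λ s E F
  large : 10 ^ 6 ≤ s
  scale_eq : S = s ^ 16
  diophantine_pos : 0 < c₀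
  diophantine : IsBadlyApproximable c₀ ω
  diophantine_le : 20 / c₀ ≤ s
  one_le_bound : 1 ≤ Λ
  bound_le : Λ ≤ s

namespace IsAnalyticStep

variable {ω Λ c₀ E : ℝ} {s S : ℕ} {F : ℂ → ℂ} {w z : ℂ}

theorem neg (h : IsAnalyticStep ω Λ c₀ s S E F) : IsAnalyticStep (-ω) Λ c₀ s S E F where
  analytic := h.analytic.neg
  large := h.large
  scale_eq := h.scale_eq
  diophantine_pos := h.diophantine_pos
  diophantine := h.diophantine.neg
  diophantine_le := h.diophantine_le
  one_le_bound := h.one_le_bound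
  bound_le := h.bound_le

theorem scale_pos (h : IsAnalyticStep ω Λ c₀ s S E F) : 0 < s :=
  lt_of_lt_of_le (by norm_num) h.large

theorem million_le (h : IsAnalyticStep ω Λ c₀ s S E F) : (10 ^ 6 : ℝ) ≤ s := by
  exact_mod_cast h.large

theorem mul_pow_le_scale (h : IsAnalyticStep ω Λ c₀ s S E F) {a : ℝ} {n : ℕ}
    (ha : a ≤ 10 ^ 6) (hn : n < 16) : a * (s : ℝ) ^ n ≤ S := by
  rw [h.scale_eq, Nat.cast_pow]
  exact mul_pow_le_pow_of_lt (ha.trans h.million_le) (by linarith [h.million_le]) hn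

theorem le_scale (h : IsAnalyticStep ω Λ c₀ s S E F) : (s : ℝ) ≤ S := by
  simpa using h.mul_pow_le_scale (a := 1) (n := 1) (by norm_num) (by norm_num)

theorem million_le_scale (h : IsAnalyticStep ω Λ c₀ s S E F) : (10 ^ 6 : ℝ) ≤ S :=
  h.million_le.trans h.le_scale

theorem strip_subset (h : IsAnalyticStep ω Λ c₀ s S E F) :
    strip (1 / (S : ℝ) ^ 14) ⊆ strip (1 / (s : ℝ) ^ 14 / 2) := by
  have s_pos : (0 : ℝ) < s := by exact_mod_cast h.scale_pos
  refine strip_mono ?_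
  rw [div_div]
  refine one_div_le_one_div_of_le (by positivity) ?_
  calc (s : ℝ) ^ 14 * 2 = 2 * (s : ℝ) ^ 14 := mul_comm _ _
    _ ≤ S := h.mul_pow_le_scale (by norm_num) (by norm_num)
    _ ≤ (S : ℝ) ^ 14 := le_self_pow₀ (by linarith [h.million_le_scale]) (by norm_num)

theorem logClose_of_re_pos (h : IsAnalyticStep ω Λ c₀ s S E F) {G : ℂ → ℂ}
    (hd : DifferentiableOn ℂ G (strip (1 / (s : ℝ) ^ 14 / 2)))
    (hre : ∀ z ∈ strip (1 / (s : ℝ) ^ 14 / 2), 0 < (G z).re) (x : ℝ)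
    (hw : ‖w‖ < 1 / (S : ℝ) ^ 14) : LogClose (1 / (S : ℝ) ^ 12) (G x) (G (x + w)) := by
  have s_pos : (0 : ℝ) < s := by exact_mod_cast h.scale_pos
  have S_ge := h.million_le_scale
  have s14_le : 32 * (s : ℝ) ^ 14 ≤ S := h.mul_pow_le_scale (by norm_num) (by norm_num)
  have ratio_ge : 2 ≤ (S : ℝ) ^ 14 / (2 * (s : ℝ) ^ 14) := by
    rw [le_div_iff₀ (by positivity)]
    linarith [le_self_pow₀ (n := 14) (show (1 : ℝ) ≤ S by linarith) (by norm_num)]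
  refine (logClose_of_re_pos_on_strip (by positivity) ratio_ge hd hre x
    (hw.le.trans_eq (by field_simp))).mono ?_
  rw [div_div_eq_mul_div, div_le_div_iff₀ (by positivity) (by positivity)]
  calc 16 * (2 * (s : ℝ) ^ 14) * (S : ℝ) ^ 12 = 32 * (s : ℝ) ^ 14 * (S : ℝ) ^ 12 := by ring
    _ ≤ S * (S : ℝ) ^ 12 := by gcongr
    _ = (S : ℝ) ^ 13 := (pow_succ' _ _).symm
    _ ≤ 1 * (S : ℝ) ^ 14 := by
        rw [one_mul]
        exact pow_le_pow_right₀ (by linarith) (by norm_num)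

theorem logClose_weight (h : IsAnalyticStep ω Λ c₀ s S E F) (x : ℝ)
    (hw : ‖w‖ < 1 / (S : ℝ) ^ 14) : LogClose (1 / (S : ℝ) ^ 12) (F x) (F (x + w)) :=
  h.logClose_of_re_pos h.analytic.differentiableOn_half
    (fun z hz => (h.analytic.inCone z (IsAnalyticAdmissible.half_strip_subset hz)).1) x hw

theorem logClose_injection (h : IsAnalyticStep ω Λ c₀ s S E F) (x : ℝ)
    (hw : ‖w‖ < 1 / (S : ℝ) ^ 14) :
    LogClose (122 / (S : ℝ) ^ 2) (analyticInjection E S F x) (analyticInjection E S F (x + w)) := by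
  have S_ge := h.million_le_scale
  have width_le : 1 / (S : ℝ) ^ 12 ≤ 1 / (S : ℝ) ^ 2 :=
    one_div_le_one_div_of_le (by positivity) (pow_le_pow_right₀ (by linarith) (by norm_num))
  have weight := (h.logClose_weight x hw).mono width_le
  have product := (weight.mul weight).mul (logClose_analyticSource S_ge x hw.le)
  rw [← sq, ← sq] at product
  exact (product.const_mul E).mono (le_of_eq (by ring))

theorem ofReal_realInjection (h : IsAnalyticStep ω Λ c₀ s S E F) (x : ℝ) :
    (realInjection E S F x : ℂ) = analyticInjection E S F x := by
  rw [realInjection, analyticInjection]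
  push_cast
  rw [h.analytic.ofReal_re_eq, ofReal_realSource, mul_assoc]

theorem realInjection_pos (h : IsAnalyticStep ω Λ c₀ s S E F) (x : ℝ) :
    0 < realInjection E S F x :=
  mul_pos ((h.analytic.isInputConductance h.scale_pos).ground_pos x) (realSource_pos S x)

theorem realInjection_le_ground (h : IsAnalyticStep ω Λ c₀ s S E F) (x : ℝ) :
    realInjection E S F x ≤ E * (F x).re ^ 2 :=
  mul_le_of_le_one_right ((h.analytic.isInputConductance h.scale_pos).ground_pos x).le
    (realSource_le_one S x)

theorem realInjection_le (h : IsAnalyticStep ω Λ c₀ s S E F) (x : ℝ) :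
    realInjection E S F x ≤ s := by
  have weight_sq_le : (F x).re ^ 2 ≤ 1 :=
    pow_le_one₀ (h.analytic.admissible.pos x).le (h.analytic.admissible.le_one x)
  calc realInjection E S F x ≤ E * (F x).re ^ 2 := h.realInjection_le_ground x
    _ ≤ E := mul_le_of_le_one_right h.analytic.admissible.coupling_pos.le weight_sq_le
    _ ≤ s := h.analytic.admissible.coupling_le.trans h.bound_le

theorem differentiableOn_injection (h : IsAnalyticStep ω Λ c₀ s S E F) :
    DifferentiableOn ℂ (analyticInjection E S F) (strip (1 / (S : ℝ) ^ 14)) :=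
  (((h.analytic.differentiableOn_half.mono h.strip_subset).pow 2).mul
    (differentiable_analyticSource S).differentiableOn).const_mul _

theorem periodic_injection (h : IsAnalyticStep ω Λ c₀ s S E F) :
    Function.Periodic (analyticInjection E S F) 1 := fun z => by
  rw [analyticInjection, h.analytic.periodic, periodic_analyticSource, analyticInjection]

theorem isCurrentData (h : IsAnalyticStep ω Λ c₀ s S E F) :
    IsCurrentData ω (1 / (S : ℝ) ^ 14) (analyticTransmission ω E F) (analyticInjection E S F)
      (realTransmission ω E F) (realInjection E S F) (realConductance ω E F) (s ^ 7) s
      (1 / (S : ℝ) ^ 12) (122 / (S : ℝ) ^ 2) := by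
  have S_ge := h.million_le_scale
  have conductance := h.analytic.isInputConductance h.scale_pos
  exact {
    width_pos := by positivity
    differentiableOn_transmission :=
      (h.analytic.differentiableOn_analyticTransmission h.scale_pos).mono h.strip_subset
    differentiableOn_injection := h.differentiableOn_injection
    periodic_transmission := h.analytic.periodic_analyticTransmission h.scale_pos
    periodic_injection := h.periodic_injection
    norm_transmission_le_one := fun _ hz =>
      h.analytic.norm_analyticTransmission_le_one h.scale_pos (h.strip_subset hz)
    ofReal_transmission := h.analytic.ofReal_realTransmission h.scale_pos
    ofReal_injection := h.ofReal_realInjection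
    transmission_pos := conductance.transmission_pos
    injection_pos := h.realInjection_pos
    injection_le := h.realInjection_le
    logClose_transmission := fun x _ hw => h.logClose_of_re_pos
      (h.analytic.differentiableOn_analyticTransmission h.scale_pos)
      (fun _ hz => (h.analytic.analyticTransmission_inCone_one h.scale_pos hz).1) x hw
    logClose_injection := fun x _ hw => h.logClose_injection x hw
    block_pos := pow_pos h.scale_pos 7
    block_mul_le := by
      have s7_le : 8 * (s : ℝ) ^ 7 ≤ S := h.mul_pow_le_scale (by norm_num) (by norm_num)
      rw [Nat.cast_pow, mul_one_div, div_le_div_iff₀ (by positivity) (by norm_num)]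
      linarith [le_self_pow₀ (n := 12) (show (1 : ℝ) ≤ S by linarith) (by norm_num)]
    injection_close_le := by
      rw [div_le_div_iff₀ (by positivity) (by norm_num)]
      nlinarith
    orbitProd_le_half := h.analytic.admissible.orbitProd_le_half ω (.inl rfl) _ conductance
    majorant_nonneg := fun x => (conductance.pos x).le
    majorant_step := fun x => by
      rw [conductance.eq_add_transmission_mul x]
      exact add_le_add_left (h.realInjection_le_ground x) _ }

theorem isInputCurrent (h : IsAnalyticStep ω Λ c₀ s S E F) :
    IsInputCurrent ω E (fun x : ℝ => (F x).re) (realConductance ω E F) (realSource S)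
      (realCurrent ω E S F) where
  nonneg := h.isCurrentData.currentSeries_nonneg
  le := h.isCurrentData.currentSeries_le
  eq := h.isCurrentData.currentSeries_eq

theorem tail_le_exp (h : IsAnalyticStep ω Λ c₀ s S E F) :
    64 * (s : ℝ) * (s ^ 7 : ℕ) * exp (-((S ^ 10 : ℕ) / (8 * (s ^ 7 : ℕ)))) ≤
      exp (-(S : ℝ) ^ 8) := by
  have s_pos : (0 : ℝ) < s := by exact_mod_cast h.scale_pos
  have S_ge := h.million_le_scale
  have prefactor_le : 64 * (s : ℝ) * (s : ℝ) ^ 7 ≤ exp S :=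
    calc 64 * (s : ℝ) * (s : ℝ) ^ 7 = 64 * (s : ℝ) ^ 8 := by ring
      _ ≤ (S : ℝ) := h.mul_pow_le_scale (by norm_num) (by norm_num)
      _ ≤ exp S := by linarith [add_one_le_exp (S : ℝ)]
  have exponent_ge : (S : ℝ) ^ 9 ≤ (S : ℝ) ^ 10 / (8 * (s : ℝ) ^ 7) := by
    rw [le_div_iff₀ (by positivity), pow_succ (S : ℝ) 9]
    gcongr
    exact h.mul_pow_le_scale (by norm_num) (by norm_num)
  have S_le : (S : ℝ) ≤ (S : ℝ) ^ 8 := le_self_pow₀ (by linarith) (by norm_num)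
  push_cast
  calc 64 * (s : ℝ) * (s : ℝ) ^ 7 * exp (-((S : ℝ) ^ 10 / (8 * (s : ℝ) ^ 7)))
      ≤ exp S * exp (-(S : ℝ) ^ 9) := by gcongr
    _ = exp (S - (S : ℝ) ^ 9) := by rw [← exp_add, sub_eq_add_neg]
    _ ≤ exp (-(S : ℝ) ^ 8) := exp_le_exp.mpr (by
        linarith [mul_pow_le_pow_of_lt (a := 2) (b := (S : ℝ)) (m := 8) (n := 9) (by linarith)
          (by linarith) (by norm_num)])

theorem norm_analyticCurrent_sub_le (h : IsAnalyticStep ω Λ c₀ s S E F) (x : ℝ)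
    (hw : ‖w‖ < 1 / (S : ℝ) ^ 14) :
    ‖analyticCurrent ω E S F (x + w) - analyticCurrent ω E S F x‖ ≤
      400 / (S : ℝ) ^ 2 * realCurrent ω E S F x + exp (-(S : ℝ) ^ 8) := by
  have S_ge := h.million_le_scale
  have exponent_le : ((S ^ 10 : ℕ) : ℝ) * (1 / (S : ℝ) ^ 12) + 122 / (S : ℝ) ^ 2 ≤
      200 / (S : ℝ) ^ 2 := by
    have first_eq : ((S ^ 10 : ℕ) : ℝ) * (1 / (S : ℝ) ^ 12) = 1 / (S : ℝ) ^ 2 := by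
      push_cast
      field_simp
    rw [first_eq, ← add_div]
    gcongr
    norm_num
  have le_one : 200 / (S : ℝ) ^ 2 ≤ 1 := by
    rw [div_le_one (by positivity)]
    nlinarith
  have bound := h.isCurrentData.norm_currentSeries_sub_le (by positivity) exponent_le le_one
    (by positivity) x hw
  calc ‖analyticCurrent ω E S F (x + w) - analyticCurrent ω E S F x‖
      ≤ 2 * (200 / (S : ℝ) ^ 2) * realCurrent ω E S F x +
          64 * (s : ℝ) * (s ^ 7 : ℕ) * exp (-((S ^ 10 : ℕ) / (8 * (s ^ 7 : ℕ)))) := bound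
    _ ≤ 2 * (200 / (S : ℝ) ^ 2) * realCurrent ω E S F x + exp (-(S : ℝ) ^ 8) := by
        gcongr
        exact h.tail_le_exp
    _ = 400 / (S : ℝ) ^ 2 * realCurrent ω E S F x + exp (-(S : ℝ) ^ 8) := by ring

theorem ofReal_realTotalConductance (h : IsAnalyticStep ω Λ c₀ s S E F) (x : ℝ) :
    (realTotalConductance ω E F x : ℂ) = analyticTotalConductance ω E F x := by
  rw [realTotalConductance, totalConductance, analyticTotalConductance, ← realTransmission,
    ← realTransmission, ← Complex.ofReal_add, ← Complex.ofReal_add]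
  simp only [Complex.ofReal_add, Complex.ofReal_mul, Complex.ofReal_pow,
    h.analytic.ofReal_re_eq]
  rw [h.analytic.ofReal_realTransmission h.scale_pos,
    h.neg.analytic.ofReal_realTransmission h.scale_pos,
    h.analytic.ofReal_realConductance h.scale_pos,
    h.neg.analytic.ofReal_realConductance h.scale_pos, Complex.ofReal_add, Complex.ofReal_add]

theorem ofReal_realTotalCurrent (h : IsAnalyticStep ω Λ c₀ s S E F) (x : ℝ) :
    (realTotalCurrent ω E S F x : ℂ) = analyticTotalCurrent ω E S F x := by
  rw [realTotalCurrent, totalCurrent, ← realInjection, analyticTotalCurrent,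
    Complex.ofReal_add, Complex.ofReal_add, h.ofReal_realInjection, realCurrent, realCurrent,
    h.isCurrentData.ofReal_currentSeries, h.neg.isCurrentData.ofReal_currentSeries,
    analyticCurrent, analyticCurrent]

theorem periodic_analyticTotalConductance (h : IsAnalyticStep ω Λ c₀ s S E F) :
    Function.Periodic (analyticTotalConductance ω E F) 1 := fun z => by
  simp only [analyticTotalConductance, add_right_comm z 1, h.analytic.periodic z,
    h.analytic.periodic_analyticTransmission h.scale_pos z,
    h.neg.analytic.periodic_analyticTransmission h.scale_pos z,
    h.analytic.periodic_analyticConductance h.scale_pos (z + ω),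
    h.neg.analytic.periodic_analyticConductance h.scale_pos (z + (-ω : ℝ))]

theorem periodic_analyticTotalCurrent (h : IsAnalyticStep ω Λ c₀ s S E F) :
    Function.Periodic (analyticTotalCurrent ω E S F) 1 :=
  (h.periodic_injection.add h.isCurrentData.periodic_currentSeries).add
    h.neg.isCurrentData.periodic_currentSeries

theorem analyticTotalConductance_inCone (h : IsAnalyticStep ω Λ c₀ s S E F)
    (hz : z ∈ strip (1 / (s : ℝ) ^ 14 / 2)) :
    InCone (1 / 4) (analyticTotalConductance ω E F z) :=
  ((h.analytic.ground_inCone hz).add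
    (h.analytic.transmission_mul_conductance_inCone h.scale_pos hz)).add
    (h.neg.analytic.transmission_mul_conductance_inCone h.scale_pos hz)

theorem differentiableOn_analyticTotalConductance (h : IsAnalyticStep ω Λ c₀ s S E F) :
    DifferentiableOn ℂ (analyticTotalConductance ω E F) (strip (1 / (s : ℝ) ^ 14 / 2)) :=
  (((h.analytic.differentiableOn_half.pow 2).const_mul _).add
    ((h.analytic.differentiableOn_analyticTransmission h.scale_pos).mul
      (h.analytic.differentiableOn_analyticConductance_add h.scale_pos))).add
    ((h.neg.analytic.differentiableOn_analyticTransmission h.scale_pos).mul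
      (h.neg.analytic.differentiableOn_analyticConductance_add h.scale_pos))

theorem differentiableOn_analyticTotalCurrent (h : IsAnalyticStep ω Λ c₀ s S E F) :
    DifferentiableOn ℂ (analyticTotalCurrent ω E S F) (strip (1 / (S : ℝ) ^ 14)) :=
  (h.differentiableOn_injection.add h.isCurrentData.differentiableOn_currentSeries).add
    h.neg.isCurrentData.differentiableOn_currentSeries

theorem periodic_realResponse (h : IsAnalyticStep ω Λ c₀ s S E F) :
    Function.Periodic (realResponse ω E S F) 1 := fun x => by
  apply Complex.ofReal_injective
  rw [realResponse, realResponse, Complex.ofReal_div, Complex.ofReal_div]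
  simp only [h.ofReal_realTotalCurrent, h.ofReal_realTotalConductance, Complex.ofReal_add,
    Complex.ofReal_one, h.periodic_analyticTotalCurrent _, h.periodic_analyticTotalConductance _]

theorem isResponse (h : IsAnalyticStep ω Λ c₀ s S E F) :
    IsResponse ω E (fun x : ℝ => (F x).re) (realSource S) (realResponse ω E S F)
      (realConductance ω E F) (realConductance (-ω) E F) (realCurrent ω E S F)
      (realCurrent (-ω) E S F) where
  right_conductance := h.analytic.isInputConductance h.scale_pos
  left_conductance := h.neg.analytic.isInputConductance h.scale_pos
  right_current := h.isInputCurrent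
  left_current := h.neg.isInputCurrent
  source_pos := realSource_pos S
  source_le_one := realSource_le_one S
  eq _ := rfl

theorem isRefinement (h : IsAnalyticStep ω Λ c₀ s S E F) :
    IsRefinement ω Λ c₀ s S E (fun x : ℝ => (F x).re) (realSource S) (realResponse ω E S F) where
  admissible := h.analytic.admissible
  large := h.large
  scale_eq := h.scale_eq
  diophantine_pos := h.diophantine_pos
  diophantine := h.diophantine
  diophantine_le := h.diophantine_le
  one_le_bound := h.one_le_bound
  bound_le := h.bound_le
  response := ⟨_, _, _, _, h.isResponse⟩
  half_le_source _ := half_le_realSource (h.scale_eq ▸ pow_pos h.scale_pos 16)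
  source_le_exp _ := realSource_le_exp (h.scale_eq ▸ pow_pos h.scale_pos 16)
  periodic := h.periodic_realResponse

theorem realTotalCurrent_pos (h : IsAnalyticStep ω Λ c₀ s S E F) (x : ℝ) :
    0 < realTotalCurrent ω E S F x :=
  h.isResponse.totalCurrent_pos x

theorem exp_neg_le_realResponse (h : IsAnalyticStep ω Λ c₀ s S E F) (x : ℝ) :
    exp (-(S : ℝ) ^ 7) ≤ realResponse ω E S F x :=
  (h.isRefinement.exp_neg_le_refined x).trans
    (mul_le_of_le_one_left (h.isResponse.pos x).le (h.analytic.admissible.le_one x))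

theorem exp_neg_le_realTotalCurrent (h : IsAnalyticStep ω Λ c₀ s S E F) (x : ℝ) :
    exp (-(S : ℝ) ^ 8) ≤ 1 / S * realTotalCurrent ω E S F x := by
  have S_ge := h.million_le_scale
  have current_eq : realResponse ω E S F x * realTotalConductance ω E F x =
      realTotalCurrent ω E S F x :=
    div_mul_cancel₀ _ (h.isResponse.totalConductance_pos x).ne'
  have conductance_ge : exp (-(s + 2 * (s : ℝ) ^ 7)) ≤ realTotalConductance ω E F x :=
    (h.isRefinement.exp_le_ground x).trans (h.isResponse.ground_le_totalConductance x)
  have exp_neg_le : exp (-(S : ℝ)) ≤ 1 / S := by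
    rw [exp_neg, ← one_div]
    exact one_div_le_one_div_of_le (by linarith) (by linarith [add_one_le_exp (S : ℝ)])
  have exponent_le : (S : ℝ) + (S ^ 7 + (s + 2 * (s : ℝ) ^ 7)) ≤ (S : ℝ) ^ 8 := by
    have s7_le : (s : ℝ) ^ 7 ≤ (S : ℝ) ^ 7 :=
      pow_le_pow_left₀ (Nat.cast_nonneg s) h.le_scale 7
    have S_le : (S : ℝ) ≤ (S : ℝ) ^ 7 := le_self_pow₀ (by linarith) (by norm_num)
    linarith [h.le_scale, mul_pow_le_pow_of_lt (a := 5) (b := (S : ℝ)) (m := 7) (n := 8)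
      (by linarith) (by linarith) (by norm_num)]
  have response_nonneg := (h.isResponse.pos x).le
  have response_ge := h.exp_neg_le_realResponse x
  calc exp (-(S : ℝ) ^ 8)
      ≤ exp (-(S : ℝ)) * (exp (-(S : ℝ) ^ 7) * exp (-(s + 2 * (s : ℝ) ^ 7))) := by
        rw [← exp_add, ← exp_add]
        exact exp_le_exp.mpr (by linarith)
    _ ≤ 1 / S * (realResponse ω E S F x * realTotalConductance ω E F x) := by gcongr
    _ = 1 / S * realTotalCurrent ω E S F x := by rw [current_eq]

theorem norm_analyticInjection_sub_le (h : IsAnalyticStep ω Λ c₀ s S E F) (x : ℝ)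
    (hw : ‖w‖ < 1 / (S : ℝ) ^ 14) :
    ‖analyticInjection E S F (x + w) - analyticInjection E S F x‖ ≤
      400 / (S : ℝ) ^ 2 * realInjection E S F x := by
  have injection_pos := h.realInjection_pos x
  have bound := (h.logClose_injection x hw).norm_sub_le
    (by linarith [h.isCurrentData.injection_close_le])
  rw [← h.ofReal_realInjection, Complex.norm_real, norm_of_nonneg injection_pos.le] at bound
  rw [← h.ofReal_realInjection]
  calc _ ≤ realInjection E S F x * (2 * (122 / (S : ℝ) ^ 2)) := bound
    _ = 244 / (S : ℝ) ^ 2 * realInjection E S F x := by ring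
    _ ≤ 400 / (S : ℝ) ^ 2 * realInjection E S F x := by gcongr; norm_num

theorem norm_analyticTotalCurrent_sub_le (h : IsAnalyticStep ω Λ c₀ s S E F) (x : ℝ)
    (hw : ‖w‖ < 1 / (S : ℝ) ^ 14) :
    ‖analyticTotalCurrent ω E S F (x + w) - analyticTotalCurrent ω E S F x‖ ≤
      1 / 1000 * realTotalCurrent ω E S F x := by
  have S_ge := h.million_le_scale
  have current_pos := h.realTotalCurrent_pos x
  have sub_eq : analyticTotalCurrent ω E S F (x + w) - analyticTotalCurrent ω E S F x =
      (analyticInjection E S F (x + w) - analyticInjection E S F x) +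
        (analyticCurrent ω E S F (x + w) - analyticCurrent ω E S F x) +
        (analyticCurrent (-ω) E S F (x + w) - analyticCurrent (-ω) E S F x) := by
    rw [analyticTotalCurrent, analyticTotalCurrent]
    ring
  have triangle := norm_add₃_le (a := analyticInjection E S F (x + w) - analyticInjection E S F x)
    (b := analyticCurrent ω E S F (x + w) - analyticCurrent ω E S F x)
    (c := analyticCurrent (-ω) E S F (x + w) - analyticCurrent (-ω) E S F x)
  have relative_le : 400 / (S : ℝ) ^ 2 * realTotalCurrent ω E S F x ≤
      1 / 2000 * realTotalCurrent ω E S F x := by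
    refine mul_le_mul_of_nonneg_right ?_ current_pos.le
    rw [div_le_div_iff₀ (by positivity) (by norm_num)]
    nlinarith
  have tail_le : 1 / S * realTotalCurrent ω E S F x ≤ 1 / 4000 * realTotalCurrent ω E S F x :=
    mul_le_mul_of_nonneg_right (one_div_le_one_div_of_le (by norm_num) (by linarith))
      current_pos.le
  have split : 400 / (S : ℝ) ^ 2 * realTotalCurrent ω E S F x =
      400 / (S : ℝ) ^ 2 * realInjection E S F x + 400 / (S : ℝ) ^ 2 * realCurrent ω E S F x +
        400 / (S : ℝ) ^ 2 * realCurrent (-ω) E S F x := by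
    rw [realTotalCurrent, totalCurrent, ← realInjection]
    ring
  rw [sub_eq]
  linarith [h.norm_analyticInjection_sub_le x hw, h.norm_analyticCurrent_sub_le x hw,
    h.neg.norm_analyticCurrent_sub_le x hw, h.exp_neg_le_realTotalCurrent x]

theorem logClose_analyticTotalCurrent (h : IsAnalyticStep ω Λ c₀ s S E F) (x : ℝ)
    (hw : ‖w‖ < 1 / (S : ℝ) ^ 14) :
    LogClose (1 / 500) (analyticTotalCurrent ω E S F x) (analyticTotalCurrent ω E S F (x + w)) := by
  have current_pos := h.realTotalCurrent_pos x
  have norm_eq : ‖analyticTotalCurrent ω E S F x‖ = realTotalCurrent ω E S F x := by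
    rw [← h.ofReal_realTotalCurrent, Complex.norm_real, norm_of_nonneg current_pos.le]
  refine (LogClose.of_norm_sub_le (δ := 1 / 1000) (norm_pos_iff.mp (norm_eq ▸ current_pos))
    (by norm_num) ?_).mono (by norm_num)
  rw [norm_eq]
  exact h.norm_analyticTotalCurrent_sub_le x hw

theorem logClose_analyticTotalConductance (h : IsAnalyticStep ω Λ c₀ s S E F) (x : ℝ)
    (hw : ‖w‖ < 1 / (S : ℝ) ^ 14) :
    LogClose (1 / (S : ℝ) ^ 12) (analyticTotalConductance ω E F x)
      (analyticTotalConductance ω E F (x + w)) :=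
  h.logClose_of_re_pos h.differentiableOn_analyticTotalConductance
    (fun _ hz => (h.analyticTotalConductance_inCone hz).1) x hw

theorem inv_pow_le (h : IsAnalyticStep ω Λ c₀ s S E F) : 1 / (S : ℝ) ^ 12 ≤ 1 / 1000 :=
  one_div_le_one_div_of_le (by norm_num) ((by linarith [h.million_le_scale] : (1000 : ℝ) ≤ S).trans
    (le_self_pow₀ (by linarith [h.million_le_scale]) (by norm_num)))

theorem ofReal_weight_mul_response (h : IsAnalyticStep ω Λ c₀ s S E F) (x : ℝ) :
    (((F x).re * realResponse ω E S F x : ℝ) : ℂ) = refinedWeight ω E S F x := by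
  rw [realResponse, refinedWeight]
  push_cast
  rw [h.analytic.ofReal_re_eq, h.ofReal_realTotalCurrent, h.ofReal_realTotalConductance,
    div_eq_mul_inv]

theorem re_refinedWeight (h : IsAnalyticStep ω Λ c₀ s S E F) (x : ℝ) :
    (refinedWeight ω E S F x).re = (F x).re * realResponse ω E S F x := by
  rw [← h.ofReal_weight_mul_response, Complex.ofReal_re]

theorem ofReal_source_div_response (h : IsAnalyticStep ω Λ c₀ s S E F) (x : ℝ) :
    ((realSource S x / realResponse ω E S F x : ℝ) : ℂ) = sourceRatio ω E S F x := by
  rw [realResponse, sourceRatio]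
  push_cast
  rw [ofReal_realSource, h.ofReal_realTotalCurrent, h.ofReal_realTotalConductance,
    div_div_eq_mul_div, mul_div_assoc, div_eq_mul_inv]

theorem re_sourceRatio (h : IsAnalyticStep ω Λ c₀ s S E F) (x : ℝ) :
    (sourceRatio ω E S F x).re = realSource S x / realResponse ω E S F x := by
  rw [← h.ofReal_source_div_response, Complex.ofReal_re]

theorem analyticTotalCurrent_ne_zero (h : IsAnalyticStep ω Λ c₀ s S E F)
    (hz : z ∈ strip (1 / (S : ℝ) ^ 14)) : analyticTotalCurrent ω E S F z ≠ 0 := by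
  obtain ⟨u, -, eq⟩ := h.logClose_analyticTotalCurrent z.re (norm_im_mul_I_lt_of_mem_strip hz)
  rw [Complex.re_add_im, ← h.ofReal_realTotalCurrent] at eq
  rw [eq]
  exact mul_ne_zero (Complex.ofReal_ne_zero.mpr (h.realTotalCurrent_pos z.re).ne')
    (Complex.exp_ne_zero u)

theorem refinedWeight_inCone (h : IsAnalyticStep ω Λ c₀ s S E F)
    (hz : z ∈ strip (1 / (S : ℝ) ^ 14)) : InCone (1 / 10) (refinedWeight ω E S F z) := by
  have hw := norm_im_mul_I_lt_of_mem_strip hz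
  have close := (h.logClose_weight z.re hw).mul ((h.logClose_analyticTotalCurrent z.re hw).mul
    (h.logClose_analyticTotalConductance z.re hw).inv)
  rw [Complex.re_add_im, ← refinedWeight, ← refinedWeight, ← h.ofReal_weight_mul_response] at close
  exact close.inCone (h.isRefinement.refined_pos z.re) (by linarith [h.inv_pow_le])

theorem isAnalyticAdmissible (h : IsAnalyticStep ω Λ c₀ s S E F) :
    IsAnalyticAdmissible ω Λ S (exp (-(s : ℝ) ^ 8)) (refinedWeight ω E S F) where
  admissible := by
    simp only [h.re_refinedWeight]
    exact h.isRefinement.isAdmissible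
  periodic z := by
    simp only [refinedWeight, h.analytic.periodic z, h.periodic_analyticTotalCurrent z,
      h.periodic_analyticTotalConductance z]
  differentiableOn := (h.analytic.differentiableOn_half.mono h.strip_subset).mul
    (h.differentiableOn_analyticTotalCurrent.mul
      ((h.differentiableOn_analyticTotalConductance.mono h.strip_subset).inv fun _ hz =>
        (h.analyticTotalConductance_inCone (h.strip_subset hz)).ne_zero))
  inCone _ hz := h.refinedWeight_inCone hz
  real x := h.ofReal_weight_mul_response x ▸ InCone.ofReal (h.isRefinement.refined_pos x)

theorem differentiableOn_sourceRatio (h : IsAnalyticStep ω Λ c₀ s S E F) :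
    DifferentiableOn ℂ (sourceRatio ω E S F) (strip (1 / (S : ℝ) ^ 14)) :=
  (differentiable_analyticSource S).differentiableOn.mul
    ((h.differentiableOn_analyticTotalConductance.mono h.strip_subset).mul
      (h.differentiableOn_analyticTotalCurrent.inv fun _ hz => h.analyticTotalCurrent_ne_zero hz))

theorem periodic_sourceRatio (h : IsAnalyticStep ω Λ c₀ s S E F) :
    Function.Periodic (sourceRatio ω E S F) 1 := fun z => by
  simp only [sourceRatio, periodic_analyticSource S z, h.periodic_analyticTotalCurrent z,
    h.periodic_analyticTotalConductance z]

theorem re_sourceRatio_pos (h : IsAnalyticStep ω Λ c₀ s S E F) (x : ℝ) :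
    0 < (sourceRatio ω E S F x).re := by
  rw [h.re_sourceRatio]
  exact div_pos (realSource_pos S x) (h.isResponse.pos x)

theorem re_sourceRatio_le (h : IsAnalyticStep ω Λ c₀ s S E F) (x : ℝ) :
    (sourceRatio ω E S F x).re ≤ 2 * (s : ℝ) ^ 6 := by
  rw [h.re_sourceRatio]
  exact h.isRefinement.source_div_le x

theorem norm_sourceRatio_le (h : IsAnalyticStep ω Λ c₀ s S E F)
    (hz : z ∈ strip (1 / (S : ℝ) ^ 14)) : ‖sourceRatio ω E S F z‖ ≤ 4 * (s : ℝ) ^ 6 := by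
  have hw := norm_im_mul_I_lt_of_mem_strip hz
  have S_ge := h.million_le_scale
  have source_close_le : 120 / (S : ℝ) ^ 2 ≤ 1 / 1000 := by
    rw [div_le_div_iff₀ (by positivity) (by norm_num)]
    nlinarith
  have close := (logClose_analyticSource S_ge z.re hw.le).mul
    ((h.logClose_analyticTotalConductance z.re hw).mul
      (h.logClose_analyticTotalCurrent z.re hw).inv)
  rw [Complex.re_add_im, ← sourceRatio, ← sourceRatio] at close
  have norm_re_eq : ‖sourceRatio ω E S F z.re‖ = (sourceRatio ω E S F z.re).re := by
    rw [h.re_sourceRatio, ← h.ofReal_source_div_response, Complex.norm_real, norm_of_nonneg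
      (div_pos (realSource_pos S z.re) (h.isResponse.pos z.re)).le]
  have exp_le : exp (1 / 250) ≤ 2 :=
    (exp_bound_div_one_sub_of_interval (by norm_num) (by norm_num)).trans (by norm_num)
  calc ‖sourceRatio ω E S F z‖ ≤ ‖sourceRatio ω E S F z.re‖ * exp (1 / 250) :=
        (close.mono (by linarith [h.inv_pow_le])).norm_le
    _ ≤ 2 * (s : ℝ) ^ 6 * 2 := by
        rw [norm_re_eq]
        gcongr
        exact h.re_sourceRatio_le z.re
    _ = 4 * (s : ℝ) ^ 6 := by ring

theorem coupling_mul_sourceRatio_le_exp (h : IsAnalyticStep ω Λ c₀ s S E F) {x : ℝ}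
    (hx : ¬NearInt (1 / (S : ℝ)) x) : E * (sourceRatio ω E S F x).re ≤ exp (-(s : ℝ) ^ 8) := by
  rw [h.re_sourceRatio]
  exact h.isRefinement.coupling_mul_source_div_le_exp hx

theorem groundPotential_refinedWeight (h : IsAnalyticStep ω Λ c₀ s S E F) (x : ℝ) :
    groundPotential ω (fun y : ℝ => (refinedWeight ω E S F y).re) x =
      groundPotential ω (fun y : ℝ => (F y).re) x + E * (1 - (sourceRatio ω E S F x).re) := by
  simp only [h.re_refinedWeight, h.re_sourceRatio]
  exact h.isRefinement.groundPotential_eq x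

end IsAnalyticStep

section ConstantWeight

variable {ω Λ E : ℝ} {s : ℕ} {Y : ℝ → ℝ}

theorem IsInputConductance.le_of_one (h : IsInputConductance ω E (fun _ => 1) Y) (x : ℝ) :
    E ≤ Y x := by
  rw [h.eq_add_transmission_mul x]
  linarith [h.transmission_mul_pos x]

theorem IsInputConductance.le_add_one_of_one (h : IsInputConductance ω E (fun _ => 1) Y) (x : ℝ) :
    Y x ≤ E + 1 := by
  rw [h.eq_add_transmission_mul x]
  linarith [h.transmission_mul_le_edge x]

theorem IsInputConductance.transmission_le_half (h : IsInputConductance ω E (fun _ => 1) Y)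
    (hE : 1 ≤ E) (x : ℝ) : transmission ω (fun _ => 1) Y x ≤ 1 / 2 := by
  have := h.le_of_one (x + ω)
  rw [transmission, div_le_div_iff₀ (by linarith) (by norm_num)]
  linarith

theorem isAdmissible_one (hs : 10 ^ 6 ≤ s) (hE : 1 ≤ E) (hΛ : 2 + E + 1 / s ≤ Λ) :
    IsAdmissible ω Λ s E (fun _ => 1) := by
  have s_ge : (10 ^ 6 : ℝ) ≤ s := by exact_mod_cast hs
  have inv_s_pos : 0 < 1 / (s : ℝ) := by positivity
  exact {
    exp_neg_le_coupling := (exp_le_one_iff.mpr (by linarith)).trans hE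
    coupling_le := by linarith
    pos := fun _ => one_pos
    le_one := fun _ => le_rfl
    periodic := fun _ => rfl
    inv_sq_le := fun _ _ => (div_le_one (by positivity)).mpr (one_le_pow₀ (by linarith))
    exp_neg_le := fun _ => exp_le_one_iff.mpr (by rw [neg_nonpos]; positivity)
    groundPotential_le := fun _ => by
      rw [groundPotential]
      linarith
    conductance_le := fun ω' _ Y hY x _ => by
      have s6_ge : (s : ℝ) ≤ (s : ℝ) ^ 6 := le_self_pow₀ (by linarith) (by norm_num)
      nlinarith [hY.le_add_one_of_one x]
    orbitProd_le_half := fun ω' _ Y hY x => by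
      refine (orbitProd_anti ω' (fun y => (hY.transmission_pos y).le) hY.transmission_le_one
        (Nat.one_le_pow 7 s (by linarith)) x).trans ?_
      rw [orbitProd_one]
      exact hY.transmission_le_half hE x }

theorem isAnalyticAdmissible_one (hs : 10 ^ 6 ≤ s) (hE : 1 ≤ E) (hΛ : 2 + E + 1 / s ≤ Λ) :
    IsAnalyticAdmissible ω Λ s E (fun _ => 1) where
  admissible := isAdmissible_one hs hE hΛ
  periodic _ := rfl
  differentiableOn := differentiableOn_const _
  inCone _ _ := ⟨by norm_num, by norm_num⟩
  real _ := ⟨by norm_num, by norm_num⟩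

end ConstantWeight

/-! ### Smoothness from holomorphic extensions -/

section HolomorphicExtension

variable {P : ℂ → ℂ} {r A : ℝ}

theorem differentiableAt_iteratedDeriv_of_strip (hr : 0 < r)
    (hP : DifferentiableOn ℂ P (strip r)) (j : ℕ) (x : ℝ) :
    DifferentiableAt ℂ (iteratedDeriv j P) x := by
  rw [iteratedDeriv_eq_iterate]
  exact ((hP.analyticOnNhd (isOpen_strip r)).iterated_deriv j x
    (ofReal_mem_strip hr x)).differentiableAt

theorem iteratedDeriv_re_ofReal (hr : 0 < r) (hP : DifferentiableOn ℂ P (strip r)) (j : ℕ) :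
    iteratedDeriv j (fun x : ℝ => (P x).re) = fun x : ℝ => (iteratedDeriv j P x).re := by
  induction j with
  | zero => simp
  | succ j ih =>
    rw [iteratedDeriv_succ, ih]
    funext x
    rw [iteratedDeriv_succ]
    exact (differentiableAt_iteratedDeriv_of_strip hr hP j x).hasDerivAt.real_of_complex.deriv

theorem contDiff_re_ofReal (hr : 0 < r) (hP : DifferentiableOn ℂ P (strip r)) :
    ContDiff ℝ (⊤ : ℕ∞) (fun x : ℝ => (P x).re) := by
  refine contDiff_of_differentiable_iteratedDeriv fun j _ x => ?_
  rw [iteratedDeriv_re_ofReal hr hP]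
  exact (differentiableAt_iteratedDeriv_of_strip hr hP j
    x).hasDerivAt.real_of_complex.differentiableAt

theorem abs_iteratedDeriv_re_ofReal_le (hr : 0 < r) (hP : DifferentiableOn ℂ P (strip r))
    (hA : ∀ z ∈ strip r, ‖P z‖ ≤ A) (j : ℕ) (x : ℝ) :
    |iteratedDeriv j (fun x : ℝ => (P x).re) x| ≤ j.factorial * A / (r / 2) ^ j := by
  have closedBall_subset : Metric.closedBall (x : ℂ) (r / 2) ⊆ strip r :=
    (Metric.closedBall_subset_ball (by linarith)).trans (ball_subset_strip x r)
  rw [iteratedDeriv_re_ofReal hr hP]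
  refine (Complex.abs_re_le_norm _).trans ?_
  exact Complex.norm_iteratedDeriv_le_of_forall_mem_sphere_norm_le j (by linarith)
    (hP.mono (Metric.closure_ball_subset_closedBall.trans closedBall_subset)).diffContOnCl
    fun z hz => hA z (closedBall_subset (Metric.sphere_subset_closedBall hz))

end HolomorphicExtension

section SmoothSeries

variable {u : ℕ → ℝ → ℝ} {b : ℕ → ℕ → ℝ}

theorem summable_of_abs_iteratedDeriv_le (hb : ∀ j, Summable (b j))
    (hub : ∀ j i x, |iteratedDeriv j (u i) x| ≤ b j i) (x : ℝ) : Summable fun i => u i x :=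
  .of_norm_bounded (hb 0) fun i => by simpa using hub 0 i x

theorem contDiff_tsum_of_abs_iteratedDeriv_le (hu : ∀ i, ContDiff ℝ (⊤ : ℕ∞) (u i))
    (hb : ∀ j, Summable (b j)) (hub : ∀ j i x, |iteratedDeriv j (u i) x| ≤ b j i) :
    ContDiff ℝ (⊤ : ℕ∞) fun x => ∑' i, u i x :=
  contDiff_tsum hu (fun j _ => hb j) fun j i x _ =>
    norm_iteratedFDeriv_eq_norm_iteratedDeriv.trans_le (hub j i x)

theorem abs_iteratedDeriv_sum_sub_tsum_le (hu : ∀ i, ContDiff ℝ (⊤ : ℕ∞) (u i))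
    (hb : ∀ j, Summable (b j)) (hub : ∀ j i x, |iteratedDeriv j (u i) x| ≤ b j i)
    (n j : ℕ) (x : ℝ) :
    |iteratedDeriv j (fun y => ∑ i ∈ Finset.range n, u i y - ∑' i, u i y) x| ≤
      ∑' i, b j (i + n) := by
  have tail_eq : (fun y => ∑ i ∈ Finset.range n, u i y - ∑' i, u i y) =
      -fun y => ∑' i, u (i + n) y := by
    funext y
    rw [← (summable_of_abs_iteratedDeriv_le hb hub y).sum_add_tsum_nat_add n, sub_add_cancel_left,
      Pi.neg_apply]
  have tail_summable (j : ℕ) : Summable fun i => b j (i + n) := (summable_nat_add_iff n).mpr (hb j)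
  have norm_le (j i : ℕ) (x : ℝ) : ‖iteratedFDeriv ℝ j (u (i + n)) x‖ ≤ b j (i + n) :=
    norm_iteratedFDeriv_eq_norm_iteratedDeriv.trans_le (hub j _ x)
  rw [tail_eq, iteratedDeriv_neg, abs_neg, ← norm_eq_abs,
    ← norm_iteratedFDeriv_eq_norm_iteratedDeriv,
    iteratedFDeriv_tsum_apply (N := ⊤) (fun i => hu _) (fun j _ => tail_summable j)
      (fun j i x _ => norm_le j i x) le_top]
  exact tsum_of_norm_bounded (tail_summable j).hasSum fun i => norm_le j i x

theorem exists_abs_iteratedDeriv_sum_sub_tsum_le (hu : ∀ i, ContDiff ℝ (⊤ : ℕ∞) (u i))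
    (hb : ∀ j, Summable (b j)) (hub : ∀ j i x, |iteratedDeriv j (u i) x| ≤ b j i)
    (l : ℕ) {ε : ℝ} (hε : 0 < ε) :
    ∃ N : ℕ, ∀ n ≥ N, ∀ j ≤ l, ∀ x : ℝ,
      |iteratedDeriv j (fun y => ∑ i ∈ Finset.range n, u i y - ∑' i, u i y) x| ≤ ε := by
  have tails_small : ∀ᶠ n in atTop, ∀ j ∈ Set.Iic l, ∑' i, b j (i + n) < ε :=
    (Set.finite_Iic l).eventually_all.mpr fun j _ =>
      (tendsto_sum_nat_add (b j)).eventually_lt_const hε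
  obtain ⟨N, hN⟩ := eventually_atTop.mp tails_small
  exact ⟨N, fun n hn j hj x =>
    (abs_iteratedDeriv_sum_sub_tsum_le hu hb hub n j x).trans (hN n hn j hj).le⟩

end SmoothSeries

theorem integral_le_of_eq_zero_of_not_nearInt {θ : ℝ → ℝ} (hθ : Continuous θ) {B δ : ℝ}
    (hδ : 0 < δ) (hδ' : δ ≤ 1 / 4) (hB : ∀ x, θ x ≤ B) (hzero : ∀ x, ¬NearInt δ x → θ x = 0) :
    ∫ x in (0 : ℝ)..1, θ x ≤ 2 * B * δ := by
  have integrable (a b : ℝ) : IntervalIntegrable θ volume a b := hθ.intervalIntegrable a b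
  have left_le : ∫ x in (0 : ℝ)..δ, θ x ≤ ∫ _ in (0 : ℝ)..δ, B :=
    intervalIntegral.integral_mono_on hδ.le (integrable _ _) (by simp) fun _ _ => hB _
  have right_le : ∫ x in (1 - δ)..1, θ x ≤ ∫ _ in (1 - δ)..1, B :=
    intervalIntegral.integral_mono_on (by linarith) (integrable _ _) (by simp) fun _ _ => hB _
  have middle_eq : ∫ x in δ..(1 - δ), θ x = ∫ _ in δ..(1 - δ), (0 : ℝ) := by
    refine intervalIntegral.integral_congr_uIoo fun x hx => hzero _ ?_
    rw [Set.uIoo_of_le (by linarith)] at hx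
    rintro ⟨p, near⟩
    obtain ⟨lower, upper⟩ := abs_le.mp near
    rcases le_or_gt p 0 with nonpos | pos
    · have : (p : ℝ) ≤ 0 := by exact_mod_cast nonpos
      linarith [hx.1]
    · have : (1 : ℝ) ≤ p := by exact_mod_cast pos
      linarith [hx.2]
  rw [← intervalIntegral.integral_add_adjacent_intervals (integrable 0 δ) (integrable δ 1),
    ← intervalIntegral.integral_add_adjacent_intervals (integrable δ (1 - δ)) (integrable _ 1),
    middle_eq]
  simp only [intervalIntegral.integral_const, smul_eq_mul, sub_zero, mul_zero] at left_le right_le ⊢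
  linarith

theorem exp_neg_posLog_mul_le_one {r : ℝ} (hr : 0 < r) : exp (-log⁺ r) * r ≤ 1 := by
  rw [exp_neg, inv_mul_le_iff₀ (exp_pos _), mul_one]
  exact (log_le_iff_le_exp hr).mp (le_max_right _ _)

theorem pow_mul_exp_neg_le {t : ℝ} (ht : 0 < t) (n : ℕ) :
    t ^ n * exp (-t) ≤ (n + 1).factorial / t := by
  have exp_ge := pow_div_factorial_le_exp t ht.le (n + 1)
  rw [div_le_iff₀ (by positivity)] at exp_ge
  rw [le_div_iff₀ ht]
  calc t ^ n * exp (-t) * t = t ^ (n + 1) * exp (-t) := by ring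
    _ ≤ exp t * (n + 1).factorial * exp (-t) := by gcongr
    _ = (n + 1).factorial * (exp t * exp (-t)) := by ring
    _ = (n + 1).factorial := by rw [← exp_add, add_neg_cancel, exp_zero, mul_one]

/-! ### The approximating potentials -/

/-- The scale `s_k`, defined so that `s_{k + 1} = s_k ^ 16`. -/
def scaleSeq (s₀ k : ℕ) : ℕ := s₀ ^ 16 ^ k

/-- The coupling `E_k` of the `k`-th network: `E_0 = E₀` and `E_{k + 1} = exp (-s_k ^ 8)`. -/
noncomputable def couplingSeq (E₀ : ℝ) (s₀ : ℕ) : ℕ → ℝ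
  | 0 => E₀
  | k + 1 => exp (-(scaleSeq s₀ k : ℝ) ^ 8)

/-- The holomorphic extension of the `k`-th ground state: the constant `1` for `k = 0`, then
successively multiplied by the response of the `k`-th network. -/
noncomputable def weightSeq (ω E₀ : ℝ) (s₀ : ℕ) : ℕ → ℂ → ℂ
  | 0 => fun _ => 1
  | k + 1 => refinedWeight ω (couplingSeq E₀ s₀ k) (scaleSeq s₀ (k + 1)) (weightSeq ω E₀ s₀ k)

/-- The holomorphic extension of the ratio `P_k` of source to response in the `k`-th network. -/
noncomputable def ratioSeq (ω E₀ : ℝ) (s₀ k : ℕ) : ℂ → ℂ :=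
  sourceRatio ω (couplingSeq E₀ s₀ k) (scaleSeq s₀ (k + 1)) (weightSeq ω E₀ s₀ k)

/-- The increment `E_k (1 - P_k)` by which the `k`-th potential changes. -/
noncomputable def potentialIncrement (ω E₀ : ℝ) (s₀ k : ℕ) (x : ℝ) : ℝ :=
  couplingSeq E₀ s₀ k * (1 - (ratioSeq ω E₀ s₀ k x).re)

/-- The `n`-th potential; it has a bounded ground state, the real part of `weightSeq`. -/
noncomputable def approxPotential (ω E₀ : ℝ) (s₀ n : ℕ) (x : ℝ) : ℝ :=
  2 + ∑ k ∈ Finset.range n, potentialIncrement ω E₀ s₀ k x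

/-- The limit of the potentials `approxPotential`. -/
noncomputable def limitPotential (ω E₀ : ℝ) (s₀ : ℕ) (x : ℝ) : ℝ :=
  2 + ∑' k, potentialIncrement ω E₀ s₀ k x

section ScaleSeq

variable {s₀ : ℕ}

theorem scaleSeq_succ (s₀ k : ℕ) : scaleSeq s₀ (k + 1) = scaleSeq s₀ k ^ 16 := by
  rw [scaleSeq, scaleSeq, ← pow_mul, pow_succ]

theorem mul_two_pow_le_scaleSeq (hs₀ : 2 ≤ s₀) (k : ℕ) : s₀ * 2 ^ k ≤ scaleSeq s₀ k := by
  induction k with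
  | zero => simp [scaleSeq]
  | succ k ih =>
    have two_le : 2 ≤ scaleSeq s₀ k :=
      hs₀.trans ((Nat.le_mul_of_pos_right _ (by positivity)).trans ih)
    calc s₀ * 2 ^ (k + 1) = s₀ * 2 ^ k * 2 := by ring
      _ ≤ scaleSeq s₀ k * scaleSeq s₀ k := by gcongr
      _ = scaleSeq s₀ k ^ 2 := (sq _).symm
      _ ≤ scaleSeq s₀ k ^ 16 := Nat.pow_le_pow_right (by linarith) (by norm_num)
      _ = scaleSeq s₀ (k + 1) := (scaleSeq_succ s₀ k).symm

theorem le_scaleSeq (hs₀ : 2 ≤ s₀) (k : ℕ) : s₀ ≤ scaleSeq s₀ k :=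
  (Nat.le_mul_of_pos_right _ (by positivity)).trans (mul_two_pow_le_scaleSeq hs₀ k)

theorem two_pow_le_scaleSeq (hs₀ : 2 ≤ s₀) (k : ℕ) : (2 : ℝ) ^ k ≤ scaleSeq s₀ k := by
  exact_mod_cast (Nat.le_mul_of_pos_left _ (by linarith)).trans (mul_two_pow_le_scaleSeq hs₀ k)

end ScaleSeq

section CouplingSeq

variable {E₀ : ℝ} {s₀ : ℕ}

theorem couplingSeq_pos (hE₀ : 0 < E₀) (s₀ k : ℕ) : 0 < couplingSeq E₀ s₀ k := by
  cases k with
  | zero => exact hE₀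
  | succ k => exact exp_pos _

theorem pow_scaleSeq_mul_couplingSeq_succ_le (E₀ : ℝ) (hs₀ : 2 ≤ s₀) (n k : ℕ) :
    (scaleSeq s₀ k : ℝ) ^ n * couplingSeq E₀ s₀ (k + 1) ≤ (n + 1).factorial * (1 / 2) ^ k := by
  have two_pow_le := two_pow_le_scaleSeq hs₀ k
  have one_le : (1 : ℝ) ≤ scaleSeq s₀ k := (one_le_pow₀ (by norm_num)).trans two_pow_le
  rw [couplingSeq]
  generalize (scaleSeq s₀ k : ℝ) = t at two_pow_le one_le
  calc t ^ n * exp (-t ^ 8) ≤ t ^ n * exp (-t) := by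
        gcongr
        exact le_self_pow₀ one_le (by norm_num)
    _ ≤ (n + 1).factorial / t := pow_mul_exp_neg_le (by linarith) n
    _ ≤ (n + 1).factorial / 2 ^ k := by gcongr
    _ = (n + 1).factorial * (1 / 2) ^ k := by rw [one_div_pow, mul_one_div]

theorem tendsto_couplingSeq (E₀ : ℝ) (hs₀ : 2 ≤ s₀) :
    Tendsto (couplingSeq E₀ s₀) atTop (nhds 0) := by
  rw [← tendsto_add_atTop_iff_nat 1]
  refine squeeze_zero (fun k => (exp_pos _).le)
    (fun k => by simpa using pow_scaleSeq_mul_couplingSeq_succ_le E₀ hs₀ 0 k)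
    (tendsto_pow_atTop_nhds_zero_of_lt_one (r := (2 : ℝ)⁻¹) (by norm_num) (by norm_num))

/-- The bound on the `j`-th derivative of `potentialIncrement` given by Cauchy's estimate. -/
noncomputable def incrementBound (E₀ : ℝ) (s₀ j k : ℕ) : ℝ :=
  j.factorial * (couplingSeq E₀ s₀ k * (1 + 4 * (scaleSeq s₀ k : ℝ) ^ 6)) /
    (1 / (scaleSeq s₀ (k + 1) : ℝ) ^ 14 / 2) ^ j

theorem incrementBound_succ_le (E₀ : ℝ) (hs₀ : 2 ≤ s₀) (j k : ℕ) :
    incrementBound E₀ s₀ j (k + 1) ≤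
      5 * j.factorial * 2 ^ j * (96 + 3584 * j + 1).factorial * (1 / 2) ^ k := by
  have decay := pow_scaleSeq_mul_couplingSeq_succ_le E₀ hs₀ (96 + 3584 * j) k
  have one_le : (1 : ℝ) ≤ scaleSeq s₀ k :=
    (one_le_pow₀ (by norm_num)).trans (two_pow_le_scaleSeq hs₀ k)
  have E_nonneg : 0 ≤ couplingSeq E₀ s₀ (k + 1) := (exp_pos _).le
  rw [incrementBound, scaleSeq_succ s₀ (k + 1), scaleSeq_succ s₀ k]
  push_cast
  generalize (scaleSeq s₀ k : ℝ) = t at decay one_le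
  generalize couplingSeq E₀ s₀ (k + 1) = e at decay E_nonneg
  have radius_eq : (1 / ((t ^ 16) ^ 16) ^ 14 / 2) ^ j = (2 ^ j * t ^ (3584 * j))⁻¹ := by
    rw [pow_mul, ← mul_pow, ← inv_pow]
    congr 1
    field_simp
  have amplitude_le : 1 + 4 * (t ^ 16) ^ 6 ≤ 5 * t ^ 96 := by
    have : 1 ≤ t ^ 96 := one_le_pow₀ one_le
    linarith [pow_mul t 16 6]
  rw [radius_eq, div_inv_eq_mul]
  calc (j.factorial : ℝ) * (e * (1 + 4 * (t ^ 16) ^ 6)) * (2 ^ j * t ^ (3584 * j))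
      ≤ j.factorial * (e * (5 * t ^ 96)) * (2 ^ j * t ^ (3584 * j)) := by gcongr
    _ = 5 * j.factorial * 2 ^ j * (t ^ (96 + 3584 * j) * e) := by rw [pow_add]; ring
    _ ≤ 5 * j.factorial * 2 ^ j * ((96 + 3584 * j + 1).factorial * (1 / 2) ^ k) := by gcongr
    _ = 5 * j.factorial * 2 ^ j * (96 + 3584 * j + 1).factorial * (1 / 2) ^ k := by ring

theorem summable_incrementBound (E₀ : ℝ) (hs₀ : 2 ≤ s₀) (j : ℕ) :
    Summable (incrementBound E₀ s₀ j) := by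
  rw [← summable_nat_add_iff 1]
  refine .of_nonneg_of_le (fun k => ?_) (incrementBound_succ_le E₀ hs₀ j)
    ((summable_geometric_of_lt_one (by norm_num) (by norm_num)).mul_left _)
  have : 0 ≤ couplingSeq E₀ s₀ (k + 1) := (exp_pos _).le
  rw [incrementBound]
  positivity

end CouplingSeq

/-- Initial data `E₀`, `s₀` from which the refinement can be iterated forever. -/
structure IsInitialData (ω Λ c₀ E₀ : ℝ) (s₀ : ℕ) : Prop where
  large : 10 ^ 6 ≤ s₀
  one_le_coupling : 1 ≤ E₀
  bound_ge : 2 + E₀ + 1 / s₀ ≤ Λ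
  bound_le : Λ ≤ s₀
  diophantine_pos : 0 < c₀
  diophantine : IsBadlyApproximable c₀ ω
  diophantine_le : 20 / c₀ ≤ s₀

namespace IsInitialData

variable {ω Λ c₀ E₀ : ℝ} {s₀ : ℕ}

theorem two_le (h : IsInitialData ω Λ c₀ E₀ s₀) : 2 ≤ s₀ := le_trans (by norm_num) h.large

theorem couplingSeq_pos (h : IsInitialData ω Λ c₀ E₀ s₀) (k : ℕ) : 0 < couplingSeq E₀ s₀ k :=
  _root_.couplingSeq_pos (one_pos.trans_le h.one_le_coupling) s₀ k

theorem isAnalyticStep_of_isAnalyticAdmissible (h : IsInitialData ω Λ c₀ E₀ s₀) {k : ℕ} {E : ℝ}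
    {F : ℂ → ℂ} (hF : IsAnalyticAdmissible ω Λ (scaleSeq s₀ k) E F) :
    IsAnalyticStep ω Λ c₀ (scaleSeq s₀ k) (scaleSeq s₀ (k + 1)) E F := by
  have le_scale : s₀ ≤ scaleSeq s₀ k := le_scaleSeq h.two_le k
  have le_scale_real : (s₀ : ℝ) ≤ scaleSeq s₀ k := by exact_mod_cast le_scale
  have inv_nonneg : (0 : ℝ) ≤ 1 / s₀ := by positivity
  exact {
    analytic := hF
    large := h.large.trans le_scale
    scale_eq := scaleSeq_succ s₀ k
    diophantine_pos := h.diophantine_pos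
    diophantine := h.diophantine
    diophantine_le := h.diophantine_le.trans le_scale_real
    one_le_bound := by linarith [h.bound_ge, h.one_le_coupling]
    bound_le := h.bound_le.trans le_scale_real }

theorem isAnalyticStep (h : IsInitialData ω Λ c₀ E₀ s₀) (k : ℕ) :
    IsAnalyticStep ω Λ c₀ (scaleSeq s₀ k) (scaleSeq s₀ (k + 1)) (couplingSeq E₀ s₀ k)
      (weightSeq ω E₀ s₀ k) := by
  refine h.isAnalyticStep_of_isAnalyticAdmissible ?_
  induction k with
  | zero =>
    rw [scaleSeq, pow_zero, pow_one]
    exact isAnalyticAdmissible_one h.large h.one_le_coupling h.bound_ge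
  | succ k ih => exact (h.isAnalyticStep_of_isAnalyticAdmissible ih).isAnalyticAdmissible

theorem isAdmissible (h : IsInitialData ω Λ c₀ E₀ s₀) (k : ℕ) :
    IsAdmissible ω Λ (scaleSeq s₀ k) (couplingSeq E₀ s₀ k)
      (fun x : ℝ => (weightSeq ω E₀ s₀ k x).re) :=
  (h.isAnalyticStep k).analytic.admissible

theorem million_le_scaleSeq (h : IsInitialData ω Λ c₀ E₀ s₀) (k : ℕ) :
    (10 ^ 6 : ℝ) ≤ scaleSeq s₀ k := by
  exact_mod_cast (h.isAnalyticStep k).large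

theorem strip_width_pos (h : IsInitialData ω Λ c₀ E₀ s₀) (k : ℕ) :
    0 < 1 / (scaleSeq s₀ (k + 1) : ℝ) ^ 14 := by
  have := h.million_le_scaleSeq (k + 1)
  positivity

theorem continuous_ratioSeq (h : IsInitialData ω Λ c₀ E₀ s₀) (k : ℕ) :
    Continuous fun x : ℝ => (ratioSeq ω E₀ s₀ k x).re :=
  (contDiff_re_ofReal (h.strip_width_pos k)
    (h.isAnalyticStep k).differentiableOn_sourceRatio).continuous

theorem periodic_ratioSeq (h : IsInitialData ω Λ c₀ E₀ s₀) (k : ℕ) :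
    Function.Periodic (fun x : ℝ => (ratioSeq ω E₀ s₀ k x).re) 1 := fun x => by
  simp only [Complex.ofReal_add, Complex.ofReal_one]
  rw [ratioSeq, (h.isAnalyticStep k).periodic_sourceRatio x]

theorem ratioSeq_pos (h : IsInitialData ω Λ c₀ E₀ s₀) (k : ℕ) (x : ℝ) :
    0 < (ratioSeq ω E₀ s₀ k x).re :=
  (h.isAnalyticStep k).re_sourceRatio_pos x

theorem differentiableOn_increment (h : IsInitialData ω Λ c₀ E₀ s₀) (k : ℕ) :
    DifferentiableOn ℂ (fun z => (couplingSeq E₀ s₀ k : ℂ) * (1 - ratioSeq ω E₀ s₀ k z))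
      (strip (1 / (scaleSeq s₀ (k + 1) : ℝ) ^ 14)) :=
  (differentiableOn_const _).mul
    ((differentiableOn_const _).sub (h.isAnalyticStep k).differentiableOn_sourceRatio)

theorem norm_increment_le (h : IsInitialData ω Λ c₀ E₀ s₀) (k : ℕ) {z : ℂ}
    (hz : z ∈ strip (1 / (scaleSeq s₀ (k + 1) : ℝ) ^ 14)) :
    ‖(couplingSeq E₀ s₀ k : ℂ) * (1 - ratioSeq ω E₀ s₀ k z)‖ ≤
      couplingSeq E₀ s₀ k * (1 + 4 * (scaleSeq s₀ k : ℝ) ^ 6) := by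
  have coupling_nonneg := (h.couplingSeq_pos k).le
  have triangle := norm_sub_le (1 : ℂ) (ratioSeq ω E₀ s₀ k z)
  have ratio_le : ‖ratioSeq ω E₀ s₀ k z‖ ≤ 4 * (scaleSeq s₀ k : ℝ) ^ 6 :=
    (h.isAnalyticStep k).norm_sourceRatio_le hz
  rw [norm_one] at triangle
  rw [norm_mul, Complex.norm_real, norm_of_nonneg coupling_nonneg]
  gcongr
  linarith

theorem potentialIncrement_eq_re (ω E₀ : ℝ) (s₀ k : ℕ) : potentialIncrement ω E₀ s₀ k =
    fun x : ℝ => ((couplingSeq E₀ s₀ k : ℂ) * (1 - ratioSeq ω E₀ s₀ k x)).re := by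
  funext x
  simp [potentialIncrement]

theorem contDiff_potentialIncrement (h : IsInitialData ω Λ c₀ E₀ s₀) (k : ℕ) :
    ContDiff ℝ (⊤ : ℕ∞) (potentialIncrement ω E₀ s₀ k) := by
  rw [potentialIncrement_eq_re]
  exact contDiff_re_ofReal (h.strip_width_pos k) (h.differentiableOn_increment k)

theorem abs_iteratedDeriv_potentialIncrement_le (h : IsInitialData ω Λ c₀ E₀ s₀) (j k : ℕ)
    (x : ℝ) : |iteratedDeriv j (potentialIncrement ω E₀ s₀ k) x| ≤ incrementBound E₀ s₀ j k := by
  rw [potentialIncrement_eq_re]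
  exact abs_iteratedDeriv_re_ofReal_le (h.strip_width_pos k) (h.differentiableOn_increment k)
    (fun _ hz => h.norm_increment_le k hz) j x

theorem periodic_potentialIncrement (h : IsInitialData ω Λ c₀ E₀ s₀) (k : ℕ) :
    Function.Periodic (potentialIncrement ω E₀ s₀ k) 1 :=
  (h.periodic_ratioSeq k).comp fun P => couplingSeq E₀ s₀ k * (1 - P)

theorem contDiff_approxPotential (h : IsInitialData ω Λ c₀ E₀ s₀) (n : ℕ) :
    ContDiff ℝ (⊤ : ℕ∞) (approxPotential ω E₀ s₀ n) :=
  contDiff_const.add (ContDiff.sum fun k _ => h.contDiff_potentialIncrement k)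

theorem periodic_approxPotential (h : IsInitialData ω Λ c₀ E₀ s₀) (n : ℕ) :
    Function.Periodic (approxPotential ω E₀ s₀ n) 1 := fun x => by
  simp only [approxPotential, h.periodic_potentialIncrement _ x]

theorem contDiff_limitPotential (h : IsInitialData ω Λ c₀ E₀ s₀) :
    ContDiff ℝ (⊤ : ℕ∞) (limitPotential ω E₀ s₀) :=
  contDiff_const.add (contDiff_tsum_of_abs_iteratedDeriv_le h.contDiff_potentialIncrement
    (summable_incrementBound E₀ h.two_le) h.abs_iteratedDeriv_potentialIncrement_le)

theorem periodic_limitPotential (h : IsInitialData ω Λ c₀ E₀ s₀) :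
    Function.Periodic (limitPotential ω E₀ s₀) 1 := fun x => by
  simp only [limitPotential, h.periodic_potentialIncrement _ x]

theorem exists_abs_iteratedDeriv_approxPotential_sub_le (h : IsInitialData ω Λ c₀ E₀ s₀) (l : ℕ)
    {ε : ℝ} (hε : 0 < ε) : ∃ N : ℕ, ∀ n ≥ N, ∀ j ≤ l, ∀ x : ℝ,
      |iteratedDeriv j (fun y => approxPotential ω E₀ s₀ n y - limitPotential ω E₀ s₀ y) x| ≤
        ε := by
  simp only [approxPotential, limitPotential, add_sub_add_left_eq_sub]
  exact exists_abs_iteratedDeriv_sum_sub_tsum_le h.contDiff_potentialIncrement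
    (summable_incrementBound E₀ h.two_le) h.abs_iteratedDeriv_potentialIncrement_le l hε

theorem tendsto_approxPotential (h : IsInitialData ω Λ c₀ E₀ s₀) (x : ℝ) :
    Tendsto (fun n => approxPotential ω E₀ s₀ n x) atTop (nhds (limitPotential ω E₀ s₀ x)) :=
  (summable_of_abs_iteratedDeriv_le (summable_incrementBound E₀ h.two_le)
    h.abs_iteratedDeriv_potentialIncrement_le x).hasSum.tendsto_sum_nat.const_add 2

theorem groundPotential_weightSeq (h : IsInitialData ω Λ c₀ E₀ s₀) (n : ℕ) :
    groundPotential ω (fun x : ℝ => (weightSeq ω E₀ s₀ n x).re) =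
      approxPotential ω E₀ s₀ n := by
  induction n with
  | zero =>
    funext x
    norm_num [groundPotential, approxPotential, weightSeq]
  | succ n ih =>
    funext x
    rw [weightSeq, (h.isAnalyticStep n).groundPotential_refinedWeight x, ih, approxPotential,
      approxPotential, Finset.sum_range_succ, ← add_assoc, potentialIncrement, ratioSeq]

theorem isGroundState (h : IsInitialData ω Λ c₀ E₀ s₀) (n : ℕ) :
    IsGroundState ω (approxPotential ω E₀ s₀ n) (fun x : ℝ => (weightSeq ω E₀ s₀ n x).re) :=
  h.groundPotential_weightSeq n ▸ isGroundState_groundPotential ω (h.isAdmissible n).pos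

theorem tendsto_LEn_approxPotential (h : IsInitialData ω Λ c₀ E₀ s₀) (n : ℕ) :
    Tendsto (LEn ω (SchrodingerCocycle (approxPotential ω E₀ s₀ n))) atTop (nhds 0) :=
  (h.isGroundState n).tendsto_LEn_zero (exp_pos _) (h.isAdmissible n).exp_neg_le
    (h.isAdmissible n).le_one (h.contDiff_approxPotential n).continuous

theorem abs_approxPotential_add_couplingSeq_le (h : IsInitialData ω Λ c₀ E₀ s₀) (k : ℕ) (x : ℝ) :
    |approxPotential ω E₀ s₀ k x + couplingSeq E₀ s₀ k| ≤ Λ := by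
  have weight_pos := (h.isAdmissible k).pos
  have potential_pos : 0 < approxPotential ω E₀ s₀ k x := by
    rw [← h.groundPotential_weightSeq, groundPotential]
    exact div_pos (add_pos (weight_pos _) (weight_pos _)) (weight_pos _)
  have potential_le := (h.isAdmissible k).groundPotential_le x
  rw [h.groundPotential_weightSeq] at potential_le
  have inv_nonneg : (0 : ℝ) ≤ 1 / scaleSeq s₀ k := by positivity
  rw [abs_of_pos (add_pos potential_pos (h.couplingSeq_pos k))]
  linarith

end IsInitialData

/-! ### The lower bound for the Lyapunov exponent -/

/-- The loss `log⁺ (E_k P_k / E_{k + 1})` of the `k`-th step: replacing the perturbation `E_k P_k`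
of the potential `approxPotential (k + 1)` by `E_{k + 1}` costs at most a factor
`exp (-couplingLoss)` per iterate. -/
noncomputable def couplingLoss (ω E₀ : ℝ) (s₀ k : ℕ) (x : ℝ) : ℝ :=
  log⁺ (couplingSeq E₀ s₀ k * (ratioSeq ω E₀ s₀ k x).re / couplingSeq E₀ s₀ (k + 1))

namespace IsInitialData

variable {ω Λ c₀ E₀ : ℝ} {s₀ : ℕ}

theorem continuous_couplingLoss (h : IsInitialData ω Λ c₀ E₀ s₀) (k : ℕ) :
    Continuous (couplingLoss ω E₀ s₀ k) :=
  continuous_posLog.comp ((continuous_const.mul (h.continuous_ratioSeq k)).div_const _)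

theorem periodic_couplingLoss (h : IsInitialData ω Λ c₀ E₀ s₀) (k : ℕ) :
    Function.Periodic (couplingLoss ω E₀ s₀ k) 1 :=
  (h.periodic_ratioSeq k).comp fun P =>
    log⁺ (couplingSeq E₀ s₀ k * P / couplingSeq E₀ s₀ (k + 1))

theorem coupling_mul_ratioSeq_pos (h : IsInitialData ω Λ c₀ E₀ s₀) (k : ℕ) (x : ℝ) :
    0 < couplingSeq E₀ s₀ k * (ratioSeq ω E₀ s₀ k x).re :=
  mul_pos (h.couplingSeq_pos k) (h.ratioSeq_pos k x)

theorem exp_neg_couplingLoss_mul_le (h : IsInitialData ω Λ c₀ E₀ s₀) (k : ℕ) (x : ℝ) :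
    exp (-couplingLoss ω E₀ s₀ k x) * (couplingSeq E₀ s₀ k * (ratioSeq ω E₀ s₀ k x).re) ≤
      couplingSeq E₀ s₀ (k + 1) := by
  have coupling_pos := h.couplingSeq_pos (k + 1)
  have := exp_neg_posLog_mul_le_one (div_pos (h.coupling_mul_ratioSeq_pos k x) coupling_pos)
  rwa [mul_div_assoc', div_le_one coupling_pos] at this

theorem couplingLoss_le (h : IsInitialData ω Λ c₀ E₀ s₀) (k : ℕ) (x : ℝ) :
    couplingLoss ω E₀ s₀ k x ≤ 2 * (scaleSeq s₀ k : ℝ) ^ 8 := by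
  have scale_ge := h.million_le_scaleSeq k
  have product_pos := h.coupling_mul_ratioSeq_pos k x
  have ratio_pos := (h.ratioSeq_pos k x).le
  have ratio_le : (ratioSeq ω E₀ s₀ k x).re ≤ 2 * (scaleSeq s₀ k : ℝ) ^ 6 :=
    (h.isAnalyticStep k).re_sourceRatio_le x
  have coupling_le : couplingSeq E₀ s₀ k ≤ scaleSeq s₀ k :=
    (h.isAdmissible k).coupling_le.trans (h.isAnalyticStep k).bound_le
  have log_le : log (couplingSeq E₀ s₀ k * (ratioSeq ω E₀ s₀ k x).re) ≤
      (scaleSeq s₀ k : ℝ) ^ 8 :=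
    calc log (couplingSeq E₀ s₀ k * (ratioSeq ω E₀ s₀ k x).re)
        ≤ couplingSeq E₀ s₀ k * (ratioSeq ω E₀ s₀ k x).re := log_le_self product_pos.le
      _ ≤ scaleSeq s₀ k * (2 * (scaleSeq s₀ k : ℝ) ^ 6) := by gcongr
      _ = 2 * (scaleSeq s₀ k : ℝ) ^ 7 := by ring
      _ ≤ (scaleSeq s₀ k : ℝ) ^ 8 :=
          mul_pow_le_pow_of_lt (by linarith) (by linarith) (by norm_num)
  refine max_le (by positivity) ?_
  rw [log_div product_pos.ne' (h.couplingSeq_pos (k + 1)).ne', couplingSeq, log_exp]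
  linarith

theorem couplingLoss_eq_zero (h : IsInitialData ω Λ c₀ E₀ s₀) (k : ℕ) {x : ℝ}
    (hx : ¬NearInt (1 / (scaleSeq s₀ (k + 1) : ℝ)) x) : couplingLoss ω E₀ s₀ k x = 0 := by
  have coupling_pos := h.couplingSeq_pos (k + 1)
  rw [couplingLoss, posLog_eq_zero_iff,
    abs_of_pos (div_pos (h.coupling_mul_ratioSeq_pos k x) coupling_pos), div_le_one coupling_pos]
  exact (h.isAnalyticStep k).coupling_mul_sourceRatio_le_exp hx

theorem integral_couplingLoss_le (h : IsInitialData ω Λ c₀ E₀ s₀) (k : ℕ) :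
    ∫ x in (0 : ℝ)..1, couplingLoss ω E₀ s₀ k x ≤ (1 / 2) ^ (k + 1) := by
  have scale_ge := h.million_le_scaleSeq k
  have next_scale_ge := h.million_le_scaleSeq (k + 1)
  have scale_ge_pow : (10 ^ 6 : ℝ) * 2 ^ k ≤ scaleSeq s₀ k := by
    exact_mod_cast (Nat.mul_le_mul_right _ h.large).trans (mul_two_pow_le_scaleSeq h.two_le k)
  have localized := integral_le_of_eq_zero_of_not_nearInt (h.continuous_couplingLoss k)
    (by positivity) (one_div_le_one_div_of_le (by norm_num) (by linarith)) (h.couplingLoss_le k)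
    fun x hx => h.couplingLoss_eq_zero k hx
  refine localized.trans ?_
  rw [scaleSeq_succ]
  push_cast
  generalize (scaleSeq s₀ k : ℝ) = t at scale_ge scale_ge_pow
  calc 2 * (2 * t ^ 8) * (1 / t ^ 16) = 4 / t ^ 8 := by field_simp; norm_num
    _ ≤ 4 / (4 * 2 ^ (k + 1)) := by
        gcongr
        have := le_self_pow₀ (a := t) (by linarith) (show 8 ≠ 0 by norm_num)
        rw [pow_succ]
        linarith [pow_pos (two_pos (α := ℝ)) k]
    _ = (1 / 2) ^ (k + 1) := by
        rw [one_div_pow]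
        field_simp

theorem dirichletDet_pos (h : IsInitialData ω Λ c₀ E₀ s₀) (k n : ℕ) (x : ℝ) :
    0 < dirichletDet ω (fun y => approxPotential ω E₀ s₀ k y + couplingSeq E₀ s₀ k) n x :=
  ((h.isGroundState k).dirichletDet_pos_and_wronskian_pos
    (fun _ => le_add_of_nonneg_right (h.couplingSeq_pos k).le) n x).1

theorem mul_log_le_integral_log_dirichletDet_zero (h : IsInitialData ω Λ c₀ E₀ s₀) (n : ℕ) :
    n * log E₀ ≤ ∫ x in (0 : ℝ)..1,
      log (dirichletDet ω (fun y => approxPotential ω E₀ s₀ 0 y + couplingSeq E₀ s₀ 0) n x) := by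
  have det_pos := h.dirichletDet_pos 0 n
  have potential_eq : (fun y => approxPotential ω E₀ s₀ 0 y + couplingSeq E₀ s₀ 0) =
      fun _ => 2 + E₀ := by
    funext y
    simp [approxPotential, couplingSeq]
  rw [potential_eq] at det_pos ⊢
  have E₀_ge := h.one_le_coupling
  have log_cont := (continuous_dirichletDet (ω := ω) (continuous_const (y := 2 + E₀)) n).log
    fun x => (det_pos x).ne'
  have pointwise (x : ℝ) : n * log E₀ ≤ log (dirichletDet ω (fun _ => 2 + E₀) n x) := by
    rw [← log_pow]
    refine log_le_log (by positivity) ?_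
    refine le_trans ?_ (sub_one_pow_le_dirichletDet_const (ω := ω) (by linarith) n x)
    gcongr
    linarith
  simpa using intervalIntegral.integral_mono (μ := volume) (a := 0) (b := 1) zero_le_one
    intervalIntegrable_const (log_cont.intervalIntegrable 0 1) pointwise

theorem integral_log_dirichletDet_succ (h : IsInitialData ω Λ c₀ E₀ s₀) (n k : ℕ) :
    (∫ x in (0 : ℝ)..1, log (dirichletDet ω
        (fun y => approxPotential ω E₀ s₀ k y + couplingSeq E₀ s₀ k) n x)) -
      n * (1 / 2) ^ (k + 1) ≤ ∫ x in (0 : ℝ)..1, log (dirichletDet ω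
        (fun y => approxPotential ω E₀ s₀ (k + 1) y + couplingSeq E₀ s₀ (k + 1)) n x) := by
  have potential_eq (y : ℝ) : approxPotential ω E₀ s₀ k y + couplingSeq E₀ s₀ k =
      approxPotential ω E₀ s₀ (k + 1) y + couplingSeq E₀ s₀ k * (ratioSeq ω E₀ s₀ k y).re := by
    rw [approxPotential, approxPotential, Finset.sum_range_succ, potentialIncrement]
    ring
  have compare := (h.isGroundState (k + 1)).integral_log_dirichletDet_sub_le
    (V := fun y => approxPotential ω E₀ s₀ k y + couplingSeq E₀ s₀ k)
    (V' := fun y => approxPotential ω E₀ s₀ (k + 1) y + couplingSeq E₀ s₀ (k + 1))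
    (θ := couplingLoss ω E₀ s₀ k)
    (fun y => by linarith [potential_eq y, h.coupling_mul_ratioSeq_pos k y])
    (fun _ => posLog_nonneg)
    (fun y => by
      rw [potential_eq, add_sub_cancel_left, add_sub_cancel_left]
      exact h.exp_neg_couplingLoss_mul_le k y)
    ((h.contDiff_approxPotential k).continuous.add continuous_const)
    ((h.contDiff_approxPotential (k + 1)).continuous.add continuous_const)
    (h.continuous_couplingLoss k) (h.periodic_couplingLoss k) n
  have loss_le : n * ∫ x in (0 : ℝ)..1, couplingLoss ω E₀ s₀ k x ≤ n * (1 / 2) ^ (k + 1) :=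
    mul_le_mul_of_nonneg_left (h.integral_couplingLoss_le k) (Nat.cast_nonneg n)
  linarith

theorem mul_le_integral_log_dirichletDet (h : IsInitialData ω Λ c₀ E₀ s₀) (n k : ℕ) :
    n * (log E₀ - 1 + (1 / 2) ^ k) ≤ ∫ x in (0 : ℝ)..1,
      log (dirichletDet ω (fun y => approxPotential ω E₀ s₀ k y + couplingSeq E₀ s₀ k) n x) := by
  induction k with
  | zero => simpa using h.mul_log_le_integral_log_dirichletDet_zero n
  | succ k ih =>
    have half_add_half : (1 / 2 : ℝ) ^ k = (1 / 2) ^ (k + 1) + (1 / 2) ^ (k + 1) := by ring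
    rw [half_add_half] at ih
    linarith [h.integral_log_dirichletDet_succ n k]

theorem le_LEn_approxPotential_add (h : IsInitialData ω Λ c₀ E₀ s₀) {n : ℕ} (hn : 1 ≤ n) (k : ℕ) :
    log E₀ - 1 ≤
      LEn ω (SchrodingerCocycle fun y => approxPotential ω E₀ s₀ k y + couplingSeq E₀ s₀ k) n := by
  refine le_LEn_of_le_integral_log_dirichletDet
    ((h.contDiff_approxPotential k).continuous.add continuous_const) hn (h.dirichletDet_pos k n)
    (le_trans ?_ (h.mul_le_integral_log_dirichletDet n k))
  gcongr
  exact le_add_of_nonneg_right (by positivity)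

theorem tendsto_LEn_approxPotential_add (h : IsInitialData ω Λ c₀ E₀ s₀) (n : ℕ) :
    Tendsto (fun k => LEn ω
        (SchrodingerCocycle fun y => approxPotential ω E₀ s₀ k y + couplingSeq E₀ s₀ k) n) atTop
      (nhds (LEn ω (SchrodingerCocycle (limitPotential ω E₀ s₀)) n)) :=
  tendsto_LEn_of_tendsto (K := Λ + 2)
    (A' := fun k => SchrodingerCocycle fun y =>
      approxPotential ω E₀ s₀ k y + couplingSeq E₀ s₀ k)
    (fun k => continuous_schrodingerCocycle
      ((h.contDiff_approxPotential k).continuous.add continuous_const))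
    (fun _ => det_schrodingerCocycle _) (det_schrodingerCocycle _)
    (fun x => tendsto_schrodingerCocycle (by
      simpa using (h.tendsto_approxPotential x).add (tendsto_couplingSeq E₀ h.two_le)))
    (fun k x => (opNorm_schrodingerCocycle_le _ x).trans (by
      linarith [h.abs_approxPotential_add_couplingSeq_le k x])) n

theorem exists_le_tendsto_LEn_limitPotential (h : IsInitialData ω Λ c₀ E₀ s₀) :
    ∃ L : ℝ, log E₀ - 1 ≤ L ∧
      Tendsto (LEn ω (SchrodingerCocycle (limitPotential ω E₀ s₀))) atTop (nhds L) := by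
  obtain ⟨L, hL⟩ := exists_tendsto_LEn (ω := ω)
    (continuous_schrodingerCocycle h.contDiff_limitPotential.continuous)
    (periodic_schrodingerCocycle h.periodic_limitPotential) (det_schrodingerCocycle _)
  refine ⟨L, ge_of_tendsto hL ?_, hL⟩
  filter_upwards [eventually_ge_atTop 1] with n hn
  exact ge_of_tendsto' (h.tendsto_LEn_approxPotential_add n) (h.le_LEn_approxPotential_add hn)

end IsInitialData

theorem exists_isInitialData {ω c₀ E₀ : ℝ} (hc₀ : 0 < c₀) (hω : IsBadlyApproximable c₀ ω)
    (hE₀ : 1 ≤ E₀) : ∃ s₀ : ℕ, IsInitialData ω (E₀ + 3) c₀ E₀ s₀ := by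
  obtain ⟨s₀, s₀_ge⟩ := exists_nat_ge (max (10 ^ 6) (max (20 / c₀) (E₀ + 3)))
  simp only [max_le_iff] at s₀_ge
  obtain ⟨large, diophantine_le, bound_le⟩ := s₀_ge
  have inv_le_one : 1 / (s₀ : ℝ) ≤ 1 := (div_le_one (by linarith)).mpr (by linarith)
  exact ⟨s₀, {
    large := by exact_mod_cast large
    one_le_coupling := hE₀
    bound_ge := by linarith
    bound_le := bound_le
    diophantine_pos := hc₀
    diophantine := hω
    diophantine_le := diophantine_le }⟩

theorem schrodinger_positive_LE_not_Cinf_open_approx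
    (ω : ℝ) (hω : Irrational ω)
    (M : ℝ) (hM : 1 ≤ M) (hbt : ∀ k : ℕ, cfDen ω (k + 1) ≤ M * cfDen ω k)
    (κ : ℝ) (hκ : 0 < κ) :
    ∃ (v : ℝ → ℝ) (vseq : ℕ → ℝ → ℝ),
      Function.Periodic v 1 ∧ ContDiff ℝ (⊤ : ℕ∞) v ∧
      (∀ n, Function.Periodic (vseq n) 1 ∧ ContDiff ℝ (⊤ : ℕ∞) (vseq n)) ∧
      -- (i) L(S_v) ≥ κ
      (∃ L : ℝ, κ ≤ L ∧
        Tendsto (fun m => LEn ω (SchrodingerCocycle v) m) atTop (nhds L)) ∧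
      -- (ii) L(S_{v_n}) = 0 for every n
      (∀ n, Tendsto (fun m => LEn ω (SchrodingerCocycle (vseq n)) m) atTop (nhds 0)) ∧
      -- (iii) for every l, ‖v_n − v‖_{C^l} → 0
      (∀ l : ℕ, ∀ ε : ℝ, 0 < ε → ∃ N : ℕ, ∀ n ≥ N, ∀ j ≤ l, ∀ x : ℝ,
        |iteratedDeriv j (fun y => vseq n y - v y) x| ≤ ε) := by
  obtain ⟨s₀, h⟩ := exists_isInitialData (E₀ := exp (κ + 1)) (by positivity)
    (isBadlyApproximable_of_cfDen_le hω hM hbt) (one_le_exp (by linarith))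
  obtain ⟨L, L_ge, hL⟩ := h.exists_le_tendsto_LEn_limitPotential
  rw [log_exp, add_sub_cancel_right] at L_ge
  exact ⟨limitPotential ω (exp (κ + 1)) s₀, approxPotential ω (exp (κ + 1)) s₀,
    h.periodic_limitPotential, h.contDiff_limitPotential,
    fun n => ⟨h.periodic_approxPotential n, h.contDiff_approxPotential n⟩, ⟨L, L_ge, hL⟩,
    h.tendsto_LEn_approxPotential,
    fun l _ hε => h.exists_abs_iteratedDeriv_approxPotential_sub_le l hε⟩
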